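/- arXiv:2001.05818 — 2 statements merged into one kernel-verified Lean document; each statement's English description precedes it below -/
import Mathlib

section
/- For every integer n ≥ 2 there exists an integer N ≥ 1 with the following property: for every polynomial A over ℂ of degree n that is not special, for every integer d ≥ N, and for all polynomials X, Y with A^{∘d} = X∘Y, there exist polynomials X', Y' and integers k₁, k₂ ≥ 0 such that A^{∘N} = X'∘Y', X = A^{∘k₁}∘X', and Y = Y'∘A^{∘k₂}. In other words, every decomposition of A^{∘d} with d ≥ N is induced by a decomposition of A^{∘N}, and N depends on n only. -/
/-! In a decomposition `A^{∘d} = X ∘ Y` with `d > N`, it suffices to show that `n = deg A` divides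
`deg X` or `deg Y` (`dvd_or_dvd`): over `ℂ`, right factors of a polynomial are ordered by
divisibility of degrees (`right_factor'`), so one copy of `A` then splits off `X` on the left or
off `Y` on the right, and induction on `d` finishes the proof. Here `N = 2n + 6n^{2n}`.

Suppose `n` divides neither degree; in particular `n ≥ 3`. Write `A^{∘2n} ∘ A^{∘(d-2n)} = X ∘ Y`
and split off the greatest common left factor of `A^{∘2n}` and `X` (`left_gcd`). This leaves
`α ∘ P = β ∘ Y` with `deg α`, `deg β` coprime, and a comparison of prime factorisations gives
`deg α > n²` and `deg β > 6 deg α` (`degree_bounds`). By the theorem of Lüroth (`luroth`) a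
common right factor of `P` and `Y` can be removed, so that `deg P = deg β` and `deg Y = deg α` (`right_gcd`).
Then `(P, Y)` maps the affine line onto the curve `α(x) = β(y)` (`exists_point`), and therefore `β`
is highly ramified over every critical value of `α`. The Riemann–Hurwitz inequality for `β` leaves
only two possibilities (`ritt`): `α` has one critical value and is affinely equivalent to
`z^m` (`one_crit`), or it has two critical values and simple critical points and is affinely
equivalent to `T_m`, by uniqueness of the polynomial solution of the Chebyshev differential
equation (`two_crit`).

So an iterate of `A` has, up to affine changes of variable, `z^m` or `T_m` with `m > n²` as a right
factor. Then this iterate agrees to high order at infinity with a multiple of `z^{n^k}` or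
`T_{n^k}`, and the right factor theorem in its approximate form (`right_factor`) identifies `A`
itself with `z^n` or `±T_n` up to linear conjugacy (`family_rigid`, `special_of_factor`).
-/

open Polynomial

/-- The `k`-th compositional iterate `A^{∘k}` of a polynomial, with `A^{∘0} = X`. -/
noncomputable def polyIter (A : Polynomial ℂ) : ℕ → Polynomial ℂ
  | 0 => Polynomial.X
  | k + 1 => A.comp (polyIter A k)

/-- `A` is linearly conjugate to `P`: `A∘μ = μ∘P` for some degree-one polynomial `μ`. -/
def LinConj (A P : Polynomial ℂ) : Prop :=
  ∃ μ : Polynomial ℂ, μ.degree = 1 ∧ A.comp μ = μ.comp P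

/-- A polynomial of degree `n` is special if it is linearly conjugate to `z^n`, `T_n`, or `-T_n`. -/
def SpecialPoly (A : Polynomial ℂ) : Prop :=
  LinConj A (Polynomial.X ^ A.natDegree) ∨
    LinConj A (Polynomial.Chebyshev.T ℂ (A.natDegree : ℤ)) ∨
      LinConj A (-(Polynomial.Chebyshev.T ℂ (A.natDegree : ℤ)))

namespace PolyDecomp

/-! ### Approximate roots and common left factors -/

theorem comp_cancel {P Q W : ℂ[X]} (hW : 0 < W.natDegree) (h : P.comp W = Q.comp W) : P = Q := by
  have h0 : (P - Q).comp W = 0 := by rw [sub_comp, h, sub_self]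
  rcases comp_eq_zero_iff.1 h0 with h1 | ⟨_, h1⟩
  · exact sub_eq_zero.1 h1
  · rw [h1, natDegree_C] at hW
    exact absurd hW (lt_irrefl _)

theorem geom_natDegree_le {P Q : ℂ[X]} {l : ℕ} (hP : P.natDegree = l) (hQ : Q.natDegree = l)
    (u : ℕ) : (∑ i ∈ Finset.range u, P ^ i * Q ^ (u - 1 - i)).natDegree ≤ l * (u - 1) := by
  refine natDegree_sum_le_of_forall_le _ _ fun i hi => ?_
  have hi' : i ≤ u - 1 := by have := Finset.mem_range.1 hi; omega
  refine natDegree_mul_le.trans ?_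
  rw [natDegree_pow, natDegree_pow, hP, hQ, ← add_mul, Nat.add_sub_cancel' hi', mul_comm]

theorem geom_coeff {P Q : ℂ[X]} {l : ℕ} (hP : P.natDegree = l) (hQ : Q.natDegree = l)
    (hPQ : P.leadingCoeff = Q.leadingCoeff) (u : ℕ) :
    (∑ i ∈ Finset.range u, P ^ i * Q ^ (u - 1 - i)).coeff (l * (u - 1)) =
      u * Q.leadingCoeff ^ (u - 1) := by
  rw [finsetSum_coeff]
  have : ∀ i ∈ Finset.range u, (P ^ i * Q ^ (u - 1 - i)).coeff (l * (u - 1)) =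
      Q.leadingCoeff ^ (u - 1) := by
    intro i hi
    have hi' : i ≤ u - 1 := by have := Finset.mem_range.1 hi; omega
    have hd : l * (u - 1) = (P ^ i).natDegree + (Q ^ (u - 1 - i)).natDegree := by
      rw [natDegree_pow, natDegree_pow, hP, hQ, ← add_mul, Nat.add_sub_cancel' hi', mul_comm]
    rw [hd, coeff_mul_degree_add_degree, leadingCoeff_pow, leadingCoeff_pow, hPQ, ← pow_add,
      Nat.add_sub_cancel' hi']
  rw [Finset.sum_congr rfl this]
  simp

/-- The approximate `u`-th root of `A`: a monic `α` of degree `e` such that `A` and a constant times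
`α ^ u` agree in the top `e + 1` coefficients. The coefficients of `α` are determined successively
from the top. -/
theorem approx_root {A : ℂ[X]} {e u : ℕ} (he : 0 < e) (hu : 0 < u)
    (hA : A.natDegree = e * u) :
    ∃ α : ℂ[X], α.Monic ∧ α.natDegree = e ∧
      (A - C A.leadingCoeff * α ^ u).degree < ((e * u - e : ℕ) : WithBot ℕ) := by
  have hA0 : A ≠ 0 := by
    rintro rfl
    have := Nat.mul_pos he hu
    simp at hA; omega
  have hc : A.leadingCoeff ≠ 0 := leadingCoeff_ne_zero.2 hA0
  have key : ∀ j ≤ e, ∃ α : ℂ[X], α.Monic ∧ α.natDegree = e ∧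
      (A - C A.leadingCoeff * α ^ u).degree < ((e * u - j : ℕ) : WithBot ℕ) := by
    intro j
    induction j with
    | zero =>
      intro _
      refine ⟨X ^ e, monic_X_pow e, natDegree_X_pow e, ?_⟩
      have h1 : (C A.leadingCoeff * (X ^ e) ^ u).degree = A.degree := by
        rw [← pow_mul, degree_C_mul_X_pow _ hc, degree_eq_natDegree hA0, hA]
      have := degree_sub_lt_left h1.symm hA0 (by
        rw [← pow_mul, leadingCoeff_C_mul_X_pow])
      rwa [degree_eq_natDegree hA0, hA] at this
    | succ j ih =>
      intro hj
      obtain ⟨α, hm, hd, hlt⟩ := ih (by omega)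
      set c := A.leadingCoeff with hcdef
      set R := A - C c * α ^ u with hR
      have huC : (u : ℂ) ≠ 0 := Nat.cast_ne_zero.2 hu.ne'
      set b := R.coeff (e * u - (j + 1)) / (c * u) with hb
      set δ : ℂ[X] := C b * X ^ (e - (j + 1)) with hδ
      have heu : e * u = e * (u - 1) + e := by
        obtain ⟨v, rfl⟩ := Nat.exists_eq_succ_of_ne_zero hu.ne'
        simp [Nat.mul_succ]
      have hδd : δ.natDegree ≤ e - (j + 1) := natDegree_C_mul_X_pow_le _ _
      have hδlt : δ.degree < α.degree := by
        refine (degree_C_mul_X_pow_le _ _).trans_lt ?_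
        rw [degree_eq_natDegree hm.ne_zero, hd]
        exact_mod_cast (by omega : e - (j + 1) < e)
      have hm' : (α + δ).Monic := hm.add_of_left hδlt
      have hd' : (α + δ).natDegree = e := by
        rw [natDegree_add_eq_left_of_degree_lt hδlt, hd]
      refine ⟨α + δ, hm', hd', ?_⟩
      set G := ∑ i ∈ Finset.range u, (α + δ) ^ i * α ^ (u - 1 - i) with hG
      have hGd : G.natDegree ≤ e * (u - 1) := geom_natDegree_le hd' hd u
      have hGc : G.coeff (e * (u - 1)) = u := by
        rw [hG, geom_coeff hd' hd (by rw [hm.leadingCoeff, hm'.leadingCoeff]), hm.leadingCoeff]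
        simp
      have hmul : G * δ = (α + δ) ^ u - α ^ u := by
        have := geom_sum₂_mul (α + δ) α u
        rwa [add_sub_cancel_left] at this
      have hEq : A - C c * (α + δ) ^ u = R - C c * (G * δ) := by
        rw [hmul, hR]; ring
      have hidx : e * u - (j + 1) = e * (u - 1) + (e - (j + 1)) := by omega
      rw [hEq, degree_lt_iff_coeff_zero]
      intro k hk
      rw [coeff_sub, coeff_C_mul]
      rcases hk.eq_or_lt with rfl | hk
      · rw [hidx, coeff_mul_add_eq_of_natDegree_le hGd hδd, hGc, hδ, coeff_C_mul_X_pow, if_pos rfl, hb,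
          ← hidx]
        field_simp
        ring
      · have h1 : R.coeff k = 0 := (degree_lt_iff_coeff_zero _ _).1 hlt k (by omega)
        have h2 : (G * δ).coeff k = 0 := by
          apply coeff_eq_zero_of_natDegree_lt
          refine natDegree_mul_le.trans_lt ?_
          omega
        rw [h1, h2]; simp
  exact key e le_rfl

/-- Two polynomials of degree `l` with the same leading coefficient are equal if their `u`-th
powers agree in the top `l + 1` coefficients. -/
theorem eq_of_pow_sub_pow {P Q : ℂ[X]} {l u : ℕ} (hl : 0 < l) (hu : 0 < u)
    (hP : P.natDegree = l) (hQ : Q.natDegree = l) (hPQ : P.leadingCoeff = Q.leadingCoeff)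
    (h : (P ^ u - Q ^ u).degree < ((l * u - l : ℕ) : WithBot ℕ)) : P = Q := by
  by_contra hne
  have hQ0 : Q ≠ 0 := by rintro rfl; simp at hQ; omega
  have hG0 : (∑ i ∈ Finset.range u, P ^ i * Q ^ (u - 1 - i)).coeff (l * (u - 1)) ≠ 0 := by
    rw [geom_coeff hP hQ hPQ]
    exact mul_ne_zero (Nat.cast_ne_zero.2 hu.ne') (pow_ne_zero _ (leadingCoeff_ne_zero.2 hQ0))
  have h1 := le_degree_of_ne_zero hG0
  rw [← geom_sum₂_mul, degree_mul] at h
  have h2 : (0 : WithBot ℕ) ≤ (P - Q).degree := zero_le_degree_iff.2 (sub_ne_zero.2 hne)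
  have h3 := add_le_add h1 h2
  have h4 := h3.trans_lt h
  rw [add_zero, Nat.cast_lt, Nat.mul_sub, mul_one] at h4
  exact lt_irrefl _ h4

theorem degree_comp_lt {P W : ℂ[X]} {a b : ℕ} (hW : 0 < W.natDegree)
    (h : P.degree < (a : WithBot ℕ)) (hb : a * W.natDegree ≤ b) :
    (P.comp W).degree < (b : WithBot ℕ) := by
  by_cases hP : P = 0
  · subst hP
    rw [zero_comp, degree_zero]; exact WithBot.bot_lt_coe b
  · have h1 : P.natDegree < a := (natDegree_lt_iff_degree_lt hP).2 h
    refine degree_le_natDegree.trans_lt ?_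
    rw [natDegree_comp]
    exact_mod_cast (Nat.mul_lt_mul_of_pos_right h1 hW).trans_le hb

/-- If `A ∘ P` and `B ∘ Q` agree to high order at infinity then `P` and `Q` have a common left
multiple of the least possible degree. -/
theorem common_multiple {A B P Q : ℂ[X]} (hP : 0 < P.natDegree) (hQ : 0 < Q.natDegree)
    (hA : 0 < A.natDegree) (hN : A.natDegree * P.natDegree = B.natDegree * Q.natDegree)
    (h : (A.comp P - B.comp Q).degree <
      ((A.natDegree * P.natDegree - Nat.lcm P.natDegree Q.natDegree : ℕ) : WithBot ℕ)) :
    ∃ α β : ℂ[X], α.natDegree * P.natDegree = Nat.lcm P.natDegree Q.natDegree ∧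
      β.natDegree * Q.natDegree = Nat.lcm P.natDegree Q.natDegree ∧ α.comp P = β.comp Q := by
  set p := P.natDegree with hp
  set q := Q.natDegree with hq
  set l := Nat.lcm p q with hl
  have hlpos : 0 < l := Nat.lcm_pos hP hQ
  obtain ⟨e, he⟩ : p ∣ l := Nat.dvd_lcm_left p q
  obtain ⟨f, hf⟩ : q ∣ l := Nat.dvd_lcm_right p q
  obtain ⟨u, hu⟩ : l ∣ A.natDegree * p := Nat.lcm_dvd (Dvd.intro_left _ rfl) (hN ▸ Dvd.intro_left _ rfl)
  have hNpos : 0 < A.natDegree * p := Nat.mul_pos hA hP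
  have hupos : 0 < u := Nat.pos_of_ne_zero (by rintro rfl; simp at hu; omega)
  have hepos : 0 < e := Nat.pos_of_ne_zero (by rintro rfl; simp at he; omega)
  have hfpos : 0 < f := Nat.pos_of_ne_zero (by rintro rfl; simp at hf; omega)
  have hAe : A.natDegree = e * u := by
    apply Nat.eq_of_mul_eq_mul_right hP; rw [hu, he]; ring
  have hBf : B.natDegree = f * u := by
    apply Nat.eq_of_mul_eq_mul_right hQ; rw [← hN, hu, hf]; ring
  obtain ⟨α, hαm, hαd, hα⟩ := approx_root hepos hupos hAe
  obtain ⟨β, hβm, hβd, hβ⟩ := approx_root hfpos hupos hBf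
  have hA0 : A ≠ 0 := by rintro rfl; simp at hA
  have hB0 : B ≠ 0 := by rintro rfl; simp at hN; omega
  have hP0 : P ≠ 0 := by rintro rfl; simp at hp; omega
  have hQ0 : Q ≠ 0 := by rintro rfl; simp at hq; omega
  have ha : A.leadingCoeff ≠ 0 := leadingCoeff_ne_zero.2 hA0
  have hpl : P.leadingCoeff ≠ 0 := leadingCoeff_ne_zero.2 hP0
  have hql : Q.leadingCoeff ≠ 0 := leadingCoeff_ne_zero.2 hQ0
  -- the leading coefficients of both compositions agree
  have hlead : A.leadingCoeff * P.leadingCoeff ^ (e * u) =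
      B.leadingCoeff * Q.leadingCoeff ^ (f * u) := by
    have h0 := (degree_lt_iff_coeff_zero _ _).1 h (A.natDegree * p) (Nat.sub_le _ _)
    rw [coeff_sub, sub_eq_zero] at h0
    have h1 := leadingCoeff_comp (p := A) (q := P) hP.ne'
    have h2 := leadingCoeff_comp (p := B) (q := Q) hQ.ne'
    rw [leadingCoeff, natDegree_comp] at h1 h2
    rw [← hAe, ← hBf, ← h1, ← h2, h0, hN]
  set κ := P.leadingCoeff ^ e / Q.leadingCoeff ^ f with hκ
  have hκ0 : κ ≠ 0 := div_ne_zero (pow_ne_zero _ hpl) (pow_ne_zero _ hql)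
  have hb : B.leadingCoeff = A.leadingCoeff * κ ^ u := by
    rw [hκ, div_pow, ← pow_mul, ← pow_mul]
    field_simp
    exact hlead.symm
  have hNl : (e * u - e) * p ≤ A.natDegree * p - l := by
    rw [Nat.sub_mul, hAe, he, mul_comm p e]
  have hNl' : (f * u - f) * q ≤ A.natDegree * p - l := by
    rw [Nat.sub_mul, hN, hBf, hf, mul_comm q f]
  have e1 := degree_comp_lt hP hα hNl
  have e2 := degree_comp_lt hQ hβ hNl'
  refine ⟨α, C κ * β, by rw [hαd, he, mul_comm], ?_, ?_⟩
  · rw [natDegree_C_mul hκ0, hβd, hf, mul_comm]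
  refine eq_of_pow_sub_pow (l := l) (u := u) hlpos hupos ?_ ?_ ?_ ?_
  · rw [natDegree_comp, hαd, he, mul_comm]
  · rw [natDegree_comp, natDegree_C_mul hκ0, hβd, hf, mul_comm]
  · rw [leadingCoeff_comp hP.ne', leadingCoeff_comp hQ.ne', leadingCoeff_mul, leadingCoeff_C,
      hαm.leadingCoeff, hβm.leadingCoeff, natDegree_C_mul hκ0, hαd, hβd, hκ]
    field_simp
  · have h3 : C A.leadingCoeff * (α.comp P ^ u - (C κ * β).comp Q ^ u) =
        ((A.comp P - B.comp Q) - (A - C A.leadingCoeff * α ^ u).comp P) +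
          (B - C B.leadingCoeff * β ^ u).comp Q := by
      rw [hb]
      simp only [sub_comp, mul_comp, pow_comp, C_comp, C_mul, C_pow, mul_pow]
      ring
    rw [← degree_C_mul ha, h3, ← hu]
    refine (degree_add_le _ _).trans_lt (max_lt ?_ e2)
    exact (degree_sub_le _ _).trans_lt (max_lt h e1)

/-- If `A ∘ P` and `B ∘ Q` agree to sufficiently high order at infinity and `deg P ∣ deg Q`, then
`Q` factors through `P`. -/
theorem right_factor {A B P Q : ℂ[X]} (hP : 0 < P.natDegree) (hQ : 0 < Q.natDegree)
    (hA : 0 < A.natDegree) (hN : A.natDegree * P.natDegree = B.natDegree * Q.natDegree)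
    (hdvd : P.natDegree ∣ Q.natDegree)
    (h : (A.comp P - B.comp Q).degree <
      ((A.natDegree * P.natDegree - Q.natDegree : ℕ) : WithBot ℕ)) :
    ∃ γ : ℂ[X], Q = γ.comp P := by
  have hl : Nat.lcm P.natDegree Q.natDegree = Q.natDegree := Nat.lcm_eq_right hdvd
  obtain ⟨α, β, h1, h2, h3⟩ := common_multiple hP hQ hA hN (by rwa [hl])
  rw [hl] at h1 h2
  have hβ : β.natDegree = 1 := Nat.eq_of_mul_eq_mul_right hQ (by rw [h2, one_mul])
  obtain ⟨a, ha, b, rfl⟩ := natDegree_eq_one.1 hβ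
  refine ⟨C a⁻¹ * (α - C b), ?_⟩
  rw [mul_comp, sub_comp, h3]
  simp only [add_comp, mul_comp, C_comp, X_comp, add_sub_cancel_right]
  rw [← mul_assoc, ← C_mul, inv_mul_cancel₀ ha, C_1, one_mul]

theorem degree_zero_lt {P : ℂ[X]} (h : P = 0) (k : ℕ) : P.degree < (k : WithBot ℕ) := by
  rw [h, degree_zero]; exact WithBot.bot_lt_coe k

/-- The exact form of `right_factor`: right factors of a polynomial whose degrees divide one
another factor through one another. -/
theorem right_factor' {A B P Q : ℂ[X]} (hP : 0 < P.natDegree) (hQ : 0 < Q.natDegree)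
    (hA : 0 < A.natDegree) (hdvd : P.natDegree ∣ Q.natDegree) (h : A.comp P = B.comp Q) :
    ∃ γ : ℂ[X], Q = γ.comp P := by
  refine right_factor hP hQ hA ?_ hdvd (degree_zero_lt (sub_eq_zero.2 h) _)
  rw [← natDegree_comp, h, natDegree_comp]

theorem coprime_of_lcm {a b p q : ℕ} (hl : 0 < Nat.lcm p q) (h1 : a * p = Nat.lcm p q)
    (h2 : b * q = Nat.lcm p q) : Nat.Coprime a b := by
  obtain ⟨a', ha'⟩ := Nat.gcd_dvd_left a b
  obtain ⟨b', hb'⟩ := Nat.gcd_dvd_right a b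
  set g := Nat.gcd a b with hg
  have e1 : g * (a' * p) = Nat.lcm p q := by rw [← h1, ← mul_assoc, ← ha']
  have e2 : g * (b' * q) = Nat.lcm p q := by rw [← h2, ← mul_assoc, ← hb']
  have hgpos : 0 < g := Nat.pos_of_ne_zero (by intro h0; rw [h0] at e1; omega)
  have e3 : a' * p = b' * q := Nat.eq_of_mul_eq_mul_left hgpos (e1.trans e2.symm)
  have e4 : Nat.lcm p q ∣ a' * p := Nat.lcm_dvd (Dvd.intro_left _ rfl) (e3 ▸ Dvd.intro_left _ rfl)
  have hpos : 0 < a' * p := Nat.pos_of_ne_zero (by intro h0; rw [h0] at e1; omega)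
  have e5 := Nat.le_of_dvd hpos e4
  rw [← e1] at e5
  have : g ≤ 1 := Nat.le_of_mul_le_mul_right (by rwa [one_mul]) hpos
  unfold Nat.Coprime
  omega

/-- If `A ∘ P = B ∘ Q`, then `A` and `B` have a common left factor `U` whose complementary factors
`α` and `β` have coprime degrees. -/
theorem left_gcd {A B P Q : ℂ[X]} (hP : 0 < P.natDegree) (hQ : 0 < Q.natDegree)
    (hA : 0 < A.natDegree) (h : A.comp P = B.comp Q) :
    ∃ U α β : ℂ[X], A = U.comp α ∧ B = U.comp β ∧ α.comp P = β.comp Q ∧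
      Nat.Coprime α.natDegree β.natDegree := by
  have hN : A.natDegree * P.natDegree = B.natDegree * Q.natDegree := by
    rw [← natDegree_comp, h, natDegree_comp]
  obtain ⟨α, β, h1, h2, h3⟩ := common_multiple hP hQ hA hN (degree_zero_lt (sub_eq_zero.2 h) _)
  have hlpos : 0 < Nat.lcm P.natDegree Q.natDegree := Nat.lcm_pos hP hQ
  set D := α.comp P with hD
  have hDd : D.natDegree = Nat.lcm P.natDegree Q.natDegree := by rw [hD, natDegree_comp, h1]
  -- every polynomial in both `ℂ[P]` and `ℂ[Q]` lies in `ℂ[D]`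
  have key : ∀ k : ℕ, ∀ S T : ℂ[X], S.comp P = T.comp Q → (S.comp P).natDegree ≤ k →
      ∃ U : ℂ[X], S.comp P = U.comp D := by
    intro k
    induction k using Nat.strong_induction_on with
    | _ k ih =>
      intro S T hST hk
      by_cases h0 : (S.comp P).natDegree = 0
      · obtain ⟨c, hc⟩ := natDegree_eq_zero.1 h0
        exact ⟨C c, by rw [C_comp, hc]⟩
      obtain ⟨i, hi⟩ : D.natDegree ∣ (S.comp P).natDegree := by
        rw [hDd]
        apply Nat.lcm_dvd
        · rw [natDegree_comp]; exact Dvd.intro_left _ rfl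
        · rw [hST, natDegree_comp]; exact Dvd.intro_left _ rfl
      set c := (S.comp P).leadingCoeff / D.leadingCoeff ^ i with hc
      have hD0 : D ≠ 0 := by intro h0; rw [h0, natDegree_zero] at hDd; omega
      have hDl : D.leadingCoeff ≠ 0 := leadingCoeff_ne_zero.2 hD0
      have hSP0 : S.comp P ≠ 0 := by intro h; rw [h] at h0; simp at h0
      have hc0 : c ≠ 0 := div_ne_zero (leadingCoeff_ne_zero.2 hSP0) (pow_ne_zero _ hDl)
      have hdeg : (C c * D ^ i).natDegree = (S.comp P).natDegree := by
        rw [natDegree_C_mul hc0, natDegree_pow, hi, mul_comm]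
      have hdeg' : (S.comp P).degree = (C c * D ^ i).degree := by
        rw [degree_eq_natDegree hSP0, degree_eq_natDegree
          (mul_ne_zero (C_ne_zero.2 hc0) (pow_ne_zero _ hD0)), hdeg]
      have hlt := degree_sub_lt_left hdeg' hSP0 (by
        rw [leadingCoeff_mul, leadingCoeff_pow, leadingCoeff_C, hc]; field_simp)
      have e1 : (S - C c * α ^ i).comp P = S.comp P - C c * D ^ i := by
        simp [sub_comp, hD]
      have e2 : (T - C c * β ^ i).comp Q = S.comp P - C c * D ^ i := by
        rw [hST, h3]; simp [sub_comp]
      have hlt' : ((S - C c * α ^ i).comp P).natDegree < k := by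
        rw [e1]
        refine lt_of_lt_of_le ?_ hk
        by_cases hz : S.comp P - C c * D ^ i = 0
        · rw [hz, natDegree_zero]; omega
        · exact natDegree_lt_natDegree hz hlt
      obtain ⟨U, hU⟩ := ih _ hlt' (S - C c * α ^ i) (T - C c * β ^ i) (e1.trans e2.symm) le_rfl
      refine ⟨U + C c * X ^ i, ?_⟩
      rw [add_comp, ← hU, e1]; simp
  obtain ⟨U, hU⟩ := key _ A B h le_rfl
  refine ⟨U, α, β, ?_, ?_, h3, ?_⟩
  · apply comp_cancel hP; rw [hU, comp_assoc]
  · apply comp_cancel hQ; rw [← h, hU, comp_assoc, ← h3]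
  · exact coprime_of_lcm hlpos h1 h2

/-! ### The theorem of Lüroth for polynomials -/

theorem swap_coeff_coeff (p : ℂ[X][X]) (i j : ℕ) :
    ((Bivariate.swap p).coeff i).coeff j = (p.coeff j).coeff i := by
  induction p using Polynomial.induction_on' with
  | add p q hp hq => simp only [map_add, coeff_add, hp, hq]
  | monomial n a =>
    rw [Bivariate.swap_monomial, coeff_mul_C, coeff_map, coeff_C_mul, coeff_X_pow, coeff_monomial]
    by_cases h : n = j
    · subst h; simp
    · rw [if_neg h, if_neg (Ne.symm h)]; simp

theorem natDegree_coeff_le_swap (p : ℂ[X][X]) (i : ℕ) :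
    (p.coeff i).natDegree ≤ (Bivariate.swap p).natDegree := by
  by_cases h0 : p.coeff i = 0
  · rw [h0]; simp
  apply le_natDegree_of_ne_zero
  intro h
  have h1 := swap_coeff_coeff p (p.coeff i).natDegree i
  rw [h, coeff_zero] at h1
  exact leadingCoeff_ne_zero.2 h0 h1.symm

theorem natDegree_sep (W : ℂ[X]) : (W.map C - C W : ℂ[X][X]).natDegree = W.natDegree := by
  rw [natDegree_sub_C, natDegree_map_eq_of_injective C_injective]

/-- A divisor of `W(T) - W(z)` whose `z`-degree is at least that of `W` is a constant multiple
of `W(T) - W(z)`. -/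
theorem sep_of_dvd {W : ℂ[X]} {p q : ℂ[X][X]} {i : ℕ} (hW : 0 < W.natDegree)
    (hi : W.natDegree ≤ (p.coeff i).natDegree) (h : (W.map C - C W : ℂ[X][X]) = p * q) :
    ∃ k : ℂ, k ≠ 0 ∧ (W.map C - C W : ℂ[X][X]) = p * C (C k) := by
  have hne : (W.map C - C W : ℂ[X][X]) ≠ 0 := by
    intro h0
    have := natDegree_sep W
    rw [h0] at this; simp at this; omega
  have hs : Bivariate.swap (W.map C - C W : ℂ[X][X]) = -(W.map C - C W) := by
    rw [map_sub, Bivariate.swap_C, Bivariate.swap_map_C]; ring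
  have h1 : -(W.map C - C W : ℂ[X][X]) = Bivariate.swap p * Bivariate.swap q := by
    rw [← hs, h, map_mul]
  have hp0 : Bivariate.swap p ≠ 0 := by
    intro h0; rw [h0, zero_mul, neg_eq_zero] at h1; exact hne h1
  have hq0 : Bivariate.swap q ≠ 0 := by
    intro h0; rw [h0, mul_zero, neg_eq_zero] at h1; exact hne h1
  have hd := congrArg natDegree h1
  rw [natDegree_neg, natDegree_sep, natDegree_mul hp0 hq0] at hd
  have hle := natDegree_coeff_le_swap p i
  have hq : (Bivariate.swap q).natDegree = 0 := by omega
  obtain ⟨q0, hq0'⟩ := natDegree_eq_zero.1 hq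
  have hlc := congrArg leadingCoeff h1
  rw [leadingCoeff_neg, leadingCoeff_mul, ← hq0', leadingCoeff_C] at hlc
  have hlW : (W.map C - C W : ℂ[X][X]).leadingCoeff = C W.leadingCoeff := by
    rw [leadingCoeff, natDegree_sep, coeff_sub, coeff_map, coeff_C, if_neg hW.ne', sub_zero]
    rfl
  have hunit : IsUnit q0 := by
    have : IsUnit ((Bivariate.swap p).leadingCoeff * q0) := by
      rw [← hlc, hlW]
      apply IsUnit.neg
      apply isUnit_C.2
      apply IsUnit.mk0
      apply leadingCoeff_ne_zero.2
      rintro rfl; simp at hW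
    exact isUnit_of_mul_isUnit_right this
  obtain ⟨k, hk, rfl⟩ := Polynomial.isUnit_iff.1 hunit
  refine ⟨k, hk.ne_zero, ?_⟩
  rw [h]
  congr 1
  have := congrArg Bivariate.swap hq0'
  rw [Bivariate.swap_swap_apply, Bivariate.swap_C_C] at this
  exact this.symm

/-- The theorem of Lüroth for polynomials: either `P` and `Q` generate the field `ℂ(z)`, so that the
variable is a quotient `r / s` of elements of `ℂ[P, Q]`, or `P` and `Q` have a common right factor
of degree at least two. In the second case a nonconstant coefficient of the minimal polynomial
of `z` over `ℂ(P, Q)`, shifted to vanish at `0`, is such a factor. -/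
theorem luroth {P Q : ℂ[X]} (hP : 0 < P.natDegree) :
    (∃ r ∈ Algebra.adjoin ℂ {P, Q}, ∃ s ∈ Algebra.adjoin ℂ {P, Q}, s ≠ 0 ∧ X * s = r) ∨
    ∃ W P' Q' : ℂ[X], 2 ≤ W.natDegree ∧ P = P'.comp W ∧ Q = Q'.comp W := by
  let F := FractionRing ℂ[X]
  let ι : ℂ[X] →ₐ[ℂ] F := IsScalarTower.toAlgHom ℂ ℂ[X] F
  have hι : Function.Injective ι := IsFractionRing.injective ℂ[X] F
  let K : IntermediateField ℂ F := IntermediateField.adjoin ℂ {ι P, ι Q}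
  have hPK : ι P ∈ K := IntermediateField.subset_adjoin _ _ (by simp)
  have hQK : ι Q ∈ K := IntermediateField.subset_adjoin _ _ (by simp)
  by_cases hz : ι X ∈ K
  · left
    obtain ⟨r, hr, s, hs, hrs⟩ := IntermediateField.mem_adjoin_iff_div.1 hz
    have himg : ({ι P, ι Q} : Set F) = ι '' {P, Q} := by rw [Set.image_pair]
    rw [himg, ← AlgHom.map_adjoin] at hr hs
    obtain ⟨r', hr', rfl⟩ := hr
    obtain ⟨s', hs', rfl⟩ := hs
    have hs0 : s' ≠ 0 := by
      rintro rfl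
      have h1 : ι X = 0 := by rw [hrs]; simp
      rw [← map_zero ι] at h1
      exact X_ne_zero (hι h1)
    refine ⟨r', hr', s', hs', hs0, hι ?_⟩
    have : ι s' ≠ 0 := by rw [← map_zero ι]; exact hι.ne hs0
    rw [map_mul, hrs]
    exact div_mul_cancel₀ _ this
  · right
    -- If `h ∈ K`, then `z` is a root of `h(T) - h(z) ∈ K[T]`, so its minimal polynomial divides it.
    have hmap : ∀ h : ℂ[X], ∀ hh : ι h ∈ K,
        (h.map (algebraMap ℂ K) - C (⟨ι h, hh⟩ : K)).map (algebraMap K F) =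
          (h.map C - C h : ℂ[X][X]).map (algebraMap ℂ[X] F) := by
      intro h hh
      rw [Polynomial.map_sub, Polynomial.map_sub, map_C, map_C, Polynomial.map_map,
        Polynomial.map_map]
      rfl
    have hroot : ∀ h : ℂ[X], ∀ hh : ι h ∈ K,
        aeval (ι X) (h.map (algebraMap ℂ K) - C (⟨ι h, hh⟩ : K)) = 0 := by
      intro h hh
      rw [map_sub, aeval_map_algebraMap, aeval_C, aeval_algHom_apply, aeval_X_left_apply]
      exact sub_self _
    have hint : IsIntegral K (ι X) := by
      apply IsAlgebraic.isIntegral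
      refine ⟨_, ?_, hroot P hPK⟩
      intro h0
      have h1 : (P.map (algebraMap ℂ K) - C (⟨ι P, hPK⟩ : K)).natDegree = P.natDegree := by
        rw [natDegree_sub_C, natDegree_map]
      rw [h0, natDegree_zero] at h1
      omega
    set p := minpoly K (ι X) with hp
    have hpm : p.Monic := minpoly.monic hint
    have hdvd : ∀ h : ℂ[X], ι h ∈ K →
        p.map (algebraMap K F) ∣ (h.map C - C h : ℂ[X][X]).map (algebraMap ℂ[X] F) := by
      intro h hh
      rw [← hmap h hh]
      exact Polynomial.map_dvd _ (minpoly.dvd K _ (hroot h hh))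
    -- the minimal polynomial has coefficients in `ℂ[z]`
    obtain ⟨p', hp'⟩ : ∃ p' : ℂ[X][X], p'.map (algebraMap ℂ[X] F) = p.map (algebraMap K F) := by
      have hmon : (C (C P.leadingCoeff⁻¹) * (P.map C - C P) : ℂ[X][X]).Monic := by
        have hl : P.leadingCoeff ≠ 0 := leadingCoeff_ne_zero.2 (by rintro rfl; simp at hP)
        have hlW : (P.map C - C P : ℂ[X][X]).leadingCoeff = C P.leadingCoeff := by
          rw [leadingCoeff, natDegree_sep, coeff_sub, coeff_map, coeff_C, if_neg hP.ne', sub_zero]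
          rfl
        rw [Monic, leadingCoeff_mul, leadingCoeff_C, hlW, ← C_mul, inv_mul_cancel₀ hl, C_1]
      obtain ⟨g, hg⟩ := IsIntegrallyClosed.eq_map_mul_C_of_dvd F hmon
        (g := p.map (algebraMap K F)) (by
          rw [Polynomial.map_mul]; exact (hdvd P hPK).mul_left _)
      refine ⟨g, ?_⟩
      rw [(hpm.map _).leadingCoeff, C_1, mul_one] at hg
      exact hg
    have hFinj : Function.Injective (algebraMap ℂ[X] F) := hι
    have hp'm : p'.Monic := by
      apply monic_of_injective hFinj
      rw [hp']; exact hpm.map _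
    have hdvd' : ∀ h : ℂ[X], ι h ∈ K → p' ∣ (h.map C - C h : ℂ[X][X]) := by
      intro h hh
      rw [← Polynomial.map_dvd_map _ hFinj hp'm, hp']
      exact hdvd h hh
    have hp'd : p'.natDegree = p.natDegree := by
      rw [← natDegree_map_eq_of_injective hFinj, hp', natDegree_map]
    have hdeg : 2 ≤ p'.natDegree := by
      have h1 : p.natDegree ≠ 1 := by
        intro h1
        apply hz
        obtain ⟨y, hy⟩ := minpoly.natDegree_eq_one_iff.1 h1
        rw [← hy]; exact y.2
      have h2 : 0 < p.natDegree := minpoly.natDegree_pos hint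
      omega
    -- some coefficient is nonconstant
    obtain ⟨i, hi⟩ : ∃ i, 0 < (p'.coeff i).natDegree := by
      by_contra hcon
      push Not at hcon
      have h1 : p' = (p'.map (evalRingHom 0)).map C := by
        ext1 i
        obtain ⟨c, hc⟩ := natDegree_eq_zero.1 (Nat.le_zero.1 (hcon i))
        rw [coeff_map, coeff_map, ← hc]; simp
      have h2 : aeval (ι X) p = 0 := minpoly.aeval _ _
      have h3 : eval (ι X) (p'.map (algebraMap ℂ[X] F)) = 0 := by
        rw [hp', eval_map_algebraMap]; exact h2
      rw [h1, Polynomial.map_map] at h3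
      have h4 : ((algebraMap ℂ[X] F).comp C) = algebraMap ℂ F := rfl
      rw [h4, eval_map_algebraMap, aeval_algHom_apply, aeval_X_left_apply, ← map_zero ι] at h3
      rw [hι h3] at h1
      rw [h1] at hdeg; simp at hdeg
    set W := p'.coeff i with hWdef
    have hWK : ι W ∈ K := by
      have : ι W = algebraMap K F (p.coeff i) := by
        rw [← coeff_map, ← hp', coeff_map]; rfl
      rw [this]; exact (p.coeff i).2
    obtain ⟨q, hq⟩ := hdvd' W hWK
    obtain ⟨k, hk, hWk⟩ := sep_of_dvd hi le_rfl hq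
    have hWd : W.natDegree = p'.natDegree := by
      have := congrArg natDegree hWk
      rw [natDegree_sep, natDegree_mul_C (C_ne_zero.2 hk)] at this
      exact this
    have hWp : ∀ h : ℂ[X], ι h ∈ K → (W - C (W.eval 0)) ∣ (h - C (h.eval 0)) := by
      intro h hh
      have h1 : (W.map C - C W : ℂ[X][X]) ∣ (h.map C - C h : ℂ[X][X]) := by
        rw [hWk]
        refine dvd_trans ?_ (hdvd' h hh)
        refine ⟨C (C k⁻¹), ?_⟩
        rw [mul_assoc, ← C_mul, ← C_mul, mul_inv_cancel₀ hk]; simp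
      have h2 := Polynomial.map_dvd (evalRingHom (0 : ℂ)) h1
      have h3 : ((evalRingHom (0:ℂ)).comp C) = RingHom.id ℂ := by ext; simp
      simpa [Polynomial.map_sub, Polynomial.map_map, h3] using h2
    set V := W - C (W.eval 0) with hV
    have hVd : V.natDegree = W.natDegree := by rw [hV, natDegree_sub_C]
    have hVK : ι V ∈ K := by
      rw [hV, map_sub]
      exact K.sub_mem hWK (K.algebraMap_mem (W.eval 0))
    have hV0 : V ≠ 0 := by intro h; rw [h] at hVd; simp at hVd; omega
    have main : ∀ m : ℕ, ∀ h : ℂ[X], ι h ∈ K → h.natDegree ≤ m → ∃ h' : ℂ[X], h = h'.comp V := by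
      intro m
      induction m using Nat.strong_induction_on with
      | _ m ih =>
        intro h hh hm
        obtain ⟨g, hg⟩ := hWp h hh
        by_cases hg0 : g = 0
        · refine ⟨C (h.eval 0), ?_⟩
          rw [hg0, mul_zero, sub_eq_zero] at hg
          rw [C_comp]; exact hg
        have hgd : h.natDegree = V.natDegree + g.natDegree := by
          rw [← natDegree_mul hV0 hg0, ← hg, natDegree_sub_C]
        have hgK : ι g ∈ K := by
          have hVn : ι V ≠ 0 := by rw [← map_zero ι]; exact hι.ne hV0
          have : ι g = (ι h - ι (C (h.eval 0))) / ι V := by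
            rw [← map_sub, hg, map_mul, mul_div_cancel_left₀ _ hVn]
          rw [this]
          exact K.div_mem (K.sub_mem hh (K.algebraMap_mem (h.eval 0))) hVK
        obtain ⟨g', hg'⟩ := ih g.natDegree (by omega) g hgK le_rfl
        refine ⟨X * g' + C (h.eval 0), ?_⟩
        rw [add_comp, mul_comp, X_comp, C_comp, ← hg', ← hg]; ring
    obtain ⟨P', hP'⟩ := main _ P hPK le_rfl
    obtain ⟨Q', hQ'⟩ := main _ Q hQK le_rfl
    exact ⟨V, P', Q', by omega, hP', hQ'⟩

/-! ### Common right factors and the curve `α(x) = β(y)` -/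

/-- The substitution `x ↦ P`, `y ↦ Y` on polynomials in `x` over `ℂ[y]`. -/
noncomputable def subst (P Y : ℂ[X]) : ℂ[X][X] →+* ℂ[X] := eval₂RingHom (compRingHom Y) P

theorem subst_apply (P Y : ℂ[X]) (p : ℂ[X][X]) :
    subst P Y p = ∑ i ∈ Finset.range (p.natDegree + 1), (p.coeff i).comp Y * P ^ i := by
  simp only [subst, coe_eval₂RingHom, eval₂_eq_sum_range, coe_compRingHom_apply]

theorem subst_C (P Y p : ℂ[X]) : subst P Y (C p) = p.comp Y := by
  simp [subst]

theorem subst_map_C (P Y p : ℂ[X]) : subst P Y (p.map C) = p.comp P := by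
  simp only [subst, coe_eval₂RingHom, eval₂_map, comp]
  congr 1
  ext1 x; simp

/-- The terms of `∑ c_i(Y) P^i` with `i < m` have pairwise distinct degrees, because these degrees
are incongruent modulo `m`. -/
theorem subst_small {P Y : ℂ[X]} {m r g : ℕ} (hg : 0 < g) (hm : 0 < m) (hcop : Nat.Coprime m r)
    (hP : P.natDegree = r * g) (hY : Y.natDegree = m * g) (hP0 : P ≠ 0) (p : ℂ[X][X])
    (hp : p.natDegree < m) (h0 : p ≠ 0) :
    subst P Y p ≠ 0 ∧ g ∣ (subst P Y p).natDegree := by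
  have hY0 : 0 < Y.natDegree := by rw [hY]; positivity
  have hdeg : ∀ c : ℂ[X], ∀ i, c ≠ 0 → (c.comp Y * P ^ i ≠ 0 ∧
      (c.comp Y * P ^ i).natDegree = g * (m * c.natDegree + r * i)) := by
    intro c i hc
    have h1 : c.comp Y ≠ 0 := by
      intro h
      apply hc
      apply comp_cancel hY0
      rw [h, zero_comp]
    have h2 : P ^ i ≠ 0 := pow_ne_zero _ hP0
    refine ⟨mul_ne_zero h1 h2, ?_⟩
    rw [natDegree_mul h1 h2, natDegree_comp, natDegree_pow, hY, hP]; ring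
  have hsum := degree_sum_eq_of_disjoint (fun i => (p.coeff i).comp Y * P ^ i)
    (Finset.range (p.natDegree + 1)) (by
      rintro i ⟨hi, hi0⟩ j ⟨hj, hj0⟩ hij hd
      rw [Finset.mem_range] at hi hj
      have hci : p.coeff i ≠ 0 := by
        intro h; simp [h] at hi0
      have hcj : p.coeff j ≠ 0 := by
        intro h; simp [h] at hj0
      simp only [Function.comp] at hd
      have hd' := natDegree_eq_of_degree_eq hd
      rw [(hdeg _ i hci).2, (hdeg _ j hcj).2] at hd'
      have h3 := Nat.eq_of_mul_eq_mul_left hg hd'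
      have h4 : r * i ≡ r * j [MOD m] := by
        have : m * (p.coeff i).natDegree + r * i ≡ m * (p.coeff j).natDegree + r * j [MOD m] := by
          rw [h3]
        simpa [Nat.ModEq, Nat.add_mod] using this
      have h5 := Nat.ModEq.cancel_left_of_coprime hcop h4
      rw [Nat.ModEq, Nat.mod_eq_of_lt (by omega), Nat.mod_eq_of_lt (by omega)] at h5
      exact hij h5)
  rw [← subst_apply] at hsum
  obtain ⟨i, hi, hs⟩ := Finset.exists_mem_eq_sup (Finset.range (p.natDegree + 1))
    ⟨0, by simp⟩ (fun i => ((p.coeff i).comp Y * P ^ i).degree)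
  have hle := Finset.le_sup (f := fun i => ((p.coeff i).comp Y * P ^ i).degree)
    (Finset.self_mem_range_succ p.natDegree)
  have hlead := hdeg (p.coeff p.natDegree) p.natDegree (leadingCoeff_ne_zero.2 h0)
  have hne : subst P Y p ≠ 0 := by
    intro h
    rw [h, degree_zero] at hsum
    rw [← hsum] at hle
    simp only [le_bot_iff, degree_eq_bot] at hle
    exact hlead.1 hle
  refine ⟨hne, ?_⟩
  have hci : p.coeff i ≠ 0 := by
    intro h
    rw [hs, h, zero_comp, zero_mul, degree_zero] at hsum
    exact hne (degree_eq_bot.1 hsum)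
  rw [natDegree_eq_of_degree_eq (hsum.trans hs), (hdeg _ i hci).2]
  exact dvd_mul_right _ _

/-- Division by `α(x) - β(y)`, which is monic in `x` up to a constant. -/
theorem div_sep {α : ℂ[X]} (β : ℂ[X]) (hα : 0 < α.natDegree) (p : ℂ[X][X]) :
    ∃ q s : ℂ[X][X], p = (α.map C - C β) * q + s ∧ (s.natDegree < α.natDegree) := by
  have hlc : α.leadingCoeff ≠ 0 := leadingCoeff_ne_zero.2 (by rintro rfl; simp at hα)
  set D : ℂ[X][X] := α.map C - C β with hD
  have hDn : D.natDegree = α.natDegree := by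
    rw [hD, natDegree_sub_C, natDegree_map_eq_of_injective C_injective]
  have hDl : D.leadingCoeff = C α.leadingCoeff := by
    rw [leadingCoeff, hDn, hD, coeff_sub, coeff_map, coeff_C, if_neg hα.ne', sub_zero]
    rfl
  have hmon : (C (C α.leadingCoeff⁻¹) * D).Monic := by
    apply monic_C_mul_of_mul_leadingCoeff_eq_one
    rw [hDl, ← C_mul, inv_mul_cancel₀ hlc, C_1]
  have hn : (C (C α.leadingCoeff⁻¹) * D).natDegree = α.natDegree := by
    rw [natDegree_C_mul (by simpa using hlc), hDn]
  refine ⟨C (C α.leadingCoeff⁻¹) * (p /ₘ (C (C α.leadingCoeff⁻¹) * D)),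
    p %ₘ (C (C α.leadingCoeff⁻¹) * D), ?_, ?_⟩
  · conv_lhs => rw [← modByMonic_add_div p (C (C α.leadingCoeff⁻¹) * D)]
    ring
  · rw [← hn]
    apply natDegree_modByMonic_lt _ hmon
    intro h
    rw [h, natDegree_one] at hn
    omega

theorem subst_sep {α β P Y : ℂ[X]} (h : α.comp P = β.comp Y) :
    subst P Y (α.map C - C β) = 0 := by
  rw [map_sub, subst_map_C, subst_C, h, sub_self]

/-- If `deg α` and `deg β` are coprime and `g = deg P / deg β = deg Y / deg α`, then
`α(x) - β(y)` generates the ideal of relations between `P` and `Y`, and `g` divides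
the degree of every element of `ℂ[P, Y]`. -/
theorem subst_dvd {α β P Y : ℂ[X]} {g : ℕ} (hg : 0 < g) (hα : 0 < α.natDegree)
    (hβ : 0 < β.natDegree)
    (hcop : Nat.Coprime α.natDegree β.natDegree) (h : α.comp P = β.comp Y)
    (hP : P.natDegree = β.natDegree * g) (hY : Y.natDegree = α.natDegree * g) (p : ℂ[X][X]) :
    (subst P Y p = 0 → (α.map C - C β) ∣ p) ∧
      g ∣ (subst P Y p).natDegree := by
  have hP0 : P ≠ 0 := by
    rintro rfl
    rw [natDegree_zero] at hP
    have := Nat.mul_pos hβ hg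
    omega
  obtain ⟨q, s, hp, hs⟩ := div_sep β hα p
  have e : subst P Y p = subst P Y s := by
    rw [hp, map_add, map_mul, subst_sep h, zero_mul, zero_add]
  by_cases hs0 : s = 0
  · rw [hs0, map_zero] at e
    rw [e]
    refine ⟨fun _ => ⟨q, by rw [hp, hs0, add_zero]⟩, by simp⟩
  · have := subst_small hg hα hcop hP hY hP0 s hs hs0
    rw [e]
    exact ⟨fun h => absurd h this.1, this.2⟩

theorem adjoin_le_subst {P Y r : ℂ[X]} (hr : r ∈ Algebra.adjoin ℂ {P, Y}) :
    ∃ p, subst P Y p = r := by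
  induction hr using Algebra.adjoin_induction with
  | mem x hx =>
    rcases hx with rfl | rfl
    · exact ⟨X, by simp [subst]⟩
    · exact ⟨C X, by simp [subst]⟩
  | algebraMap c => exact ⟨C (C c), by simp [subst]⟩
  | add x y _ _ hx hy =>
    obtain ⟨p, rfl⟩ := hx
    obtain ⟨q, rfl⟩ := hy
    exact ⟨p + q, map_add _ _ _⟩
  | mul x y _ _ hx hy =>
    obtain ⟨p, rfl⟩ := hx
    obtain ⟨q, rfl⟩ := hy
    exact ⟨p * q, map_mul _ _ _⟩

/-- A common right factor of `P` and `Y` can be split off a solution of `α ∘ P = β ∘ Y` so that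
the remaining degrees are minimal (second theorem of Ritt, degree part). -/
theorem right_gcd {α β : ℂ[X]} (hα : 0 < α.natDegree) (hβ : 0 < β.natDegree)
    (hcop : Nat.Coprime α.natDegree β.natDegree) : ∀ (N : ℕ) (P Y : ℂ[X]), P.natDegree = N →
    0 < P.natDegree → α.comp P = β.comp Y →
    ∃ P' Y' : ℂ[X], α.comp P' = β.comp Y' ∧ P'.natDegree = β.natDegree ∧
      Y'.natDegree = α.natDegree := by
  intro N
  induction N using Nat.strong_induction_on with
  | _ N ih =>
  intro P Y hN hP h
  have hd : α.natDegree * P.natDegree = β.natDegree * Y.natDegree := by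
    rw [← natDegree_comp, h, natDegree_comp]
  rcases luroth (P := P) (Q := Y) hP with ⟨r, hr, s, hs, hs0, hrs⟩ | ⟨W, P', Y', hW, rfl, rfl⟩
  · have hdvd : β.natDegree ∣ P.natDegree :=
      hcop.symm.dvd_of_dvd_mul_left ⟨_, hd⟩
    obtain ⟨g, hg⟩ := hdvd
    have hY : Y.natDegree = α.natDegree * g := by
      rw [hg] at hd
      apply Nat.eq_of_mul_eq_mul_left hβ
      rw [← hd]; ring
    have hg0 : 0 < g := by
      rcases Nat.eq_zero_or_pos g with h | h
      · subst h; omega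
      · exact h
    obtain ⟨p, rfl⟩ := adjoin_le_subst hr
    obtain ⟨q, rfl⟩ := adjoin_le_subst hs
    have h1 := (subst_dvd hg0 hα hβ hcop h hg hY p).2
    have h2 := (subst_dvd hg0 hα hβ hcop h hg hY q).2
    rw [← hrs, natDegree_X_mul hs0] at h1
    have h3 : g = 1 := Nat.dvd_one.1 ((Nat.dvd_add_right h2).1 h1)
    subst h3
    exact ⟨P, Y, h, by omega, by omega⟩
  · have hW0 : 0 < W.natDegree := by omega
    rw [← comp_assoc, ← comp_assoc] at h
    have h' := comp_cancel hW0 h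
    rw [natDegree_comp] at hN hP
    have hP'0 : 0 < P'.natDegree := Nat.pos_of_mul_pos_right hP
    exact ih P'.natDegree (by rw [← hN]; nlinarith) P' Y' rfl hP'0 h'

/-- The parametrisation `(P, Y)` of the curve `α(x) = β(y)` is surjective. -/
theorem exists_point {α β P Y : ℂ[X]} (hα : 0 < α.natDegree)
    (hβ : 0 < β.natDegree) (hcop : Nat.Coprime α.natDegree β.natDegree)
    (h : α.comp P = β.comp Y) (hP : P.natDegree = β.natDegree) (hY : Y.natDegree = α.natDegree)
    {x y : ℂ} (hxy : α.eval x = β.eval y) : ∃ z, P.eval z = x ∧ Y.eval z = y := by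
  have hker := fun p => (subst_dvd one_pos hα hβ hcop h (by simpa using hP)
    (by simpa using hY) p).1
  let _ := (subst P Y).toAlgebra
  have halg : algebraMap ℂ[X][X] ℂ[X] = subst P Y := rfl
  -- `X` is a root of the polynomial `Y(T) - Y` over the subring, normalised to be monic.
  have hX : IsIntegral ℂ[X][X] (X : ℂ[X]) := by
    have hlc : Y.leadingCoeff ≠ 0 := leadingCoeff_ne_zero.2 (by rintro rfl; simp at hY; omega)
    refine ⟨C (C (C Y.leadingCoeff⁻¹)) * (Y.map (C.comp C) - C (C X)), ?_, ?_⟩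
    · apply monic_C_mul_of_mul_leadingCoeff_eq_one
      have hinj : Function.Injective (C.comp C : ℂ →+* ℂ[X][X]) :=
        C_injective.comp C_injective
      have e : (Y.map (C.comp C : ℂ →+* ℂ[X][X]) - C (C X)).leadingCoeff
          = C (C Y.leadingCoeff) := by
        rw [leadingCoeff, natDegree_sub_C, natDegree_map_eq_of_injective hinj, coeff_sub,
          coeff_map, coeff_C, if_neg (by omega), sub_zero]
        rfl
      rw [e, ← C_mul, ← C_mul, inv_mul_cancel₀ hlc, C_1, C_1]
    · rw [halg, eval₂_mul, eval₂_sub, eval₂_map, eval₂_C, eval₂_C, subst_C, subst_C]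
      have : ((subst P Y).comp (C.comp C) : ℂ →+* ℂ[X]) = C := by
        ext1 c; simp [subst]
      rw [this, X_comp, eval₂_C_X, sub_self, mul_zero]
  have hint : Algebra.IsIntegral ℂ[X][X] ℂ[X] := by
    constructor
    intro p
    induction p using Polynomial.induction_on' with
    | add p q hp hq => exact hp.add hq
    | monomial n a =>
      rw [← C_mul_X_pow_eq_monomial]
      refine IsIntegral.mul ?_ (hX.pow n)
      have : (C a : ℂ[X]) = algebraMap ℂ[X][X] ℂ[X] (C (C a)) := by
        rw [halg, subst_C, C_comp]
      rw [this]
      exact isIntegral_algebraMap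
  let ψ : ℂ[X][X] →+* ℂ := eval₂RingHom (evalRingHom y) x
  have hprime : (RingHom.ker ψ).IsPrime := RingHom.ker_isPrime ψ
  obtain ⟨Q, -, hQp, hQ⟩ := Ideal.exists_ideal_over_prime_of_isIntegral (S := ℂ[X])
    (RingHom.ker ψ) ⊥ (by
      intro p hp
      rw [Ideal.mem_comap, Ideal.mem_bot, halg] at hp
      obtain ⟨q, rfl⟩ := hker p hp
      rw [RingHom.mem_ker, map_mul]
      have : ψ (α.map C - C β) = 0 := by
        simp only [ψ, coe_eval₂RingHom, eval₂_sub, eval₂_map, eval₂_C]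
        have : ((evalRingHom y).comp C : ℂ →+* ℂ) = RingHom.id ℂ := by ext1 c; simp
        rw [this, coe_evalRingHom, ← hxy, eval₂_id, sub_self]
      rw [this, zero_mul])
  have h1 : P - C x ∈ Q := by
    have : (X - C (C x) : ℂ[X][X]) ∈ Q.comap (algebraMap ℂ[X][X] ℂ[X]) := by
      rw [hQ, RingHom.mem_ker]; simp [ψ]
    rw [Ideal.mem_comap, halg] at this
    simpa [subst] using this
  have h2 : Y - C y ∈ Q := by
    have : (C (X - C y) : ℂ[X][X]) ∈ Q.comap (algebraMap ℂ[X][X] ℂ[X]) := by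
      rw [hQ, RingHom.mem_ker]; simp [ψ]
    rw [Ideal.mem_comap, halg] at this
    simpa [subst] using this
  by_contra hno
  push Not at hno
  have hc : IsCoprime (P - C x) (Y - C y) := by
    apply isCoprime_of_dvd
    · rintro ⟨h0, -⟩
      have := natDegree_sub_C (p := P) (a := x)
      rw [h0, natDegree_zero] at this; omega
    · intro z hz hz0 hz1 hz2
      obtain ⟨w, hw⟩ := IsAlgClosed.exists_root z (by
        intro h
        exact hz (isUnit_iff_degree_eq_zero.2 h))
      have h3 : (P - C x).IsRoot w := hw.dvd hz1
      have h4 : (Y - C y).IsRoot w := hw.dvd hz2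
      simp only [IsRoot, eval_sub, eval_C, sub_eq_zero] at h3 h4
      exact hno w h3 h4
  obtain ⟨a, b, hab⟩ := hc
  apply hQp.ne_top
  rw [Ideal.eq_top_iff_one, ← hab]
  exact Q.add_mem (Q.mul_mem_left _ h1) (Q.mul_mem_left _ h2)

/-! ### Local degrees and the Riemann–Hurwitz inequality -/

/-- The local degree (ramification index) of `A` at `x`. -/
noncomputable def mult (A : ℂ[X]) (x : ℂ) : ℕ := (A - C (A.eval x)).rootMultiplicity x

theorem sub_C_ne_zero {A : ℂ[X]} (hA : 0 < A.natDegree) (t : ℂ) : A - C t ≠ 0 := by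
  intro h
  have := natDegree_sub_C (p := A) (a := t)
  rw [h, natDegree_zero] at this; omega

theorem mult_comp {A B : ℂ[X]} (hA : 0 < A.natDegree) (hB : 0 < B.natDegree) (z : ℂ) :
    mult (A.comp B) z = mult A (B.eval z) * mult B z := by
  obtain ⟨g, hg, hnd⟩ := exists_eq_pow_rootMultiplicity_mul_and_not_dvd
    (A - C (A.eval (B.eval z))) (sub_C_ne_zero hA _) (B.eval z)
  rw [dvd_iff_isRoot, IsRoot] at hnd
  change _ = (X - C (B.eval z)) ^ mult A (B.eval z) * g at hg
  have h1 : A.comp B - C ((A.comp B).eval z) =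
      (B - C (B.eval z)) ^ mult A (B.eval z) * g.comp B := by
    have := congrArg (fun p => p.comp B) hg
    simpa [eval_comp] using this
  have hAB : 0 < (A.comp B).natDegree := by rw [natDegree_comp]; positivity
  have hne := sub_C_ne_zero hAB ((A.comp B).eval z)
  have h3 : (g.comp B).rootMultiplicity z = 0 := by
    apply rootMultiplicity_eq_zero
    rwa [IsRoot, eval_comp]
  rw [mult, h1, rootMultiplicity_mul (by rwa [← h1]), h3, add_zero]
  rw [← count_roots, roots_pow, Multiset.count_nsmul, count_roots]
  rfl

theorem mult_eq {A : ℂ[X]} (hA : 0 < A.natDegree) (x : ℂ) :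
    mult A x = A.derivative.rootMultiplicity x + 1 := by
  have hr : (A - C (A.eval x)).IsRoot x := by simp
  have h := derivative_rootMultiplicity_of_root hr
  rw [derivative_sub, derivative_C, sub_zero] at h
  have hpos : 0 < (A - C (A.eval x)).rootMultiplicity x :=
    (rootMultiplicity_pos (sub_C_ne_zero hA _)).2 hr
  rw [mult, h]; omega

theorem derivative_ne_zero' {A : ℂ[X]} (hA : 0 < A.natDegree) : A.derivative ≠ 0 := by
  intro h
  have := derivative_eq_zero.1 h
  omega

theorem mult_eq_one {A : ℂ[X]} (hA : 0 < A.natDegree) {x : ℂ} (h : A.derivative.eval x ≠ 0) :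
    mult A x = 1 := by
  rw [mult_eq hA, rootMultiplicity_eq_zero h]

theorem two_le_mult {A : ℂ[X]} (hA : 0 < A.natDegree) {x : ℂ} (h : A.derivative.eval x = 0) :
    2 ≤ mult A x := by
  have := (rootMultiplicity_pos (derivative_ne_zero' hA)).2 h
  rw [mult_eq hA]; omega

/-- The fibre `A⁻¹(t)`. -/
noncomputable def fiber (A : ℂ[X]) (t : ℂ) : Finset ℂ := (A - C t).roots.toFinset

theorem mem_fiber {A : ℂ[X]} (hA : 0 < A.natDegree) {t y : ℂ} :
    y ∈ fiber A t ↔ A.eval y = t := by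
  rw [fiber, Multiset.mem_toFinset, mem_roots (sub_C_ne_zero hA t)]
  simp [sub_eq_zero]

theorem sum_mult {A : ℂ[X]} (hA : 0 < A.natDegree) (t : ℂ) :
    ∑ y ∈ fiber A t, mult A y = A.natDegree := by
  have h1 := Multiset.toFinset_sum_count_eq (A - C t).roots
  rw [← (IsAlgClosed.splits (A - C t)).natDegree_eq_card_roots, natDegree_sub_C] at h1
  rw [← h1]
  apply Finset.sum_congr rfl
  intro y hy
  rw [count_roots, mult, (mem_fiber hA).1 hy]

theorem sum_rootMultiplicity_le (p : ℂ[X]) (F : Finset ℂ) :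
    ∑ y ∈ F, p.rootMultiplicity y ≤ p.natDegree := by
  calc ∑ y ∈ F, p.rootMultiplicity y = ∑ y ∈ F, p.roots.count y := by simp [count_roots]
    _ ≤ p.roots.card := by
      rw [← Multiset.toFinset_sum_count_eq p.roots]
      refine Finset.sum_le_sum_of_ne_zero ?_
      intro y _ hy
      rw [Multiset.mem_toFinset]
      exact Multiset.count_ne_zero.1 hy
    _ ≤ _ := card_roots' p

theorem natDegree_derivative' (A : ℂ[X]) : A.derivative.natDegree = A.natDegree - 1 :=
  natDegree_derivative A

/-- The Riemann–Hurwitz inequality for the fibres of `A` over a finite set. -/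
theorem riemann_hurwitz {A : ℂ[X]} (hA : 0 < A.natDegree) (S : Finset ℂ) :
    S.card * A.natDegree + 1 ≤ ∑ t ∈ S, (fiber A t).card + A.natDegree := by
  have h1 : ∑ t ∈ S, ∑ y ∈ fiber A t, mult A y = S.card * A.natDegree := by
    rw [Finset.sum_congr rfl (fun t _ => sum_mult hA t), Finset.sum_const, smul_eq_mul]
  have h2 : ∑ t ∈ S, ∑ y ∈ fiber A t, mult A y =
      ∑ t ∈ S, ∑ y ∈ fiber A t, A.derivative.rootMultiplicity y + ∑ t ∈ S, (fiber A t).card := by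
    rw [← Finset.sum_add_distrib]
    apply Finset.sum_congr rfl
    intro t _
    rw [Finset.card_eq_sum_ones, ← Finset.sum_add_distrib]
    exact Finset.sum_congr rfl (fun y _ => mult_eq hA y)
  have h3 : ∑ t ∈ S, ∑ y ∈ fiber A t, A.derivative.rootMultiplicity y ≤ A.natDegree - 1 := by
    rw [← Finset.sum_biUnion, ← natDegree_derivative']
    · exact sum_rootMultiplicity_le _ _
    · intro s _ t _ hst
      rw [Function.onFun, Finset.disjoint_left]
      intro y hy hy'
      exact hst (((mem_fiber hA).1 hy).symm.trans ((mem_fiber hA).1 hy'))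
  omega

/-- The critical values of `A`. -/
noncomputable def crit (A : ℂ[X]) : Finset ℂ := A.derivative.roots.toFinset.image (A.eval ·)

theorem card_crit_le (A : ℂ[X]) : (crit A).card ≤ A.natDegree - 1 := by
  refine Finset.card_image_le.trans ?_
  refine (Multiset.toFinset_card_le _).trans ?_
  exact (card_roots' _).trans (natDegree_derivative_le A)

theorem mem_crit {A : ℂ[X]} (hA : 0 < A.natDegree) {t : ℂ} :
    t ∈ crit A ↔ ∃ x, A.derivative.eval x = 0 ∧ A.eval x = t := by
  simp [crit, mem_roots (derivative_ne_zero' hA)]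

/-- Over a value `t` where `α` has local degree at least `e`, all but few points of the fibre of
`β` have local degree at least `e`: the exceptions are critical values of `Y`. -/
theorem card_fiber_le {α β P Y : ℂ[X]} (hα : 0 < α.natDegree)
    (hβ : 0 < β.natDegree) (hcop : Nat.Coprime α.natDegree β.natDegree)
    (h : α.comp P = β.comp Y) (hP : P.natDegree = β.natDegree) (hY : Y.natDegree = α.natDegree)
    {x : ℂ} {e : ℕ} (he : e ≤ mult α x) :
    e * (fiber β (α.eval x)).card ≤ β.natDegree +
      e * (fiber β (α.eval x) ∩ crit Y).card := by
  have hY0 : 0 < Y.natDegree := by omega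
  have hP0 : 0 < P.natDegree := by omega
  have h1 : ∀ y ∈ fiber β (α.eval x) \ crit Y, e ≤ mult β y := by
    intro y hy
    rw [Finset.mem_sdiff, mem_fiber hβ, mem_crit hY0] at hy
    obtain ⟨hy1, hy2⟩ := hy
    push Not at hy2
    obtain ⟨z, hz1, hz2⟩ := exists_point hα hβ hcop h hP hY hy1.symm
    have h2 := mult_comp hα hP0 z
    rw [h, mult_comp hβ hY0, hz1, hz2, mult_eq_one hY0 (fun h => hy2 z h hz2), mul_one] at h2
    rw [h2]
    have h3 : 0 < mult P z := by rw [mult_eq hP0]; omega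
    nlinarith
  have h2 := Finset.card_nsmul_le_sum _ _ _ h1
  have h3 : ∑ y ∈ fiber β (α.eval x) \ crit Y, mult β y ≤ β.natDegree := by
    rw [← sum_mult hβ (α.eval x)]
    exact Finset.sum_le_sum_of_subset Finset.sdiff_subset
  have h4 := Finset.card_sdiff_add_card_inter (fiber β (α.eval x)) (crit Y)
  rw [smul_eq_mul] at h2
  nlinarith

theorem sum_inter_crit {β : ℂ[X]} (hβ : 0 < β.natDegree) (Y : ℂ[X]) (S : Finset ℂ) :
    ∑ t ∈ S, (fiber β t ∩ crit Y).card ≤ Y.natDegree - 1 := by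
  rw [← Finset.card_biUnion]
  · refine (Finset.card_le_card ?_).trans (card_crit_le Y)
    intro y hy
    simp only [Finset.mem_biUnion, Finset.mem_inter] at hy
    obtain ⟨_, _, _, hy⟩ := hy
    exact hy
  · intro s _ t _ hst
    rw [Function.onFun, Finset.disjoint_left]
    intro y hy hy'
    rw [Finset.mem_inter, mem_fiber hβ] at hy hy'
    exact hst (hy.1.symm.trans hy'.1)

/-- `α` has at most two critical values. -/
theorem no_three {α β P Y : ℂ[X]} (hα : 0 < α.natDegree)
    (hβ : 6 * α.natDegree < β.natDegree) (hcop : Nat.Coprime α.natDegree β.natDegree)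
    (h : α.comp P = β.comp Y) (hP : P.natDegree = β.natDegree) (hY : Y.natDegree = α.natDegree)
    {x₁ x₂ x₃ : ℂ} (h1 : 2 ≤ mult α x₁) (h2 : 2 ≤ mult α x₂) (h3 : 2 ≤ mult α x₃)
    (h12 : α.eval x₁ ≠ α.eval x₂) (h13 : α.eval x₁ ≠ α.eval x₃) (h23 : α.eval x₂ ≠ α.eval x₃) :
    False := by
  have hβ0 : 0 < β.natDegree := by omega
  have c1 := card_fiber_le hα hβ0 hcop h hP hY h1
  have c2 := card_fiber_le hα hβ0 hcop h hP hY h2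
  have c3 := card_fiber_le hα hβ0 hcop h hP hY h3
  have r := riemann_hurwitz hβ0 {α.eval x₁, α.eval x₂, α.eval x₃}
  have s := sum_inter_crit hβ0 Y {α.eval x₁, α.eval x₂, α.eval x₃}
  rw [Finset.sum_insert (by simp [h12, h13]), Finset.sum_insert (by simp [h23]),
    Finset.sum_singleton] at r s
  rw [Finset.card_eq_three.2 ⟨_, _, _, h12, h13, h23, rfl⟩] at r
  omega

/-- If `α` has two critical values, then no critical point has local degree three or more. -/
theorem no_three_two {α β P Y : ℂ[X]} (hα : 0 < α.natDegree)
    (hβ : 6 * α.natDegree < β.natDegree) (hcop : Nat.Coprime α.natDegree β.natDegree)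
    (h : α.comp P = β.comp Y) (hP : P.natDegree = β.natDegree) (hY : Y.natDegree = α.natDegree)
    {x₁ x₂ : ℂ} (h1 : 2 ≤ mult α x₁) (h2 : 3 ≤ mult α x₂)
    (h12 : α.eval x₁ ≠ α.eval x₂) : False := by
  have hβ0 : 0 < β.natDegree := by omega
  have c1 := card_fiber_le hα hβ0 hcop h hP hY h1
  have c2 := card_fiber_le hα hβ0 hcop h hP hY h2
  have r := riemann_hurwitz hβ0 {α.eval x₁, α.eval x₂}
  have s := sum_inter_crit hβ0 Y {α.eval x₁, α.eval x₂}
  rw [Finset.sum_pair h12] at r s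
  rw [Finset.card_pair h12] at r
  omega

/-- A polynomial with one critical value is a power up to affine changes of variable. -/
theorem one_crit {α : ℂ[X]} (hα : 2 ≤ α.natDegree) {x₁ : ℂ}
    (h : ∀ x, α.derivative.eval x = 0 → α.eval x = α.eval x₁) :
    ∃ u c : ℂ, c ≠ 0 ∧ α = C (α.eval x₁) + C c * (X - C u) ^ α.natDegree := by
  have hα0 : 0 < α.natDegree := by omega
  set F := α.derivative.roots.toFinset with hF
  have hF1 : ∑ x ∈ F, α.derivative.rootMultiplicity x = α.natDegree - 1 := by
    have h1 := Multiset.toFinset_sum_count_eq α.derivative.roots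
    rw [← (IsAlgClosed.splits α.derivative).natDegree_eq_card_roots, natDegree_derivative'] at h1
    rw [← h1]
    exact Finset.sum_congr rfl (fun y _ => (count_roots _).symm)
  have hF2 : ∑ x ∈ F, (α.derivative.rootMultiplicity x + 1) ≤ α.natDegree := by
    rw [← sum_mult hα0 (α.eval x₁)]
    calc _ = ∑ x ∈ F, mult α x := Finset.sum_congr rfl (fun x _ => (mult_eq hα0 x).symm)
      _ ≤ _ := by
        apply Finset.sum_le_sum_of_subset
        intro x hx
        rw [hF, Multiset.mem_toFinset, mem_roots (derivative_ne_zero' hα0)] at hx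
        exact (mem_fiber hα0).2 (h x hx)
  rw [Finset.sum_add_distrib, hF1, Finset.sum_const, smul_eq_mul, mul_one] at hF2
  have hcard : F.card = 1 := by
    have : F.card ≠ 0 := by
      intro h0
      rw [Finset.card_eq_zero] at h0
      rw [h0, Finset.sum_empty] at hF1
      omega
    omega
  obtain ⟨u, hu⟩ := Finset.card_eq_one.1 hcard
  rw [hu, Finset.sum_singleton] at hF1
  have hur : α.derivative.eval u = 0 := by
    have : u ∈ F := by rw [hu]; simp
    rw [hF, Multiset.mem_toFinset, mem_roots (derivative_ne_zero' hα0)] at this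
    exact this
  have hm : mult α u = α.natDegree := by rw [mult_eq hα0, hF1]; omega
  rw [mult, h u hur] at hm
  obtain ⟨q, hq⟩ := pow_rootMultiplicity_dvd (α - C (α.eval x₁)) u
  rw [hm] at hq
  have hne := sub_C_ne_zero hα0 (α.eval x₁)
  have hq0 : q ≠ 0 := by rintro rfl; rw [mul_zero] at hq; exact hne hq
  have hd := congrArg natDegree hq
  rw [natDegree_sub_C, natDegree_mul (pow_ne_zero _ (X_sub_C_ne_zero u)) hq0, natDegree_pow,
    natDegree_X_sub_C, mul_one] at hd
  obtain ⟨c, rfl⟩ := natDegree_eq_zero.1 (show q.natDegree = 0 by omega)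
  refine ⟨u, c, by simpa using hq0, ?_⟩
  rw [mul_comm, ← hq]; ring

/-! ### The Chebyshev equation and the classification of `α` -/

/-- The action on coefficients of the differential operator `(z² - 1) d²/dz² + z d/dz`. -/
theorem ode_coeff (f : ℂ[X]) (j : ℕ) :
    ((X ^ 2 - 1) * derivative (derivative f) + X * derivative f).coeff j =
      (j : ℂ) ^ 2 * f.coeff j - (j + 2) * (j + 1) * f.coeff (j + 2) := by
  have hθ : ∀ p : ℂ[X], (X * derivative p).coeff j = j * p.coeff j := by
    intro p
    cases j with
    | zero => simp
    | succ j => rw [coeff_X_mul, coeff_derivative]; push_cast; ring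
  have e : (X ^ 2 - 1) * derivative (derivative f) + X * derivative f =
      X * derivative (X * derivative f) - derivative (derivative f) := by
    rw [derivative_mul, derivative_X]; ring
  rw [e, coeff_sub, hθ, hθ, coeff_derivative, coeff_derivative]
  push_cast; ring

theorem ode_T (m : ℕ) :
    (X ^ 2 - 1) * derivative (derivative (Chebyshev.T ℂ m)) + X * derivative (Chebyshev.T ℂ m) =
      C ((m : ℂ) ^ 2) * Chebyshev.T ℂ m := by
  have h := Chebyshev.one_sub_X_sq_mul_derivative_derivative_T_eq_poly_in_T (R := ℂ) (m : ℤ)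
  simp only [Function.iterate_succ, Function.iterate_zero, Function.comp, id] at h
  have e : (((m : ℤ) : ℂ[X])) = C (m : ℂ) := by simp
  rw [e] at h
  rw [C_pow]
  linear_combination -h

theorem natDegree_T' (m : ℕ) : (Chebyshev.T ℂ (m : ℤ)).natDegree = m := by
  rw [Chebyshev.natDegree_T]; simp

/-- Polynomial solutions of the Chebyshev equation with parameter `m` are multiples of `T_m`. -/
theorem ode_unique {m : ℕ} {f : ℂ[X]}
    (h : (X ^ 2 - 1) * derivative (derivative f) + X * derivative f = C ((m : ℂ) ^ 2) * f) :
    ∃ c : ℂ, f = C c * Chebyshev.T ℂ m := by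
  have key : ∀ p : ℂ[X],
      (X ^ 2 - 1) * derivative (derivative p) + X * derivative p = C ((m : ℂ) ^ 2) * p →
      p ≠ 0 → p.natDegree = m := by
    intro p hp hp0
    have h1 := ode_coeff p p.natDegree
    rw [hp, coeff_C_mul, coeff_eq_zero_of_natDegree_lt (n := p.natDegree + 2) (by omega),
      mul_zero, sub_zero] at h1
    have h2 := mul_right_cancel₀ (leadingCoeff_ne_zero.2 hp0) h1
    have h3 : m ^ 2 = p.natDegree ^ 2 := by exact_mod_cast h2
    exact (Nat.pow_left_injective (n := 2) (by norm_num) h3).symm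
  set T := Chebyshev.T ℂ (m : ℤ) with hT
  have hTn : T.natDegree = m := natDegree_T' m
  have hT0 : T.coeff m ≠ 0 := by
    have : T.leadingCoeff ≠ 0 := leadingCoeff_ne_zero.2 (Chebyshev.T_ne_zero ℂ _)
    rwa [leadingCoeff, hTn] at this
  refine ⟨f.coeff m / T.coeff m, ?_⟩
  by_contra hne
  have hne' : f - C (f.coeff m / T.coeff m) * T ≠ 0 := sub_ne_zero.2 hne
  have h1 := key (f - C (f.coeff m / T.coeff m) * T) (by
    simp only [derivative_sub, derivative_C_mul]
    linear_combination h - C (f.coeff m / T.coeff m) * ode_T m) hne'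
  have h2 : (f - C (f.coeff m / T.coeff m) * T).coeff m = 0 := by
    rw [coeff_sub, coeff_C_mul]; field_simp; ring
  have h3 := leadingCoeff_ne_zero.2 hne'
  rw [leadingCoeff, h1] at h3
  exact h3 h2

/-- Every critical point of `α` is a double root of `α - t₁` or of `α - t₂`. -/
theorem sq_derivative_dvd {α : ℂ[X]} (hα : 0 < α.natDegree) {t₁ t₂ : ℂ}
    (hm : ∀ x, mult α x ≤ 2)
    (hc : ∀ x, α.derivative.eval x = 0 → α.eval x = t₁ ∨ α.eval x = t₂) :
    α.derivative ^ 2 ∣ (α - C t₁) * (α - C t₂) := by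
  have hne : (α - C t₁) * (α - C t₂) ≠ 0 :=
    mul_ne_zero (sub_C_ne_zero hα _) (sub_C_ne_zero hα _)
  apply (IsAlgClosed.splits _).dvd_of_roots_le_roots (pow_ne_zero _ (derivative_ne_zero' hα))
  rw [Multiset.le_iff_count]
  intro x
  rw [roots_pow, Multiset.count_nsmul, count_roots, count_roots, rootMultiplicity_mul hne]
  by_cases hx : α.derivative.eval x = 0
  · have h1 := hm x
    have h2 := two_le_mult hα hx
    have h3 := mult_eq hα x
    rcases hc x hx with h | h
    · have : mult α x = (α - C t₁).rootMultiplicity x := by rw [mult, h]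
      omega
    · have : mult α x = (α - C t₂).rootMultiplicity x := by rw [mult, h]
      omega
  · rw [rootMultiplicity_eq_zero hx]; simp

theorem quadratic_factor {q : ℂ[X]} (hq : q.natDegree = 2) :
    ∃ k u v : ℂ, k ≠ 0 ∧ q = C k * ((X - C u) * (X - C v)) := by
  have h1 := (IsAlgClosed.splits q).eq_prod_roots
  have h2 := (IsAlgClosed.splits q).natDegree_eq_card_roots
  rw [hq] at h2
  obtain ⟨u, v, huv⟩ := Multiset.card_eq_two.1 h2.symm
  refine ⟨q.leadingCoeff, u, v, leadingCoeff_ne_zero.2 (by rintro rfl; simp at hq), ?_⟩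
  rw [huv] at h1
  simpa using h1

/-- A polynomial with two critical values and only simple critical points is a Chebyshev
polynomial up to affine changes of variable. -/
theorem two_crit {α : ℂ[X]} (hα : 2 ≤ α.natDegree) {t₁ t₂ : ℂ} (ht : t₁ ≠ t₂)
    (hm : ∀ x, mult α x ≤ 2)
    (hc : ∀ x, α.derivative.eval x = 0 → α.eval x = t₁ ∨ α.eval x = t₂) :
    ∃ a b e f : ℂ, a ≠ 0 ∧ e ≠ 0 ∧
      α.comp (C e * X + C f) = C a * Chebyshev.T ℂ α.natDegree + C b := by
  have hα0 : 0 < α.natDegree := by omega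
  obtain ⟨q, hq⟩ := sq_derivative_dvd hα0 hm hc
  have hne : (α - C t₁) * (α - C t₂) ≠ 0 :=
    mul_ne_zero (sub_C_ne_zero hα0 _) (sub_C_ne_zero hα0 _)
  have hq0 : q ≠ 0 := by rintro rfl; rw [mul_zero] at hq; exact hne hq
  have hd := congrArg natDegree hq
  rw [natDegree_mul (sub_C_ne_zero hα0 _) (sub_C_ne_zero hα0 _), natDegree_sub_C, natDegree_sub_C,
    natDegree_mul (pow_ne_zero _ (derivative_ne_zero' hα0)) hq0, natDegree_pow,
    natDegree_derivative'] at hd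
  obtain ⟨k, u, v, hk, rfl⟩ := quadratic_factor (show q.natDegree = 2 by omega)
  have hc0 : (t₁ - t₂) / 2 ≠ 0 := div_ne_zero (sub_ne_zero.2 ht) two_ne_zero
  obtain ⟨c, hcdef⟩ : ∃ c, c = (t₁ - t₂) / 2 := ⟨_, rfl⟩
  obtain ⟨d, hddef⟩ : ∃ d, d = (t₁ + t₂) / 2 := ⟨_, rfl⟩
  rw [← hcdef] at hc0
  obtain rfl : t₁ = d + c := by rw [hcdef, hddef]; ring
  obtain rfl : t₂ = d - c := by linear_combination 2 * hcdef
  have hCc : (C c⁻¹ * C c : ℂ[X]) = 1 := by rw [← C_mul, inv_mul_cancel₀ hc0, C_1]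
  have hCc' : (C c : ℂ[X]) ≠ 0 := by simpa using hc0
  have huv : u ≠ v := by
    rintro rfl
    obtain ⟨s, hs⟩ := IsAlgClosed.exists_pow_nat_eq k (n := 2) (by norm_num)
    have h1 : (α - C d - C s * α.derivative * (X - C u)) *
        (α - C d + C s * α.derivative * (X - C u)) = C (c ^ 2) := by
      rw [← hs] at hq
      simp only [C_add, C_sub, C_pow] at hq
      rw [C_pow]
      linear_combination hq
    have h2 : IsUnit (C (c ^ 2) : ℂ[X]) := isUnit_C.2 (IsUnit.mk0 _ (pow_ne_zero _ hc0))
    rw [← h1, IsUnit.mul_iff] at h2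
    obtain ⟨a, -, ha⟩ := isUnit_iff.1 h2.1
    obtain ⟨b, -, hb⟩ := isUnit_iff.1 h2.2
    have h3 : α = C (d + (a + b) / 2) := by
      have h4 : (C (1 / 2) * 2 : ℂ[X]) = 1 := by
        rw [show (2 : ℂ[X]) = C 2 from rfl, ← C_mul]; norm_num
      rw [C_add, div_eq_inv_mul, C_mul, C_add, ha, hb, ← one_div]
      linear_combination (C d - α) * h4
    rw [h3, natDegree_C] at hα0
    omega
  obtain ⟨e, hedef⟩ : ∃ e, e = (u - v) / 2 := ⟨_, rfl⟩
  obtain ⟨f, hfdef⟩ : ∃ f, f = (u + v) / 2 := ⟨_, rfl⟩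
  have he0 : e ≠ 0 := by rw [hedef]; exact div_ne_zero (sub_ne_zero.2 huv) two_ne_zero
  obtain rfl : u = f + e := by rw [hedef, hfdef]; ring
  obtain rfl : v = f - e := by linear_combination 2 * hedef
  -- The normalised polynomial `g` has critical values `±1` and simple preimages `±1` of them.
  obtain ⟨g, hg⟩ : ∃ g, g = C c⁻¹ * (α.comp (C e * X + C f) - C d) := ⟨_, rfl⟩
  have hg' : α.comp (C e * X + C f) = C c * g + C d := by
    rw [hg]; linear_combination (-(α.comp (C e * X + C f)) + C d) * hCc
  have hgd : C c * derivative g = C e * α.derivative.comp (C e * X + C f) := by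
    have := congrArg derivative hg'
    rw [derivative_comp] at this
    simp at this
    rw [← this]
  have hlin : (C e * X + C f : ℂ[X]).natDegree = 1 := natDegree_linear he0
  have hgn : g.natDegree = α.natDegree := by
    have := congrArg natDegree hg'
    rw [natDegree_comp, hlin, mul_one, natDegree_add_C, natDegree_C_mul hc0] at this
    exact this.symm
  have heq : g ^ 2 - 1 = C k * (derivative g ^ 2 * (X ^ 2 - 1)) := by
    have h1 := congrArg (fun p => p.comp (C e * X + C f)) hq
    simp only [mul_comp, sub_comp, pow_comp, C_comp, X_comp, hg'] at h1
    apply mul_left_cancel₀ (pow_ne_zero 2 hCc')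
    simp only [C_add, C_sub] at h1
    linear_combination h1 - C k * (X ^ 2 - 1) *
      (C c * derivative g + C e * α.derivative.comp (C e * X + C f)) * hgd
  have hg'0 : derivative g ≠ 0 := derivative_ne_zero' (by omega)
  have hode : g = C k * ((X ^ 2 - 1) * derivative (derivative g) + X * derivative g) := by
    have h1 := congrArg derivative heq
    simp only [derivative_sub, derivative_mul, derivative_pow, derivative_C, derivative_X,
      derivative_one] at h1
    have hC2 : (C 2 : ℂ[X]) = 2 := rfl
    apply mul_left_cancel₀ hg'0
    apply mul_left_cancel₀ (two_ne_zero (α := ℂ[X]))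
    simp at h1
    rw [hC2] at h1
    linear_combination h1
  have hk : k * (α.natDegree : ℂ) ^ 2 = 1 := by
    have h1 := congrArg (fun p => p.coeff g.natDegree) hode
    beta_reduce at h1
    rw [coeff_C_mul, ode_coeff, coeff_eq_zero_of_natDegree_lt (n := g.natDegree + 2) (by omega),
      mul_zero, sub_zero] at h1
    have h2 : g.coeff g.natDegree ≠ 0 := leadingCoeff_ne_zero.2 (by rintro rfl; simp at hg'0)
    rw [← hgn]
    apply mul_right_cancel₀ h2
    rw [one_mul, mul_assoc, ← h1]
  have hkC : (C ((α.natDegree : ℂ) ^ 2) * C k : ℂ[X]) = 1 := by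
    rw [← C_mul, mul_comm, hk, C_1]
  obtain ⟨s, hs⟩ := ode_unique (m := α.natDegree) (f := g) (by
    linear_combination -C ((α.natDegree : ℂ) ^ 2) * hode -
      ((X ^ 2 - 1) * derivative (derivative g) + X * derivative g) * hkC)
  refine ⟨c * s, d, e, f, mul_ne_zero hc0 ?_, he0, ?_⟩
  · rintro rfl
    rw [C_0, zero_mul] at hs
    rw [hs] at hg'0
    simp at hg'0
  · rw [hg', C_mul, mul_assoc, ← hs]

/-- If `α ∘ P = β ∘ Y` with coprime `deg α ≪ deg β`, then `α` is a power or a Chebyshev polynomial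
up to affine changes of variable. The surjectivity of `(P, Y)` on the curve `α(x) = β(y)` forces
high ramification of `β` over the critical values of `α`, contradicting Riemann–Hurwitz as soon as
`α` has three critical values, or two of them and a multiple critical point. -/
theorem ritt {α β P Y : ℂ[X]} (hα : 2 ≤ α.natDegree)
    (hβ : 6 * α.natDegree < β.natDegree) (hcop : Nat.Coprime α.natDegree β.natDegree)
    (h : α.comp P = β.comp Y) (hP : P.natDegree = β.natDegree) (hY : Y.natDegree = α.natDegree) :
    ∃ a b e f : ℂ, a ≠ 0 ∧ e ≠ 0 ∧
      (α.comp (C e * X + C f) = C a * X ^ α.natDegree + C b ∨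
      α.comp (C e * X + C f) = C a * Chebyshev.T ℂ α.natDegree + C b) := by
  have hα0 : 0 < α.natDegree := by omega
  obtain ⟨x₁, hx₁⟩ : ∃ x, α.derivative.IsRoot x := by
    apply IsAlgClosed.exists_root
    intro h0
    have := natDegree_eq_of_degree_eq_some (h0.trans Nat.cast_zero.symm)
    rw [natDegree_derivative'] at this
    omega
  have hx₁' := two_le_mult hα0 hx₁
  by_cases h1 : ∀ x, α.derivative.eval x = 0 → α.eval x = α.eval x₁
  · obtain ⟨u, c, hc, he⟩ := one_crit hα h1
    refine ⟨c, α.eval x₁, 1, u, hc, one_ne_zero, Or.inl ?_⟩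
    conv_lhs => rw [he]
    simp [add_comp, mul_comp, pow_comp, add_comm]
  · push Not at h1
    obtain ⟨x₂, hx₂, h12⟩ := h1
    have hx₂' := two_le_mult hα0 hx₂
    have hc : ∀ x, α.derivative.eval x = 0 → α.eval x = α.eval x₁ ∨ α.eval x = α.eval x₂ := by
      intro x hx
      by_contra hno
      push Not at hno
      exact no_three hα0 hβ hcop h hP hY hx₁' hx₂' (two_le_mult hα0 hx) h12.symm
        (Ne.symm hno.1) (Ne.symm hno.2)
    obtain ⟨a, b, e, f, ha, he, hh⟩ := two_crit hα h12.symm (fun x => by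
      by_contra hx
      push Not at hx
      by_cases hxx : α.eval x₁ = α.eval x
      · exact no_three_two hα0 hβ hcop h hP hY hx₂' hx (by rw [← hxx]; exact h12)
      · exact no_three_two hα0 hβ hcop h hP hY hx₁' hx hxx) hc
    exact ⟨a, b, e, f, ha, he, Or.inr hh⟩

/-! ### Iterates with a special right factor -/

theorem polyIter_add (A : ℂ[X]) (i j : ℕ) :
    polyIter A (i + j) = (polyIter A i).comp (polyIter A j) := by
  induction i with
  | zero => simp [polyIter]
  | succ i ih => rw [Nat.succ_add, polyIter, ih, polyIter, comp_assoc]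

theorem polyIter_one (A : ℂ[X]) : polyIter A 1 = A := by simp [polyIter]

theorem polyIter_succ' (A : ℂ[X]) (k : ℕ) : polyIter A (k + 1) = (polyIter A k).comp A := by
  rw [polyIter_add, polyIter_one]

theorem natDegree_polyIter (A : ℂ[X]) (k : ℕ) : (polyIter A k).natDegree = A.natDegree ^ k := by
  induction k with
  | zero => simp [polyIter]
  | succ k ih => rw [polyIter, natDegree_comp, ih, pow_succ']

/-- `L` conjugates the iterates of `A` to those of `B`. -/
theorem polyIter_conj {A B L : ℂ[X]} (h : A.comp L = L.comp B) (k : ℕ) :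
    (polyIter A k).comp L = L.comp (polyIter B k) := by
  induction k with
  | zero => simp [polyIter]
  | succ k ih => rw [polyIter, polyIter, comp_assoc, ih, ← comp_assoc, h, comp_assoc]

/-- If an iterate of `B` factors through a member `S_m` of a multiplicatively indexed family with
`m` large, then comparing the leading terms of `B^{∘k}` with those of `S_{n^k}` shows that `B` is
`S_n` up to an affine map `L` on the left, and that `S_n ∘ L = M ∘ S_n` for an affine `M`. -/
theorem family_rigid {S : ℕ → ℂ[X]} (hdeg : ∀ j, (S j).natDegree = j)
    (hmul : ∀ i j, S (i * j) = (S i).comp (S j)) {B V : ℂ[X]} {n m k : ℕ} (hn : 2 ≤ n)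
    (hB : B.natDegree = n) (hm : n ^ 2 < m) (h : polyIter B (k + 2) = V.comp (S m)) :
    ∃ a b c d : ℂ, a ≠ 0 ∧ B = C a * S n + C b ∧
      (S n).comp (C a * X + C b) = C c * S n + C d := by
  have hN : n ^ (k + 2) = V.natDegree * m := by
    rw [← hB, ← natDegree_polyIter, h, natDegree_comp, hdeg]
  obtain ⟨v, hv⟩ : ∃ v, v = V.natDegree := ⟨_, rfl⟩
  rw [← hv] at hN
  have hv0 : 0 < v := by
    rcases Nat.eq_zero_or_pos v with h0 | h0
    · rw [h0, zero_mul] at hN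
      have : 0 < n ^ (k + 2) := by positivity
      omega
    · exact h0
  have hSv : (S v).coeff v ≠ 0 := by
    have : (S v).leadingCoeff ≠ 0 := leadingCoeff_ne_zero.2 (by
      intro h0
      have := hdeg v
      rw [h0, natDegree_zero] at this
      omega)
    rwa [leadingCoeff, hdeg] at this
  have hV0 : V.coeff v ≠ 0 := by
    rw [hv]
    exact leadingCoeff_ne_zero.2 (by rintro rfl; simp at hv; omega)
  obtain ⟨w, hw⟩ : ∃ w, w = V.coeff v / (S v).coeff v := ⟨_, rfl⟩
  have hw0 : w ≠ 0 := by rw [hw]; exact div_ne_zero hV0 hSv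
  -- The difference of `B^{∘(k+2)}` and `w S_{n^(k+2)}` has a gap of length `m`.
  have hE : (C w * S v - V).natDegree ≤ v - 1 := by
    rw [natDegree_le_iff_coeff_eq_zero]
    intro j hj
    rcases (show v ≤ j by omega).eq_or_lt with rfl | hj'
    · rw [coeff_sub, coeff_C_mul, hw]; field_simp; ring
    · rw [coeff_sub, coeff_C_mul, coeff_eq_zero_of_natDegree_lt (by rw [hdeg]; exact hj'),
        coeff_eq_zero_of_natDegree_lt (by omega), mul_zero, sub_zero]
  have hgap : (C w * S (n ^ (k + 2)) - polyIter B (k + 2)).natDegree ≤ n ^ (k + 2) - m := by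
    have e : C w * S (n ^ (k + 2)) - polyIter B (k + 2) = (C w * S v - V).comp (S m) := by
      rw [hN, hmul, h, sub_comp, C_mul_comp]
    rw [e, natDegree_comp, hdeg, hN, ← Nat.sub_one_mul]
    exact Nat.mul_le_mul_right m hE
  have hmN : m ≤ n ^ (k + 2) := by rw [hN]; exact Nat.le_mul_of_pos_left m hv0
  have hn0 : 0 < n := by omega
  have hnk : n ^ (k + 2) = n ^ (k + 1) * n := pow_succ _ _
  have hnk' : n ^ (k + 1) = n ^ k * n := pow_succ _ _
  have hdS : ∀ j, (C w * S j).natDegree = j := fun j => by rw [natDegree_C_mul hw0, hdeg]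
  have hpos : ∀ j, 0 < n ^ j := fun j => by positivity
  -- First comparison: `B` is an affine function of `S_n`.
  obtain ⟨γ, hγ⟩ := right_factor (A := C w * S (n ^ (k + 1))) (B := polyIter B (k + 1))
    (P := S n) (Q := B) (by rw [hdeg]; exact hn0) (by omega) (by rw [hdS]; exact hpos _)
    (by rw [hdS, hdeg, natDegree_polyIter, hB]) (by rw [hdeg, hB]) (by
      have e : (C w * S (n ^ (k + 1))).comp (S n) - (polyIter B (k + 1)).comp B =
          C w * S (n ^ (k + 2)) - polyIter B (k + 2) := by
        rw [hnk, hmul, C_mul_comp, ← polyIter_succ']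
      rw [e, hdS, hdeg, hB, ← hnk]
      refine degree_le_natDegree.trans_lt (Nat.cast_lt.2 (hgap.trans_lt ?_))
      have : n < m := by nlinarith
      omega)
  have hγ1 : γ.natDegree = 1 := by
    have := congrArg natDegree hγ
    rw [hB, natDegree_comp, hdeg] at this
    nlinarith
  -- Second comparison: so is `B ∘ γ`.
  obtain ⟨δ, hδ⟩ := right_factor (A := C w * S (n ^ k)) (B := polyIter B k)
    (P := S n) (Q := B.comp γ) (by rw [hdeg]; exact hn0)
    (by rw [natDegree_comp, hB, hγ1]; omega) (by rw [hdS]; exact hpos _)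
    (by rw [hdS, hdeg, natDegree_polyIter, natDegree_comp, hB, hγ1, mul_one])
    (by rw [hdeg, natDegree_comp, hB, hγ1, mul_one]) (by
      have e : ((C w * S (n ^ k)).comp (S n) - (polyIter B k).comp (B.comp γ)).comp (S n) =
          C w * S (n ^ (k + 2)) - polyIter B (k + 2) := by
        rw [hnk, hmul, hnk', hmul, polyIter_succ', polyIter_succ', sub_comp, C_mul_comp, C_mul_comp,
          comp_assoc, comp_assoc, comp_assoc, comp_assoc, ← hγ]
      have h1 := hgap
      rw [← e, natDegree_comp, hdeg] at h1
      rw [hdS, hdeg, natDegree_comp, hB, hγ1, mul_one, ← hnk']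
      refine degree_le_natDegree.trans_lt (Nat.cast_lt.2 ?_)
      apply Nat.lt_of_mul_lt_mul_right (a := n)
      rw [Nat.sub_mul, ← hnk]
      refine h1.trans_lt ?_
      rw [sq] at hm
      omega)
  have hδ1 : δ.natDegree = 1 := by
    have := congrArg natDegree hδ
    rw [natDegree_comp, hB, hγ1, natDegree_comp, hdeg] at this
    nlinarith
  obtain ⟨a, ha, b, rfl⟩ := natDegree_eq_one.1 hγ1
  obtain ⟨c, hc, d, rfl⟩ := natDegree_eq_one.1 hδ1
  simp only [add_comp, mul_comp, C_comp, X_comp] at hγ hδ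
  refine ⟨a, b, c / a, (d - b) / a, ha, hγ, ?_⟩
  rw [hγ, add_comp, mul_comp, C_comp, C_comp] at hδ
  have hCa : (C a⁻¹ * C a : ℂ[X]) = 1 := by rw [← C_mul, inv_mul_cancel₀ ha, C_1]
  rw [div_eq_inv_mul, div_eq_inv_mul, C_mul, C_mul, C_sub]
  linear_combination C a⁻¹ * hδ - (S n).comp (C a * X + C b) * hCa

/-- Comparison of the derivatives at `0`. -/
theorem power_case {a b c d : ℂ} {n : ℕ} (hn : 2 ≤ n) (ha : a ≠ 0)
    (h : (X ^ n : ℂ[X]).comp (C a * X + C b) = C c * X ^ n + C d) : b = 0 := by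
  rw [X_pow_comp] at h
  have h1 := congrArg (fun p => (derivative p).eval 0) h
  simp [derivative_pow] at h1
  rw [zero_pow (by omega)] at h1
  simp at h1
  rcases h1 with (h1 | h1) | h1
  · omega
  · exact h1.1
  · exact absurd h1 ha

/-- The affine maps `az + b` for which `T_n ∘ (az + b)` is again an affine image of `T_n` are `±z`,
as seen by comparing the differential equations of both sides. This fails for `n = 2`. -/
theorem chebyshev_case {a b c d : ℂ} {n : ℕ} (hn : 3 ≤ n) (ha : a ≠ 0)
    (h : (Chebyshev.T ℂ n).comp (C a * X + C b) = C c * Chebyshev.T ℂ n + C d) :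
    b = 0 ∧ a ^ 2 = 1 := by
  obtain ⟨p, rfl⟩ : ∃ p, n = p + 3 := ⟨n - 3, by omega⟩
  obtain ⟨T, hT⟩ : ∃ T, T = Chebyshev.T ℂ ((p + 3 : ℕ) : ℤ) := ⟨_, rfl⟩
  have hode := ode_T (p + 3)
  rw [← hT] at h hode
  have hTn : T.natDegree = p + 3 := by rw [hT]; exact natDegree_T' _
  have hT0 : T.coeff (p + 3) ≠ 0 := by
    have : T.leadingCoeff ≠ 0 := leadingCoeff_ne_zero.2 (by rw [hT]; exact Chebyshev.T_ne_zero ℂ _)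
    rwa [leadingCoeff, hTn] at this
  have hc : c ≠ 0 := by
    rintro rfl
    have := congrArg natDegree h
    rw [natDegree_comp, natDegree_linear ha, hTn, C_0, zero_mul, zero_add, natDegree_C] at this
    omega
  have h1 := congrArg derivative h
  rw [derivative_comp] at h1
  have h2 := congrArg derivative h1
  rw [derivative_mul, derivative_comp] at h2
  simp at h1 h2
  have hode' := congrArg (fun q => q.comp (C a * X + C b)) hode
  simp only [add_comp, mul_comp, sub_comp, pow_comp, X_comp, C_comp, one_comp] at hode'
  have hkey : C (2 * a * b) * (X * derivative (derivative T)) +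
      C (b ^ 2 - 1 + a ^ 2) * derivative (derivative T) + C (a * b) * derivative T =
        C (a ^ 2 * ((p + 3 : ℕ) : ℂ) ^ 2 * d * c⁻¹) := by
    have hCc : (C c : ℂ[X]) ≠ 0 := by simpa using hc
    have hCc' : (C c * C c⁻¹ : ℂ[X]) = 1 := by rw [← C_mul, mul_inv_cancel₀ hc, C_1]
    have hC2 : (C 2 : ℂ[X]) = 2 := rfl
    apply mul_left_cancel₀ hCc
    simp only [C_mul, C_add, C_sub, C_pow, C_1, hC2] at hode hode' ⊢
    linear_combination (C a ^ 2) * hode' - C c * C a ^ 2 * hode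
      - ((C a * X + C b) ^ 2 - 1) * h2 - C a * (C a * X + C b) * h1
      + C a ^ 2 * C ((p + 3 : ℕ) : ℂ) ^ 2 * h
      - C a ^ 2 * C ((p + 3 : ℕ) : ℂ) ^ 2 * C d * hCc'
  have hb : b = 0 := by
    have h3 := congrArg (fun q => q.coeff (p + 2)) hkey
    simp only [coeff_add, coeff_C_mul, coeff_X_mul, coeff_derivative, coeff_C_succ] at h3
    rw [coeff_eq_zero_of_natDegree_lt (n := p + 2 + 1 + 1) (by omega)] at h3
    have h4 : (a * T.coeff (p + 3) * ((p + 3) * (2 * p + 5))) * b = 0 := by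
      rw [← h3]; push_cast; ring
    rcases mul_eq_zero.1 h4 with h5 | h5
    · exfalso
      have h6 : ((p + 3) * (2 * p + 5) : ℂ) ≠ 0 := by
        have : (((p + 3) * (2 * p + 5) : ℕ) : ℂ) ≠ 0 := Nat.cast_ne_zero.2 (by positivity)
        exact_mod_cast this
      exact mul_ne_zero (mul_ne_zero ha hT0) h6 h5
    · exact h5
  refine ⟨hb, ?_⟩
  subst hb
  have h3 := congrArg (fun q => q.coeff (p + 1)) hkey
  simp only [mul_zero, C_0, zero_mul, zero_add, add_zero, coeff_C_mul, coeff_derivative,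
    coeff_C_succ] at h3
  have h4 : (T.coeff (p + 3) * ((p + 3) * (p + 2))) * (a ^ 2 - 1) = 0 := by
    rw [← h3]; push_cast; ring
  rcases mul_eq_zero.1 h4 with h5 | h5
  · exfalso
    have h6 : ((p + 3) * (p + 2) : ℂ) ≠ 0 := by
      have : (((p + 3) * (p + 2) : ℕ) : ℂ) ≠ 0 := Nat.cast_ne_zero.2 (by positivity)
      exact_mod_cast this
    exact mul_ne_zero hT0 h6 h5
  · linear_combination h5

/-- If an iterate of `A` has a right factor of large degree which is affinely equivalent to a power
or to a Chebyshev polynomial, then `A` is special. -/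
theorem special_of_factor {A U α : ℂ[X]} {n k : ℕ} (hn : 3 ≤ n) (hA : A.natDegree = n)
    (hU : polyIter A (k + 2) = U.comp α) (hm : n ^ 2 < α.natDegree)
    (hα : ∃ a b e f : ℂ, a ≠ 0 ∧ e ≠ 0 ∧
      (α.comp (C e * X + C f) = C a * X ^ α.natDegree + C b ∨
      α.comp (C e * X + C f) = C a * Chebyshev.T ℂ α.natDegree + C b)) :
    SpecialPoly A := by
  obtain ⟨a, b, e, f, -, he, hS⟩ := hα
  obtain ⟨L, hL⟩ : ∃ L : ℂ[X], L = C e * X + C f := ⟨_, rfl⟩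
  obtain ⟨L', hL'⟩ : ∃ L' : ℂ[X], L' = C e⁻¹ * X - C (e⁻¹ * f) := ⟨_, rfl⟩
  have hCe : (C e * C e⁻¹ : ℂ[X]) = 1 := by rw [← C_mul, mul_inv_cancel₀ he, C_1]
  have hLL' : L.comp L' = X := by
    rw [hL, hL']
    simp only [add_comp, mul_comp, C_comp, X_comp, C_mul]
    linear_combination (X - C f) * hCe
  have hL'L : L'.comp L = X := by
    rw [hL, hL']
    simp only [sub_comp, mul_comp, C_comp, X_comp, C_mul]
    linear_combination X * hCe
  have hLd : L.degree = 1 := by rw [hL]; exact degree_linear he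
  have hLn : L.natDegree = 1 := natDegree_eq_of_degree_eq_some hLd
  have hL'n : L'.natDegree = 1 := by
    have := congrArg natDegree hLL'
    rwa [natDegree_comp, hLn, one_mul, natDegree_X] at this
  rw [← hL] at hS
  obtain ⟨B, hB⟩ : ∃ B, B = L'.comp (A.comp L) := ⟨_, rfl⟩
  have hconj : A.comp L = L.comp B := by
    rw [hB, ← comp_assoc, hLL', X_comp]
  have hBn : B.natDegree = n := by
    rw [hB, natDegree_comp, natDegree_comp, hL'n, hLn, hA]; ring
  have hiter : polyIter B (k + 2) = L'.comp (U.comp (α.comp L)) := by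
    rw [← comp_assoc U, ← hU, polyIter_conj hconj, ← comp_assoc, hL'L, X_comp]
  rcases hS with hS | hS
  · obtain ⟨a', b', c, d, ha', hB', hc⟩ := family_rigid (S := fun j => (X ^ j : ℂ[X]))
      (V := L'.comp (U.comp (C a * X + C b))) (fun j => by simp)
      (fun i j => by simp [← pow_mul, mul_comm]) (by omega) hBn hm (k := k) (by
        rw [hiter, hS]; simp [comp_assoc])
    obtain rfl := power_case (by omega) ha' hc
    obtain ⟨s, hs⟩ := IsAlgClosed.exists_pow_nat_eq a'⁻¹ (n := n - 1) (by omega)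
    have hs' : a' * s ^ n = s := by
      have : s ^ n = s ^ (n - 1) * s := by rw [← pow_succ]; congr 1; omega
      rw [this, hs]; field_simp
    have hs0 : s ≠ 0 := by
      rintro rfl
      rw [zero_pow (by omega)] at hs
      exact inv_ne_zero ha' hs.symm
    left
    refine ⟨L.comp (C s * X), ?_, ?_⟩
    · refine (degree_eq_iff_natDegree_eq_of_pos one_pos).2 ?_
      rw [natDegree_comp, hLn, natDegree_C_mul_X s hs0, one_mul]
    · rw [← comp_assoc, hconj, comp_assoc, comp_assoc, hA]
      congr 1
      rw [hB']
      simp only [C_0, add_zero, mul_comp, C_comp, X_pow_comp, X_comp, mul_pow, ← C_pow]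
      rw [← mul_assoc, ← C_mul, hs']
  · obtain ⟨a', b', c, d, ha', hB', hc⟩ := family_rigid (S := fun j => Chebyshev.T ℂ (j : ℤ))
      (V := L'.comp (U.comp (C a * X + C b))) natDegree_T'
      (fun i j => by rw [Nat.cast_mul, Chebyshev.T_mul]) (by omega) hBn hm (k := k) (by
        rw [hiter, hS]; simp [comp_assoc])
    obtain ⟨rfl, ha2⟩ := chebyshev_case hn ha' hc
    right
    rw [C_0, add_zero] at hB'
    rcases (sq_eq_one_iff.1 ha2) with rfl | rfl
    · left
      refine ⟨L, hLd, ?_⟩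
      rw [hconj, hB', hA, C_1, one_mul]
    · right
      refine ⟨L, hLd, ?_⟩
      rw [hconj, hB', hA, C_neg, C_1, neg_one_mul]

/-! ### Degrees of the factors of an iterate -/

theorem exists_prime_of_not_dvd {n x : ℕ} (hn : n ≠ 0) (hx : x ≠ 0) (h : ¬ n ∣ x) :
    ∃ p, p.Prime ∧ x.factorization p < n.factorization p := by
  rw [← Nat.factorization_prime_le_iff_dvd hn hx] at h
  push Not at h
  exact h

/-- If `x * y = n ^ d` and neither `x` nor `y` is divisible by `n`, then dividing `n ^ k` and `x` by
a common divisor `u` leaves large quotients: some prime divides `x` less often than `n`, and some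
prime divides `y` less often than `n`. -/
theorem degree_bounds {n x y k d u m r : ℕ} (hn : n ≠ 0) (hxy : x * y = n ^ d)
    (hx : ¬ n ∣ x) (hy : ¬ n ∣ y) (hum : n ^ k = u * m) (hur : x = u * r) :
    2 ^ k ≤ m ∧ 2 ^ (d - k) ≤ r := by
  have hnd : n ^ d ≠ 0 := pow_ne_zero _ hn
  have hnk : n ^ k ≠ 0 := pow_ne_zero _ hn
  have hx0 : x ≠ 0 := by rintro rfl; rw [zero_mul] at hxy; exact hnd hxy.symm
  have hy0 : y ≠ 0 := by rintro rfl; rw [mul_zero] at hxy; exact hnd hxy.symm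
  have hu0 : u ≠ 0 := by rintro rfl; rw [zero_mul] at hur; exact hx0 hur
  have hm0 : m ≠ 0 := by rintro rfl; rw [mul_zero] at hum; exact hnk hum
  have hr0 : r ≠ 0 := by rintro rfl; rw [mul_zero] at hur; exact hx0 hur
  have key : ∀ p, x.factorization p + y.factorization p = d * n.factorization p ∧
      k * n.factorization p = u.factorization p + m.factorization p ∧
      x.factorization p = u.factorization p + r.factorization p := by
    intro p
    refine ⟨?_, ?_, ?_⟩
    · have := congrArg (fun a => a.factorization p) hxy
      simpa [Nat.factorization_mul hx0 hy0, Nat.factorization_pow] using this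
    · have := congrArg (fun a => a.factorization p) hum
      simpa [Nat.factorization_mul hu0 hm0, Nat.factorization_pow] using this
    · have := congrArg (fun a => a.factorization p) hur
      simpa [Nat.factorization_mul hu0 hr0] using this
  have big : ∀ p a b : ℕ, p.Prime → b ≠ 0 → a ≤ b.factorization p → 2 ^ a ≤ b := by
    intro p a b hp hb hab
    calc 2 ^ a ≤ p ^ a := Nat.pow_le_pow_left hp.two_le a
      _ ≤ b := Nat.le_of_dvd (Nat.pos_of_ne_zero hb)
        ((hp.pow_dvd_iff_le_factorization hb).2 hab)
  constructor
  · obtain ⟨p, hp, hlt⟩ := exists_prime_of_not_dvd hn hx0 hx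
    obtain ⟨h1, h2, h3⟩ := key p
    apply big p k m hp hm0
    rcases k with _ | k
    · exact Nat.zero_le _
    · have : k * 1 ≤ k * n.factorization p := Nat.mul_le_mul_left k (by omega)
      rw [Nat.succ_mul] at h2
      omega
  · obtain ⟨q, hq, hlt⟩ := exists_prime_of_not_dvd hn hy0 hy
    obtain ⟨h1, h2, h3⟩ := key q
    apply big q (d - k) r hq hr0
    rcases Nat.le_total d k with hdk | hdk
    · rw [Nat.sub_eq_zero_of_le hdk]; exact Nat.zero_le _
    · obtain ⟨j, rfl⟩ := Nat.exists_eq_add_of_le hdk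
      rcases j with _ | j
      · simp
      · have : j * 1 ≤ j * n.factorization q := Nat.mul_le_mul_left j (by omega)
        rw [show k + (j + 1) = k + j + 1 by ring, Nat.succ_mul, Nat.add_mul] at h1
        omega

/-- In a decomposition of a high iterate of a non-special polynomial of degree `n`, the degree of
one of the two factors is divisible by `n`. -/
theorem dvd_or_dvd {A X Y : ℂ[X]} {n d : ℕ} (hn : 2 ≤ n) (hA : A.natDegree = n)
    (hsp : ¬ SpecialPoly A) (hd : 2 * n + 6 * n ^ (2 * n) ≤ d) (h : polyIter A d = X.comp Y) :
    n ∣ X.natDegree ∨ n ∣ Y.natDegree := by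
  have hxy : X.natDegree * Y.natDegree = n ^ d := by
    rw [← natDegree_comp, ← h, natDegree_polyIter, hA]
  rcases hn.eq_or_lt with rfl | hn3
  · apply (Nat.prime_two.dvd_mul).1
    rw [hxy]
    exact dvd_pow_self _ (by omega)
  by_contra hno
  push Not at hno
  obtain ⟨hx, hy⟩ := hno
  have hn0 : 0 < n := by omega
  have hnd : 0 < n ^ d := by positivity
  have hX0 : 0 < X.natDegree := Nat.pos_of_mul_pos_right (by rw [hxy]; exact hnd)
  have hY0 : 0 < Y.natDegree := Nat.pos_of_mul_pos_left (by rw [hxy]; exact hnd)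
  obtain ⟨k, hk⟩ : ∃ k, k = 2 * n := ⟨_, rfl⟩
  rw [← hk] at hd
  have hsplit : (polyIter A k).comp (polyIter A (d - k)) = X.comp Y := by
    rw [← polyIter_add, ← h]; congr 1; omega
  obtain ⟨U, α, β, hUα, hUβ, hαβ, hcop⟩ := left_gcd
    (by rw [natDegree_polyIter, hA]; positivity) hY0
    (by rw [natDegree_polyIter, hA]; positivity) hsplit
  have hum : n ^ k = U.natDegree * α.natDegree := by
    rw [← natDegree_comp, ← hUα, natDegree_polyIter, hA]
  have hur : X.natDegree = U.natDegree * β.natDegree := by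
    rw [← natDegree_comp, ← hUβ]
  obtain ⟨hm, hr⟩ := degree_bounds hn0.ne' hxy hx hy hum hur
  have hm' : n ^ 2 < α.natDegree := by
    refine lt_of_lt_of_le ?_ hm
    rw [hk, mul_comm, pow_mul]
    exact Nat.pow_lt_pow_left Nat.lt_two_pow_self (by norm_num)
  have hmle : α.natDegree ≤ n ^ k := Nat.le_of_dvd (by positivity) ⟨U.natDegree, by
    rw [hum, mul_comm]⟩
  have hr' : 6 * α.natDegree < β.natDegree := by
    have h1 : d - k < 2 ^ (d - k) := Nat.lt_two_pow_self
    omega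
  have hα0 : 0 < α.natDegree := by omega
  obtain ⟨P, Y', hPY, hP, hY'⟩ := right_gcd hα0 (by omega) hcop _ (polyIter A (d - k)) Y rfl
    (by rw [natDegree_polyIter, hA]; positivity) hαβ
  have hα2 : 2 ≤ α.natDegree := by nlinarith
  obtain ⟨j, rfl⟩ : ∃ j, k = j + 2 := ⟨k - 2, by omega⟩
  exact hsp (special_of_factor (by omega) hA hUα hm' (ritt hα2 hr' hcop hPY hP hY'))

end PolyDecomp

theorem decompositions_of_iterates_polynomial
    (n : ℕ) (hn : 2 ≤ n) :
    ∃ N : ℕ, 1 ≤ N ∧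
      ∀ A : Polynomial ℂ, A.natDegree = n → ¬ SpecialPoly A →
        ∀ d : ℕ, N ≤ d →
          ∀ X Y : Polynomial ℂ, polyIter A d = X.comp Y →
            ∃ X' Y' : Polynomial ℂ, ∃ k₁ k₂ : ℕ,
              polyIter A N = X'.comp Y' ∧
                X = (polyIter A k₁).comp X' ∧ Y = Y'.comp (polyIter A k₂) := by
  refine ⟨2 * n + 6 * n ^ (2 * n), by omega, ?_⟩
  intro A hA hsp d hd
  induction d, hd using Nat.le_induction with
  | base =>
    intro X Y h
    exact ⟨X, Y, 0, 0, h, by simp [polyIter], by simp [polyIter]⟩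
  | succ d hd ih =>
    intro X Y h
    have hn0 : 0 < n := by omega
    have hxy : X.natDegree * Y.natDegree = n ^ (d + 1) := by
      rw [← natDegree_comp, ← h, PolyDecomp.natDegree_polyIter, hA]
    have hnd : 0 < n ^ (d + 1) := by positivity
    have hX0 : 0 < X.natDegree := Nat.pos_of_mul_pos_right (by rw [hxy]; exact hnd)
    have hY0 : 0 < Y.natDegree := Nat.pos_of_mul_pos_left (by rw [hxy]; exact hnd)
    have hAd : (polyIter A d).natDegree = n ^ d := by rw [PolyDecomp.natDegree_polyIter, hA]
    rcases PolyDecomp.dvd_or_dvd hn hA hsp (by omega) h with ⟨c, hc⟩ | hdvd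
    · -- `X = A ∘ γ` with `A^{∘d} = γ ∘ Y`.
      have h' : X.comp Y = A.comp (polyIter A d) := h.symm
      obtain ⟨γ, hγ⟩ := PolyDecomp.right_factor' hY0 (by rw [hAd]; positivity) hX0 (by
        rw [hAd]
        refine ⟨c, Nat.eq_of_mul_eq_mul_left hn0 ?_⟩
        rw [← pow_succ', ← hxy, hc]; ring) h'
      have hX : X = A.comp γ := PolyDecomp.comp_cancel hY0 (by rw [h', hγ, comp_assoc])
      obtain ⟨X', Y', k₁, k₂, h1, h2, h3⟩ := ih γ Y hγ
      exact ⟨X', Y', k₁ + 1, k₂, h1, by rw [hX, h2, polyIter, comp_assoc], h3⟩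
    · -- `Y = γ ∘ A` with `A^{∘d} = X ∘ γ`.
      have h' : (polyIter A d).comp A = X.comp Y := by rw [← h, PolyDecomp.polyIter_succ']
      obtain ⟨γ, hγ⟩ := PolyDecomp.right_factor' (by omega) hY0 (by rw [hAd]; positivity)
        (by rw [hA]; exact hdvd) h'
      have hX : polyIter A d = X.comp γ :=
        PolyDecomp.comp_cancel (W := A) (by omega) (by rw [h', hγ, comp_assoc])
      obtain ⟨X', Y', k₁, k₂, h1, h2, h3⟩ := ih X γ hX
      exact ⟨X', Y', k₁, k₂ + 1, h1, h2, by rw [hγ, h3, PolyDecomp.polyIter_succ', comp_assoc]⟩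
end

section
/- Let A be a polynomial over ℂ of degree n ≥ 2 that is not special, and let B be a polynomial commuting with A (that is, A∘B = B∘A) such that deg B ≥ deg A. Then B = A∘S for some polynomial S over ℂ. -/
/-!
Let `n = deg A` and `m = deg B`. There is a Laurent series `β` at infinity (the inverse of the
Böttcher coordinate, `exists_bottcher`) with `A(β(w)) = β(w ^ n)`, and every `B` commuting with `A`
becomes a monomial map in this coordinate: `B(β(w)) = β(b w ^ m)` with `b ^ n = b`
(`exists_wsub_of_commute`).

If `n ∣ m`, the series `β(b w ^ (m / n))` is `S(β(w))` for a polynomial `S`, and `B = A ∘ S`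
(`left_factor_of_dvd`). This covers the case of multiplicatively dependent degrees: `n ^ k = m ^ l`
with `n ≤ m` forces `n ∣ m`.

It remains to show that `A` is special when `n` and `m` are multiplicatively independent, a case of
Ritt's theorem on commuting polynomials. Write `δ = w dβ/dw`. Since `log n / log m` is irrational,
iterates of `A` and `B` provide polynomials `P`, `Q` with `P(β(w)) = β(c w ^ N)` and
`Q(β(w)) = β(d w ^ M)`, where `N < M` and `(M - N) / N` is as small as desired
(`exists_close_iterates`). An argument in the style of transcendence theory then gives a polynomial
relation between `β` and `δ`. Linear algebra (`exists_coeffs`) produces a nontrivial combination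

  `Φ(w, w') = ∑ a β(w)^α δ(w)^s β(w')^γ δ(w')^(2-s)`

whose coefficients at `w^(-p) w'^(-q)` vanish whenever `p + q ≤ 0`. For `N` and `M` as above the
series `Φ(c w ^ N, d w ^ M)` equals `Ψ(β(w)) δ(w) ^ 2` for some polynomial `Ψ` (`aux_series`), so it
cannot have positive order unless it is zero; but if `Φ ≠ 0` and `(M - N) / N` is small enough, a
single term of `Φ` accounts for the first nonzero coefficient, of positive index. Therefore `Φ = 0`
(`Phi_eq_zero`), and some nonzero polynomial of degree at most two in `δ`, with coefficients in
`ℂ[β]`, vanishes (`exists_relation`).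

Substituting `w ^ n` for `w` in this relation and eliminating yields nonzero polynomials `u`, `v`
with `n² u(A) v = A'² u v(A)` (`equation_of_relation`); after removal of common factors `v` is
constant, and a degree count gives `n² H(A) = A'² H` with `deg H = 2` (`exists_quadratic`). When `H`
has a double root, `A` is conjugate to `z ^ n`; otherwise it may be normalized to `H = z² - 1`, whose
solutions are `± T_n` because they satisfy the linear differential equation of `T_n`
(`special_of_quadratic`).
-/

open Polynomial

namespace CommPoly

noncomputable section

/-! ### Laurent series at infinity -/

/-- Laurent series over `ℂ` in the local parameter `t = 1/w` at infinity: the coefficient of index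
`k` is the coefficient of `w ^ (-k)`. -/
abbrev L : Type := HahnSeries ℤ ℂ

/-- The coefficientwise `ℂ`-algebra structure, preferred to the one through power series. -/
instance instAlgebraL : Algebra ℂ L := HahnSeries.instAlgebra

/-- `VB x k`: all coefficients of `x` of index less than `k` vanish. -/
def VB (x : L) (k : ℤ) : Prop := ∀ j < k, x.coeff j = 0

theorem exists_VB (x : L) : ∃ k, VB x k :=
  ⟨x.order, fun _ hj => HahnSeries.coeff_eq_zero_of_lt_order hj⟩

/-- Products of Laurent series as sums over an explicit finite range of indices. -/
theorem coeff_mul_Icc {x y : L} {a b : ℤ} (hx : VB x a) (hy : VB y b) (r : ℤ) :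
    (x * y).coeff r = ∑ i ∈ Finset.Icc a (r - b), x.coeff i * y.coeff (r - i) := by
  rw [HahnSeries.coeff_mul]
  have hinj : Set.InjOn (fun ij : ℤ × ℤ => ij.1)
      (Finset.antidiagonal x.isPWO_support y.isPWO_support r : Set (ℤ × ℤ)) := by
    rintro ⟨i, j⟩ h ⟨i', j'⟩ h' hh
    simp only [Finset.mem_coe, Finset.mem_antidiagonal] at h h'
    simp only at hh
    ext <;> simp only <;> omega
  have h1 : ∑ ij ∈ Finset.antidiagonal x.isPWO_support y.isPWO_support r,
        x.coeff ij.1 * y.coeff ij.2 =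
      ∑ i ∈ (Finset.antidiagonal x.isPWO_support y.isPWO_support r).image (fun ij => ij.1),
        x.coeff i * y.coeff (r - i) := by
    rw [Finset.sum_image hinj]
    refine Finset.sum_congr rfl ?_
    rintro ⟨i, j⟩ h
    simp only [Finset.mem_antidiagonal] at h
    have : j = r - i := by omega
    simp [this]
  rw [h1]
  refine Finset.sum_subset ?_ ?_
  · intro i hi
    simp only [Finset.mem_image, Finset.mem_antidiagonal, Prod.exists] at hi
    obtain ⟨i', j, ⟨h1, h2, h3⟩, rfl⟩ := hi
    rw [HahnSeries.mem_support] at h1 h2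
    have h4 : a ≤ i' := by
      by_contra h
      exact h1 (hx _ (by omega))
    have h5 : b ≤ j := by
      by_contra h
      exact h2 (hy _ (by omega))
    simp only [Finset.mem_Icc]
    omega
  · intro i _ hi
    by_contra hne
    apply hi
    simp only [Finset.mem_image, Finset.mem_antidiagonal, Prod.exists]
    exact ⟨i, r - i, ⟨left_ne_zero_of_mul hne, right_ne_zero_of_mul hne, by omega⟩, rfl⟩

/-- The rescaling `w ↦ b w`. -/
def resc (b : ℂˣ) : L →ₐ[ℂ] L := AlgHom.ofLinearMap
  { toFun := fun x =>
      { coeff := fun k => ((b ^ (-k) : ℂˣ) : ℂ) * x.coeff k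
        isPWO_support' := x.isPWO_support.mono (by
          intro k hk
          exact right_ne_zero_of_mul hk) }
    map_add' := fun x y => by ext k; simp [mul_add]
    map_smul' := fun c x => by ext k; simp; ring }
  (by
    ext k
    by_cases hk : k = 0
    · subst hk; simp
    · simp [HahnSeries.coeff_one, hk])
  (by
    intro x y
    obtain ⟨a, ha⟩ := exists_VB x
    obtain ⟨c, hc⟩ := exists_VB y
    ext r
    rw [coeff_mul_Icc (a := a) (b := c)]
    · simp only [LinearMap.coe_mk, AddHom.coe_mk]
      rw [coeff_mul_Icc ha hc, Finset.mul_sum]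
      refine Finset.sum_congr rfl fun i _ => ?_
      have : b ^ (-r) = b ^ (-i) * b ^ (-(r - i)) := by
        rw [← zpow_add]; congr 1; ring
      rw [this]
      push_cast
      ring
    · intro j hj
      simp [ha j hj]
    · intro j hj
      simp [hc j hj])

theorem resc_coeff (b : ℂˣ) (x : L) (k : ℤ) :
    (resc b x).coeff k = ((b ^ (-k) : ℂˣ) : ℂ) * x.coeff k := rfl

/-- The substitution `w ↦ w ^ N` for `N > 0`. -/
def powSubst (N : ℕ) (hN : 0 < N) : L →ₐ[ℂ] L :=
  HahnSeries.embDomainAlgHom (AddMonoidHom.mulLeft (N : ℤ))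
    (fun a b h => by
      have hN' : (N : ℤ) ≠ 0 := by positivity
      exact mul_left_cancel₀ hN' h)
    (fun a b => by
      have hN' : (0 : ℤ) < N := by positivity
      simpa using mul_le_mul_iff_right₀ hN')

theorem powSubst_coeff_mul (N : ℕ) (hN : 0 < N) (x : L) (k : ℤ) :
    (powSubst N hN x).coeff (N * k) = x.coeff k := by
  exact HahnSeries.embDomain_coeff

theorem powSubst_coeff_of_not_dvd (N : ℕ) (hN : 0 < N) (x : L) (k : ℤ) (hk : ¬ (N : ℤ) ∣ k) :
    (powSubst N hN x).coeff k = 0 := by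
  apply HahnSeries.embDomain_of_notMem_range
  rintro ⟨j, rfl⟩
  exact hk ⟨j, rfl⟩

/-- The substitution `w ↦ b w ^ N`, as an algebra endomorphism of the Laurent series at infinity. -/
def wsub (b : ℂˣ) (N : ℕ) (hN : 0 < N) : L →ₐ[ℂ] L := (powSubst N hN).comp (resc b)

theorem wsub_coeff_mul (b : ℂˣ) (N : ℕ) (hN : 0 < N) (x : L) (k : ℤ) :
    (wsub b N hN x).coeff (N * k) = ((b ^ (-k) : ℂˣ) : ℂ) * x.coeff k := by
  rw [wsub, AlgHom.comp_apply, powSubst_coeff_mul, resc_coeff]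

theorem wsub_coeff_of_not_dvd (b : ℂˣ) (N : ℕ) (hN : 0 < N) (x : L) (k : ℤ) (hk : ¬ (N : ℤ) ∣ k) :
    (wsub b N hN x).coeff k = 0 :=
  powSubst_coeff_of_not_dvd N hN _ k hk

theorem wsub_wsub (b c : ℂˣ) (N M : ℕ) (hN : 0 < N) (hM : 0 < M) (x : L) :
    wsub b N hN (wsub c M hM x) = wsub (c * b ^ M) (N * M) (Nat.mul_pos hN hM) x := by
  ext k
  by_cases hk : (N : ℤ) ∣ k
  · obtain ⟨k, rfl⟩ := hk
    rw [wsub_coeff_mul]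
    by_cases hk : (M : ℤ) ∣ k
    · obtain ⟨k, rfl⟩ := hk
      rw [wsub_coeff_mul, ← mul_assoc, ← mul_assoc, ← Nat.cast_mul, wsub_coeff_mul, mul_zpow,
        Units.val_mul, mul_comm (((c ^ (-k) : ℂˣ)) : ℂ), ← zpow_natCast, ← zpow_mul]
      simp
    · rw [wsub_coeff_of_not_dvd _ _ _ _ _ hk, wsub_coeff_of_not_dvd, mul_zero]
      push_cast
      have hN' : (N : ℤ) ≠ 0 := by positivity
      rwa [mul_dvd_mul_iff_left hN']
  · rw [wsub_coeff_of_not_dvd _ _ _ _ _ hk, wsub_coeff_of_not_dvd]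
    push_cast
    exact fun h => hk (dvd_of_mul_right_dvd h)

theorem wsub_eq_of_eq {b c : ℂˣ} {N M : ℕ} (hN : 0 < N) (hM : 0 < M) (h : b = c) (h' : N = M)
    (x : L) : wsub b N hN x = wsub c M hM x := by
  subst h h'; rfl

theorem wsub_injective (b : ℂˣ) (N : ℕ) (hN : 0 < N) : Function.Injective (wsub b N hN) :=
  (wsub b N hN).toRingHom.injective

/-- The derivation `w d/dw`. -/
def D : Derivation ℂ L L := Derivation.mk'
  { toFun := fun x =>
      { coeff := fun k => (-k : ℂ) * x.coeff k
        isPWO_support' := x.isPWO_support.mono (by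
          intro k hk
          exact right_ne_zero_of_mul hk) }
    map_add' := fun x y => by ext k; simp; ring
    map_smul' := fun c x => by ext k; simp; ring }
  (by
    intro x y
    obtain ⟨a, ha⟩ := exists_VB x
    obtain ⟨c, hc⟩ := exists_VB y
    ext r
    simp only [LinearMap.coe_mk, AddHom.coe_mk, smul_eq_mul, HahnSeries.coeff_add]
    rw [coeff_mul_Icc ha hc, mul_comm y, coeff_mul_Icc (a := a) (b := c) ha,
      coeff_mul_Icc (a := a) (b := c) _ hc, Finset.mul_sum, ← Finset.sum_add_distrib]
    · refine Finset.sum_congr rfl fun i _ => ?_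
      simp only
      push_cast
      ring
    · intro j hj
      simp [ha j hj]
    · intro j hj
      simp [hc j hj])

theorem D_coeff (x : L) (k : ℤ) : (D x).coeff k = (-k : ℂ) * x.coeff k := rfl

theorem D_wsub (b : ℂˣ) (N : ℕ) (hN : 0 < N) (x : L) :
    D (wsub b N hN x) = (N : ℂ) • wsub b N hN (D x) := by
  ext k
  rw [D_coeff, HahnSeries.coeff_smul]
  by_cases hk : (N : ℤ) ∣ k
  · obtain ⟨k, rfl⟩ := hk
    rw [wsub_coeff_mul, wsub_coeff_mul, D_coeff, smul_eq_mul]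
    push_cast
    ring
  · rw [wsub_coeff_of_not_dvd _ _ _ _ _ hk, wsub_coeff_of_not_dvd _ _ _ _ _ hk]
    simp

theorem smul_eq (c : ℂ) (x : L) : c • x = algebraMap ℂ L c * x := by
  rw [HahnSeries.algebraMap_apply]
  exact HahnSeries.single_zero_mul_eq_smul.symm

/-- `LT x k c`: the series `x` is `c t^k` plus terms of higher order in `t = 1/w`; `c = 0` is
allowed. -/
def LT (x : L) (k : ℤ) (c : ℂ) : Prop := VB x k ∧ x.coeff k = c

theorem LT.mul {x y : L} {k l : ℤ} {c d : ℂ} (hx : LT x k c) (hy : LT y l d) :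
    LT (x * y) (k + l) (c * d) := by
  refine ⟨fun j hj => ?_, ?_⟩
  · rw [coeff_mul_Icc hx.1 hy.1, Finset.Icc_eq_empty (by omega), Finset.sum_empty]
  · rw [coeff_mul_Icc hx.1 hy.1, show k + l - l = k by ring, Finset.Icc_self,
      Finset.sum_singleton, hx.2, show k + l - k = l by ring, hy.2]

theorem LT.one : LT 1 0 1 := by
  refine ⟨fun j hj => ?_, ?_⟩
  · rw [HahnSeries.coeff_one, if_neg hj.ne]
  · simp [HahnSeries.coeff_one]

theorem LT.zero (k : ℤ) : LT 0 k 0 := ⟨fun j _ => by simp, by simp⟩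

theorem LT.add {x y : L} {k : ℤ} {c d : ℂ} (hx : LT x k c) (hy : LT y k d) :
    LT (x + y) k (c + d) :=
  ⟨fun j hj => by simp [hx.1 j hj, hy.1 j hj], by simp [hx.2, hy.2]⟩

theorem LT.sub {x y : L} {k : ℤ} {c d : ℂ} (hx : LT x k c) (hy : LT y k d) :
    LT (x - y) k (c - d) :=
  ⟨fun j hj => by simp [hx.1 j hj, hy.1 j hj], by simp [hx.2, hy.2]⟩

theorem LT.smul {x : L} {k : ℤ} {c : ℂ} (hx : LT x k c) (a : ℂ) : LT (a • x) k (a * c) :=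
  ⟨fun j hj => by simp [hx.1 j hj], by simp [hx.2]⟩

theorem LT.pow {x : L} {k : ℤ} {c : ℂ} (hx : LT x k c) (n : ℕ) : LT (x ^ n) (n * k) (c ^ n) := by
  induction n with
  | zero => simpa using LT.one
  | succ n ih =>
    have := ih.mul hx
    rw [pow_succ, pow_succ]
    convert this using 1
    push_cast; ring

theorem LT.mono {x : L} {k l : ℤ} {c : ℂ} (hx : LT x k c) (h : l < k) : LT x l 0 :=
  ⟨fun j hj => hx.1 j (hj.trans h), hx.1 l h⟩

theorem LT.sum {ι : Type*} (s : Finset ι) (x : ι → L) (k : ℤ) (c : ι → ℂ)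
    (h : ∀ i ∈ s, LT (x i) k (c i)) : LT (∑ i ∈ s, x i) k (∑ i ∈ s, c i) := by
  classical
  induction s using Finset.induction_on with
  | empty => simpa using LT.zero k
  | insert a s ha ih =>
    rw [Finset.sum_insert ha, Finset.sum_insert ha]
    exact (h a (Finset.mem_insert_self _ _)).add
      (ih fun i hi => h i (Finset.mem_insert_of_mem hi))

theorem LT.ne_zero {x : L} {k : ℤ} {c : ℂ} (hx : LT x k c) (hc : c ≠ 0) : x ≠ 0 := by
  rintro rfl
  exact hc (by simpa using hx.2.symm)

theorem LT.unique {x : L} {k l : ℤ} {c d : ℂ} (hx : LT x k c) (hc : c ≠ 0) (hy : LT x l d)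
    (hd : d ≠ 0) : k = l := by
  rcases lt_trichotomy k l with h | h | h
  · exact absurd (hx.2.symm.trans (hy.1 k h)) hc
  · exact h
  · exact absurd (hy.2.symm.trans (hx.1 l h)) hd

theorem exists_LT {x : L} (hx : x ≠ 0) : ∃ k c, c ≠ 0 ∧ LT x k c :=
  ⟨x.order, x.coeff x.order, fun h => hx (by simpa using h),
    fun _ hj => HahnSeries.coeff_eq_zero_of_lt_order hj, rfl⟩

/-- A linear combination, with the coefficients of `P`, of series whose orders are larger than that
of the last one. -/
theorem LT.poly_sum (P : ℂ[X]) (y : ℕ → L) (e : ℤ) (c : ℂ)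
    (hn : LT (y P.natDegree) e c) (hlt : ∀ i < P.natDegree, LT (y i) e 0) :
    LT (∑ i ∈ Finset.range (P.natDegree + 1), P.coeff i • y i) e (P.leadingCoeff * c) := by
  rw [Finset.sum_range_succ]
  have h1 := LT.sum (Finset.range P.natDegree) (fun i => P.coeff i • y i) e
    (fun i => P.coeff i * 0) (fun i hi => (hlt i (Finset.mem_range.1 hi)).smul _)
  simpa using h1.add (hn.smul (P.coeff P.natDegree))

theorem LT.aeval {x : L} {k : ℤ} {c : ℂ} (hx : LT x k c) (hk : k < 0) (P : ℂ[X]) :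
    LT (aeval x P) (P.natDegree * k) (P.leadingCoeff * c ^ P.natDegree) := by
  rw [aeval_eq_sum_range]
  refine LT.poly_sum P (fun i => x ^ i) _ _ (hx.pow _) fun i hi => (hx.pow i).mono ?_
  have : (i : ℤ) < P.natDegree := by exact_mod_cast hi
  nlinarith

theorem LT_wsub {b : ℂˣ} {N : ℕ} (hN : 0 < N) {x : L} {k : ℤ} {c : ℂ} (hx : LT x k c) :
    LT (wsub b N hN x) (N * k) (((b ^ (-k) : ℂˣ) : ℂ) * c) := by
  refine ⟨fun j hj => ?_, ?_⟩
  · by_cases hd : (N : ℤ) ∣ j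
    · obtain ⟨j, rfl⟩ := hd
      rw [wsub_coeff_mul, hx.1 j, mul_zero]
      have : (0 : ℤ) < N := by exact_mod_cast hN
      exact lt_of_mul_lt_mul_left hj this.le
    · exact wsub_coeff_of_not_dvd _ _ _ _ _ hd
  · rw [wsub_coeff_mul, hx.2]

/-- First order expansion of `P x - P y` for series `x`, `y` with the same leading term. -/
theorem LT.aeval_sub {x y : L} {m k : ℤ} {μ c : ℂ} (hx : LT x (-m) μ) (hy : LT y (-m) μ)
    (hm : 0 < m) (hxy : LT (x - y) k c) (P : ℂ[X]) :
    LT (Polynomial.aeval x P - Polynomial.aeval y P) (k - m * (P.natDegree - 1))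
      (P.leadingCoeff * (P.natDegree * μ ^ (P.natDegree - 1) * c)) := by
  have key : ∀ i : ℕ, LT (x ^ i - y ^ i) (k - m * (i - 1)) (i * μ ^ (i - 1) * c) := by
    intro i
    induction i with
    | zero => simpa using LT.zero (k + m)
    | succ i ih =>
      have h1 : x ^ (i + 1) - y ^ (i + 1) = x ^ i * (x - y) + (x ^ i - y ^ i) * y := by ring
      rw [h1]
      have h2 := (hx.pow i).mul hxy
      have h3 := ih.mul hy
      have e2 : (i : ℤ) * -m + k = k - m * (((i + 1 : ℕ) : ℤ) - 1) := by push_cast; ring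
      have e3 : k - m * ((i : ℤ) - 1) + -m = k - m * (((i + 1 : ℕ) : ℤ) - 1) := by push_cast; ring
      rw [e2] at h2
      rw [e3] at h3
      convert h2.add h3 using 1
      rcases i with _ | i
      · simp
      · simp; ring
  rw [aeval_eq_sum_range, aeval_eq_sum_range, ← Finset.sum_sub_distrib,
    Finset.sum_congr rfl fun i _ => (smul_sub (P.coeff i) (x ^ i) (y ^ i)).symm]
  refine LT.poly_sum P (fun i => x ^ i - y ^ i) _ _ (key _) fun i hi => (key i).mono ?_
  have : (i : ℤ) < P.natDegree := by exact_mod_cast hi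
  nlinarith

/-- A polynomial in a series of negative order is never a nonzero series of positive order. -/
theorem eq_zero_of_aeval_VB {β : L} {c : ℂ} (hβ : LT β (-1) c) (hc : c ≠ 0) {P : ℂ[X]}
    (h : VB (aeval β P) 1) : P = 0 := by
  by_contra hP
  have h1 := hβ.aeval (by norm_num) P
  have h2 : P.leadingCoeff * c ^ P.natDegree ≠ 0 :=
    mul_ne_zero (leadingCoeff_ne_zero.2 hP) (pow_ne_zero _ hc)
  apply h2
  rw [← h1.2]
  exact h _ (by
    have : (0 : ℤ) ≤ P.natDegree := by positivity
    linarith)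

theorem eq_zero_of_aeval_eq_zero {β : L} {c : ℂ} (hβ : LT β (-1) c) (hc : c ≠ 0) {P : ℂ[X]}
    (h : aeval β P = 0) : P = 0 :=
  eq_zero_of_aeval_VB hβ hc (by rw [h]; exact fun _ _ => rfl)

/-! ### The inverse Böttcher series -/

/-- One step of the iteration producing the inverse Böttcher series of `A`; its fixed points are
the solutions of `A(x(w)) = x(w^n)`. -/
def step (A : ℂ[X]) (hn : 0 < A.natDegree) (x : L) : L :=
  x - HahnSeries.single ((A.natDegree : ℤ) - 1) (1 / (A.natDegree : ℂ)) *
    (aeval x A - wsub 1 A.natDegree hn x)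

theorem LT.single_mul {x : L} {k : ℤ} {c : ℂ} (hx : LT x k c) (a : ℤ) (r : ℂ) :
    LT (HahnSeries.single a r * x) (a + k) (r * c) := by
  refine LT.mul ⟨fun j hj => ?_, ?_⟩ hx
  · exact HahnSeries.coeff_single_of_ne hj.ne
  · exact HahnSeries.coeff_single_same _ _

theorem VB.LT {x : L} {k : ℤ} (h : VB x k) : LT x k (x.coeff k) := ⟨h, rfl⟩

theorem LT.VB_succ {x : L} {k : ℤ} (h : LT x k 0) : VB x (k + 1) := by
  intro j hj
  rcases (Int.lt_add_one_iff.1 hj).lt_or_eq with h1 | h1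
  · exact h.1 j h1
  · rw [h1]; exact h.2

/-- The step is a contraction for the `t`-adic topology. -/
theorem step_contract (A : ℂ[X]) (hA : 2 ≤ A.natDegree) (hn : 0 < A.natDegree) {lam : ℂ}
    (hl : A.leadingCoeff * lam ^ (A.natDegree - 1) = 1) {x y : L} (hx : LT x (-1) lam)
    (hy : LT y (-1) lam) {k : ℕ} (hxy : VB (x - y) k) :
    VB (step A hn x - step A hn y) (k + 1 : ℕ) := by
  push_cast
  apply LT.VB_succ
  have e : step A hn x - step A hn y = (x - y) -
      HahnSeries.single ((A.natDegree : ℤ) - 1) (1 / (A.natDegree : ℂ)) *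
        (aeval x A - aeval y A) +
      HahnSeries.single ((A.natDegree : ℤ) - 1) (1 / (A.natDegree : ℂ)) *
        wsub 1 A.natDegree hn (x - y) := by
    rw [step, step, map_sub]; ring
  rw [e]
  have h1 := hxy.LT
  have h2 := (LT.aeval_sub hx hy (by norm_num) h1 A).single_mul ((A.natDegree : ℤ) - 1)
    (1 / (A.natDegree : ℂ))
  have h3 := (LT_wsub (b := 1) hn h1).single_mul ((A.natDegree : ℤ) - 1) (1 / (A.natDegree : ℂ))
  have h4 := h3.mono (l := k) (by
    have : (2 : ℤ) ≤ A.natDegree := by exact_mod_cast hA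
    have : (0 : ℤ) ≤ k := by positivity
    nlinarith)
  have e2 : (A.natDegree : ℤ) - 1 + ((k : ℤ) - 1 * ((A.natDegree : ℤ) - 1)) = k := by ring
  rw [e2] at h2
  have h5 := (h1.sub h2).add h4
  convert h5 using 1
  have : (A.natDegree : ℂ) ≠ 0 := by exact_mod_cast hn.ne'
  have e3 : A.leadingCoeff * ((A.natDegree : ℂ) * lam ^ (A.natDegree - 1) * (x - y).coeff k)
    = A.natDegree * (x - y).coeff k := by
    rw [← mul_one (A.natDegree * (x - y).coeff k), ← hl]; ring
  rw [e3]
  field_simp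
  ring

theorem exists_bottcher (A : ℂ[X]) (hA : 2 ≤ A.natDegree) (hn : 0 < A.natDegree) :
    ∃ (β : L) (lam : ℂ), A.leadingCoeff * lam ^ (A.natDegree - 1) = 1 ∧ LT β (-1) lam ∧
      aeval β A = wsub 1 A.natDegree hn β := by
  have hA0 : A.leadingCoeff ≠ 0 := by
    rw [leadingCoeff_ne_zero]; rintro rfl; simp at hn
  obtain ⟨lam, hlam⟩ := IsAlgClosed.exists_pow_nat_eq (A.leadingCoeff⁻¹)
    (show 0 < A.natDegree - 1 by omega)
  have hl : A.leadingCoeff * lam ^ (A.natDegree - 1) = 1 := by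
    rw [hlam, mul_inv_cancel₀ hA0]
  have hl' : A.leadingCoeff * lam ^ A.natDegree = lam := by
    obtain ⟨k, hk⟩ : ∃ k, A.natDegree = k + 1 := ⟨A.natDegree - 1, by omega⟩
    rw [hk] at hl ⊢
    rw [pow_succ, ← mul_assoc]
    simp only [Nat.add_sub_cancel] at hl
    rw [hl, one_mul]
  have hstep : ∀ x : L, LT x (-1) lam → VB (step A hn x - x) 0 := by
    intro x hx
    have h1 := hx.aeval (by norm_num) A
    have h2 := LT_wsub (b := 1) hn hx
    rw [hl'] at h1
    have h3 := h1.sub h2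
    simp only [one_zpow, Units.val_one, one_mul, sub_self] at h3
    have h4 := (h3.VB_succ.LT).single_mul ((A.natDegree : ℤ) - 1) (-(1 / (A.natDegree : ℂ)))
    have e : step A hn x - x =
      HahnSeries.single ((A.natDegree : ℤ) - 1) (-(1 / (A.natDegree : ℂ))) *
        (aeval x A - wsub 1 A.natDegree hn x) := by
      rw [step, HahnSeries.single_neg]; ring
    rw [e]
    have := h4.1
    convert this using 1
    ring
  have hLT : ∀ x : L, LT x (-1) lam → LT (step A hn x) (-1) lam := by
    intro x hx
    have h1 : LT (step A hn x - x) (-1) 0 := (hstep x hx).LT.mono (by norm_num)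
    simpa using h1.add hx
  set x : ℕ → L := fun j => (step A hn)^[j] (HahnSeries.single (-1) lam) with hxdef
  have hxs : ∀ j, x (j + 1) = step A hn (x j) := fun j =>
    Function.iterate_succ_apply' _ _ _
  have hxLT : ∀ j, LT (x j) (-1) lam := by
    intro j
    induction j with
    | zero =>
      exact ⟨fun j hj => HahnSeries.coeff_single_of_ne hj.ne, HahnSeries.coeff_single_same _ _⟩
    | succ j ih => rw [hxs]; exact hLT _ ih
  have hx1 : ∀ j : ℕ, VB (x (j + 1) - x j) j := by
    intro j
    induction j with
    | zero => rw [hxs]; exact hstep _ (hxLT 0)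
    | succ j ih =>
      rw [hxs, hxs j] 
      have := step_contract A hA hn hl (hxLT (j + 1)) (hxLT j) ih
      rwa [hxs j] at this
  have hx2 : ∀ (j i : ℕ) (k : ℤ), k < j → (x (j + i)).coeff k = (x j).coeff k := by
    intro j i k hk
    induction i with
    | zero => rfl
    | succ i ih =>
      rw [← ih]
      have := hx1 (j + i) k (by push_cast; linarith [Int.natCast_nonneg i])
      rw [HahnSeries.coeff_sub, sub_eq_zero] at this
      exact this
  let β : L :=
    { coeff := fun k => (x (k + 1).toNat).coeff k
      isPWO_support' := (show BddBelow _ from ⟨-1, fun k hk => by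
        by_contra h
        exact hk ((hxLT _).1 k (not_le.1 h))⟩).isWF.isPWO }
  have hβx : ∀ j : ℕ, VB (β - x j) j := by
    intro j k hk
    rw [HahnSeries.coeff_sub, sub_eq_zero]
    change (x (k + 1).toNat).coeff k = _
    obtain ⟨i, hi⟩ : ∃ i, j = (k + 1).toNat + i := ⟨j - (k+1).toNat, by omega⟩
    rw [hi]
    exact (hx2 _ i k (by omega)).symm
  have hβ : LT β (-1) lam := by
    have h1 : LT (β - x 0) (-1) 0 := (hβx 0).LT.mono (by norm_num)
    simpa using h1.add (hxLT 0)
  refine ⟨β, lam, hl, hβ, ?_⟩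
  have hfix : step A hn β = β := by
    ext k
    obtain ⟨j, hj⟩ : ∃ j : ℕ, k < (j + 1 : ℕ) := ⟨k.toNat, by omega⟩
    have h1 := step_contract A hA hn hl hβ (hxLT j) (hβx j) k hj
    have h2 := hβx (j + 1) k hj
    rw [← hxs] at h1
    rw [HahnSeries.coeff_sub, sub_eq_zero] at h1 h2
    rw [h1, h2]
  rw [step, sub_eq_self] at hfix
  have hne : (HahnSeries.single ((A.natDegree : ℤ) - 1) (1 / (A.natDegree : ℂ)) : L) ≠ 0 := by
    apply HahnSeries.single_ne_zero
    have : (A.natDegree : ℂ) ≠ 0 := by exact_mod_cast hn.ne'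
    exact one_div_ne_zero this
  exact sub_eq_zero.1 ((mul_eq_zero.1 hfix).resolve_left hne)

/-! ### Commuting polynomials in the Böttcher coordinate -/

theorem aeval_wsub (b : ℂˣ) (N : ℕ) (hN : 0 < N) (x : L) (P : ℂ[X]) :
    aeval (wsub b N hN x) P = wsub b N hN (aeval x P) :=
  Polynomial.aeval_algHom_apply _ _ _

/-- A polynomial commuting with `A` becomes a monomial map `w ↦ b w ^ m` in the Böttcher
coordinate of `A`. -/
theorem exists_wsub_of_commute {A B : ℂ[X]} (hA : 2 ≤ A.natDegree) (hn : 0 < A.natDegree)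
    (hm : 0 < B.natDegree) (hcomm : A.comp B = B.comp A) {β : L} {lam : ℂ}
    (hl : A.leadingCoeff * lam ^ (A.natDegree - 1) = 1) (hβ : LT β (-1) lam)
    (hAβ : aeval β A = wsub 1 A.natDegree hn β) :
    ∃ b : ℂˣ, b ^ A.natDegree = b ∧ aeval β B = wsub b B.natDegree hm β := by
  have hlam : lam ≠ 0 := by
    rintro rfl
    rw [zero_pow (by omega), mul_zero] at hl
    exact zero_ne_one hl
  have hA0 : A.leadingCoeff ≠ 0 := left_ne_zero_of_mul (hl.trans_ne one_ne_zero)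
  have hB0 : B.leadingCoeff ≠ 0 := by
    rw [leadingCoeff_ne_zero]; rintro rfl; simp at hm
  have hl' : A.leadingCoeff * lam ^ A.natDegree = lam := by
    rw [← Nat.sub_add_cancel (show 1 ≤ A.natDegree by omega), pow_succ, ← mul_assoc, hl, one_mul]
  set b0 : ℂ := B.leadingCoeff * lam ^ B.natDegree * lam⁻¹ with hb0
  have hb0' : b0 ≠ 0 := mul_ne_zero (mul_ne_zero hB0 (pow_ne_zero _ hlam)) (inv_ne_zero hlam)
  have hγ : LT (aeval β B) (-(B.natDegree : ℤ)) (b0 * lam) := by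
    have := hβ.aeval (by norm_num) B
    rw [mul_neg_one] at this
    convert this using 1
    rw [hb0, inv_mul_cancel_right₀ hlam]
  have hγA : aeval (aeval β B) A = wsub 1 A.natDegree hn (aeval β B) := by
    rw [← aeval_comp, hcomm, aeval_comp, hAβ, aeval_wsub]
  have hbn : b0 ^ A.natDegree = b0 := by
    have h1 := hγ.aeval (by simpa using hm) A
    have h2 := LT_wsub (b := 1) hn hγ
    rw [hγA] at h1
    have h3 := h1.2.symm.trans h2.2
    simp only [one_zpow, Units.val_one, one_mul] at h3
    rw [mul_pow, mul_left_comm, hl'] at h3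
    exact mul_right_cancel₀ hlam h3
  let b : ℂˣ := Units.mk0 b0 hb0'
  have hb : b ^ A.natDegree = b := by
    ext; simpa [b] using hbn
  refine ⟨b, hb, ?_⟩
  have hγ' : LT (wsub b B.natDegree hm β) (-(B.natDegree : ℤ)) (b0 * lam) := by
    have := LT_wsub (b := b) hm hβ
    rw [mul_neg_one] at this
    simpa [b] using this
  have hγA' : aeval (wsub b B.natDegree hm β) A =
      wsub 1 A.natDegree hn (wsub b B.natDegree hm β) := by
    rw [aeval_wsub, hAβ, wsub_wsub, wsub_wsub]
    exact wsub_eq_of_eq _ _ (by simp [hb]) (mul_comm _ _) _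
  by_contra hne
  obtain ⟨k, c, hc, hkc⟩ := exists_LT (sub_ne_zero.2 hne)
  have hk : -(B.natDegree : ℤ) < k := by
    by_contra hk
    apply hc
    rw [← hkc.2]
    have h1 := hγ.sub hγ'
    rw [sub_self] at h1
    exact h1.VB_succ _ (by omega)
  have h1 := LT.aeval_sub hγ hγ' (by exact_mod_cast hm) hkc A
  rw [hγA, hγA', ← map_sub] at h1
  have h2 := LT_wsub (b := 1) hn hkc
  have hn' : (A.natDegree : ℂ) ≠ 0 := by exact_mod_cast hn.ne'
  have h3 := h1.unique (mul_ne_zero hA0 (mul_ne_zero (mul_ne_zero hn'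
    (pow_ne_zero _ (mul_ne_zero hb0' hlam))) hc)) h2 (by simpa using hc)
  have hA2 : (2 : ℤ) ≤ A.natDegree := by exact_mod_cast hA
  nlinarith

theorem iterate_wsub {P : ℂ[X]} {β : L} {b : ℂˣ} {N : ℕ} (hN : 0 < N)
    (h : aeval β P = wsub b N hN β) (k : ℕ) :
    ∃ (Q : ℂ[X]) (c : ℂˣ), aeval β Q = wsub c (N ^ k) (pow_pos hN k) β := by
  induction k with
  | zero =>
    refine ⟨X, 1, ?_⟩
    ext j
    have := wsub_coeff_mul 1 1 one_pos β j
    simp only [one_zpow, Units.val_one, one_mul, Nat.cast_one] at this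
    simp [aeval_X, this]
  | succ k ih =>
    obtain ⟨Q, c, hQ⟩ := ih
    refine ⟨Q.comp P, c * b ^ (N ^ k), ?_⟩
    rw [aeval_comp, h, aeval_wsub, hQ, wsub_wsub]
    exact wsub_eq_of_eq _ _ rfl (by rw [pow_succ, mul_comm]) _

/-- Every Laurent series has a polynomial part with respect to `β`. -/
theorem exists_poly_part {β : L} {lam : ℂ} (hβ : LT β (-1) lam) (hlam : lam ≠ 0) (x : L) :
    ∃ S : ℂ[X], VB (aeval β S - x) 1 := by
  have key : ∀ (k : ℕ) (x : L), VB x (1 - k) → ∃ S : ℂ[X], VB (aeval β S - x) 1 := by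
    intro k
    induction k with
    | zero =>
      intro x hx
      refine ⟨0, fun j hj => ?_⟩
      simp [hx j (by simpa using hj)]
    | succ k ih =>
      intro x hx
      have e : (1 - ((k + 1 : ℕ) : ℤ)) = k * -1 := by push_cast; ring
      rw [e] at hx
      set c := x.coeff (k * -1) / lam ^ k with hc
      have h1 := ((hβ.pow k).smul (-c)).add hx.LT
      have h2 : -c * lam ^ k + x.coeff (k * -1) = 0 := by
        rw [hc]; field_simp; ring
      rw [h2] at h1
      obtain ⟨S, hS⟩ := ih _ (by
        have := h1.VB_succ
        convert this using 1
        ring)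
      refine ⟨S + C c * X ^ k, ?_⟩
      convert hS using 1
      rw [map_add, map_mul, map_pow, aeval_X, aeval_C, smul_eq, map_neg]
      ring
  obtain ⟨k, hk⟩ := exists_VB x
  refine key (1 - k).toNat x fun j hj => hk j ?_
  omega

/-- The left factor when the degree `n` of `A` divides the degree `m` of `B`: let `S` be the
polynomial part, in powers of `β`, of the series `β(b w ^ (m / n))`. The polynomial `S ∘ A - B`
vanishes at infinity, so it is zero; hence `S(β)` equals that series, and `A ∘ S = B`. -/
theorem left_factor_of_dvd {A B : ℂ[X]} (hn : 0 < A.natDegree)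
    (hm : 0 < B.natDegree) {β : L} {lam : ℂ} (hβ : LT β (-1) lam) (hlam : lam ≠ 0)
    (hAβ : aeval β A = wsub 1 A.natDegree hn β) {b : ℂˣ} (hb : b ^ A.natDegree = b)
    (hBβ : aeval β B = wsub b B.natDegree hm β) (hdvd : A.natDegree ∣ B.natDegree) :
    ∃ S : ℂ[X], B = A.comp S := by
  obtain ⟨q, hq⟩ := hdvd
  have hq0 : 0 < q := Nat.pos_of_ne_zero (by rintro rfl; simp at hq; omega)
  obtain ⟨S, hS⟩ := exists_poly_part hβ hlam (wsub b q hq0 β)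
  refine ⟨S, ?_⟩
  set ε := aeval β S - wsub b q hq0 β with hε
  have h1 : aeval β (S.comp A - B) = wsub 1 A.natDegree hn ε := by
    rw [map_sub, aeval_comp, hAβ, aeval_wsub, hBβ, hε, map_sub, wsub_wsub]
    congr 1
    exact wsub_eq_of_eq _ _ (by simp) hq _
  have h2 : S.comp A - B = 0 := by
    refine eq_zero_of_aeval_VB hβ hlam ?_
    rw [h1]
    intro j hj
    exact (LT_wsub (b := 1) hn hS.LT).1 j (by
      have : (1 : ℤ) ≤ A.natDegree := by exact_mod_cast hn
      linarith)
  have h3 : ε = 0 := by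
    rw [h2, map_zero] at h1
    exact wsub_injective 1 A.natDegree hn (by rw [← h1, map_zero])
  have h4 : aeval β S = wsub b q hq0 β := sub_eq_zero.1 h3
  rw [← sub_eq_zero]
  refine eq_zero_of_aeval_eq_zero hβ hlam ?_
  rw [map_sub, aeval_comp, h4, aeval_wsub, hAβ, wsub_wsub, hBβ, sub_eq_zero]
  exact wsub_eq_of_eq _ _ (by simp [hb]) (by rw [hq, mul_comm]) _

/-! ### Powers of two integers that are close to each other -/

theorem dvd_of_pow_eq_pow {n m k l : ℕ} (hn : 2 ≤ n) (hnm : n ≤ m) (hl : l ≠ 0)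
    (h : n ^ k = m ^ l) : n ∣ m := by
  have hlk : l ≤ k := by
    by_contra! hkl
    have h1 : n ^ k < n ^ l := Nat.pow_lt_pow_right hn hkl
    have h2 : n ^ l ≤ m ^ l := Nat.pow_le_pow_left hnm l
    omega
  rw [← Nat.pow_dvd_pow_iff hl, ← h]
  exact pow_dvd_pow _ hlk

/-- If `log n / log m` is irrational, some powers of `n` and `m` are distinct and relatively
as close as desired. -/
theorem exists_close_pow {n m : ℕ} (hn : 2 ≤ n) (hm : 2 ≤ m)
    (h : ∀ k l : ℕ, k ≠ 0 → l ≠ 0 → n ^ k ≠ m ^ l) (R : ℕ) :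
    ∃ k l : ℕ, n ^ k ≠ m ^ l ∧ (n ^ k < m ^ l → (m ^ l - n ^ k) * R < n ^ k) ∧
      (m ^ l < n ^ k → (n ^ k - m ^ l) * R < m ^ l) := by
  have hn1 : (1 : ℝ) < n := by exact_mod_cast hn
  have hm1 : (1 : ℝ) < m := by exact_mod_cast hm
  have hlm := Real.log_pos hm1
  have hln := Real.log_pos hn1
  have hirr : Irrational (Real.log n / Real.log m) := by
    rintro ⟨q, hq⟩
    have hq0 : (0 : ℝ) < q := by rw [hq]; positivity
    have hq0' : 0 < q := by exact_mod_cast hq0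
    have hnum : 0 < q.num := Rat.num_pos.2 hq0'
    have h1 : (q.den : ℝ) * Real.log n = (q.num.toNat : ℝ) * Real.log m := by
      have h2 : ((q.num.toNat : ℕ) : ℝ) = (q.num : ℝ) := by
        exact_mod_cast Int.toNat_of_nonneg hnum.le
      have h3 : (q : ℝ) * q.den = q.num := by exact_mod_cast Rat.mul_den_eq_num q
      rw [h2, ← h3, hq]
      field_simp
    rw [← Real.log_pow, ← Real.log_pow] at h1
    have h4 := Real.log_injOn_pos (Set.mem_Ioi.2 (by positivity)) (Set.mem_Ioi.2 (by positivity)) h1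
    exact h q.den q.num.toNat q.den_nz (by omega) (by exact_mod_cast h4)
  have hd := dense_addSubgroupClosure_pair_iff.2 hirr
  set ε : ℝ := min (Real.log (1 + 1 / (R + 1))) (Real.log 2) with hε
  have hε0 : 0 < ε := lt_min (Real.log_pos (by
    have : (0 : ℝ) < 1 / (R + 1) := by positivity
    linarith)) (Real.log_pos (by norm_num))
  obtain ⟨x, hx, hx0, hxε⟩ := hd.exists_between hε0
  obtain ⟨k, l, hkl⟩ := AddSubgroup.mem_closure_pair.1 hx
  simp only [zsmul_eq_mul] at hkl
  have hmε : ε ≤ Real.log m :=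
    (min_le_right _ _).trans (Real.log_le_log (by norm_num) (by exact_mod_cast hm))
  have hnε : ε ≤ Real.log n :=
    (min_le_right _ _).trans (Real.log_le_log (by norm_num) (by exact_mod_cast hn))
  -- closeness of the logarithms gives relative closeness of the powers
  have key : ∀ a b : ℕ, 0 < a → Real.log b - Real.log a < ε → 0 < b → a < b → (b - a) * R < a := by
    intro a b ha hab hb hlt
    have ha' : (0 : ℝ) < a := by exact_mod_cast ha
    have hb' : (0 : ℝ) < b := by exact_mod_cast hb
    rw [← Real.log_div hb'.ne' ha'.ne'] at hab
    have h1 := hab.trans_le (min_le_left _ _)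
    have h2 := (Real.log_lt_log_iff (by positivity) (by positivity)).1 h1
    rw [div_lt_iff₀ ha'] at h2
    have h3 : (b - a : ℝ) * (R + 1) < a := by
      have : (b - a : ℝ) < a / (R + 1) := by
        have e : (1 + 1 / (R + 1 : ℝ)) * a = a + a / (R + 1) := by ring
        linarith
      rwa [lt_div_iff₀ (by positivity)] at this
    have h4 : ((b - a : ℕ) : ℝ) * R < a := by
      rw [Nat.cast_sub hlt.le]
      have : (a : ℝ) < b := by exact_mod_cast hlt
      nlinarith
    exact_mod_cast h4
  have hpn : ∀ j, 0 < n ^ j := fun j => pow_pos (by omega) j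
  have hpm : ∀ j, 0 < m ^ j := fun j => pow_pos (by omega) j
  have hlogn : ∀ j : ℕ, Real.log ((n ^ j : ℕ) : ℝ) = j * Real.log n := fun j => by
    rw [Nat.cast_pow, Real.log_pow]
  have hlogm : ∀ j : ℕ, Real.log ((m ^ j : ℕ) : ℝ) = j * Real.log m := fun j => by
    rw [Nat.cast_pow, Real.log_pow]
  rcases le_or_gt k 0 with hk | hk
  · rcases le_or_gt l 0 with hl | hl
    · have hk' : (k : ℝ) ≤ 0 := by exact_mod_cast hk
      have hl' : (l : ℝ) ≤ 0 := by exact_mod_cast hl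
      nlinarith
    · obtain ⟨a, rfl⟩ := Int.eq_ofNat_of_zero_le hl.le
      obtain ⟨b, hb⟩ := Int.eq_ofNat_of_zero_le (show 0 ≤ -k by omega)
      obtain rfl : k = -(b : ℤ) := by omega
      push_cast at hkl
      have h1 : Real.log ((m ^ a : ℕ) : ℝ) - Real.log ((n ^ b : ℕ) : ℝ) = x := by
        rw [hlogn, hlogm]; linarith
      have h2 : n ^ b < m ^ a := by
        have h3 : Real.log ((n ^ b : ℕ) : ℝ) < Real.log ((m ^ a : ℕ) : ℝ) := by linarith
        have := (Real.log_lt_log_iff (by exact_mod_cast hpn b) (by exact_mod_cast hpm a)).1 h3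
        exact_mod_cast this
      exact ⟨b, a, h2.ne, fun _ => key _ _ (hpn b) (by linarith) (hpm a) h2, fun h => by omega⟩
  · rcases le_or_gt l 0 with hl | hl
    · obtain ⟨a, rfl⟩ := Int.eq_ofNat_of_zero_le hk.le
      obtain ⟨b, hb⟩ := Int.eq_ofNat_of_zero_le (show 0 ≤ -l by omega)
      obtain rfl : l = -(b : ℤ) := by omega
      push_cast at hkl
      have h1 : Real.log ((n ^ a : ℕ) : ℝ) - Real.log ((m ^ b : ℕ) : ℝ) = x := by
        rw [hlogn, hlogm]; linarith
      have h2 : m ^ b < n ^ a := by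
        have h3 : Real.log ((m ^ b : ℕ) : ℝ) < Real.log ((n ^ a : ℕ) : ℝ) := by linarith
        have := (Real.log_lt_log_iff (by exact_mod_cast hpm b) (by exact_mod_cast hpn a)).1 h3
        exact_mod_cast this
      exact ⟨a, b, h2.ne', fun h => by omega, fun _ => key _ _ (hpm b) (by linarith) (hpn a) h2⟩
    · have hk' : (1 : ℝ) ≤ k := by exact_mod_cast hk
      have hl' : (1 : ℝ) ≤ l := by exact_mod_cast hl
      nlinarith

/-- The commuting pair `A`, `B` yields polynomials that are monomial maps in the Böttcher
coordinate with distinct exponents which are relatively as close as desired. -/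
theorem exists_close_iterates {A B : ℂ[X]} {β : L} {n m : ℕ} (hn : 2 ≤ n) (hm : 2 ≤ m)
    {a b : ℂˣ} (hA : aeval β A = wsub a n (by omega) β) (hB : aeval β B = wsub b m (by omega) β)
    (h : ∀ k l : ℕ, k ≠ 0 → l ≠ 0 → n ^ k ≠ m ^ l) (R : ℕ) :
    ∃ (P Q : ℂ[X]) (c d : ℂˣ) (N M : ℕ) (hN : 0 < N) (hM : 0 < M), N < M ∧ (M - N) * R < N ∧
      aeval β P = wsub c N hN β ∧ aeval β Q = wsub d M hM β := by
  obtain ⟨k, l, hne, h1, h2⟩ := exists_close_pow hn hm h R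
  obtain ⟨P, c, hP⟩ := iterate_wsub (by omega) hA k
  obtain ⟨Q, d, hQ⟩ := iterate_wsub (by omega) hB l
  rcases lt_or_gt_of_ne hne with hlt | hlt
  · exact ⟨P, Q, c, d, _, _, _, _, hlt, h1 hlt, hP, hQ⟩
  · exact ⟨Q, P, d, c, _, _, _, _, hlt, h2 hlt, hQ, hP⟩

/-! ### An auxiliary relation -/

theorem LT.D {x : L} {k : ℤ} {c : ℂ} (hx : LT x k c) : LT (D x) k (-k * c) := by
  refine ⟨fun j hj => ?_, ?_⟩
  · rw [D_coeff, hx.1 j hj, mul_zero]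
  · rw [D_coeff, hx.2]

theorem VB.mono {x : L} {k l : ℤ} (h : VB x k) (hl : l ≤ k) : VB x l :=
  fun j hj => h j (hj.trans_le hl)

theorem VB_wsub {x : L} {k : ℤ} (h : VB x k) (b : ℂˣ) {N : ℕ} (hN : 0 < N) :
    VB (wsub b N hN x) (N * k) := (LT_wsub hN h.LT).1

/-- Zero estimate. Let `Φ p q = ∑ aᵢ (uᵢ)_p (vᵢ)_q` vanish for `p + q ≤ 0`. If for arbitrarily close
exponents `N < M` the series `∑ aᵢ uᵢ(b w^N) vᵢ(c w^M)` can be of positive order only by being zero,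
then `Φ` vanishes identically: the lexicographically first nonzero `Φ p q`, for the pair
`(p + q, q)`, would be the first nonzero coefficient of that series. -/
theorem Phi_eq_zero {ι : Type*} [Fintype ι] (a : ι → ℂ) (u v : ι → L) (l : ℕ)
    (hu : ∀ i, VB (u i) (-l)) (hv : ∀ i, VB (v i) (-l))
    (h0 : ∀ p q : ℤ, p + q ≤ 0 → ∑ i, a i * ((u i).coeff p * (v i).coeff q) = 0)
    (hG : ∀ R : ℕ, ∃ (b c : ℂˣ) (N M : ℕ) (hN : 0 < N) (hM : 0 < M), N < M ∧ (M - N) * R < N ∧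
      (VB (∑ i, a i • (wsub b N hN (u i) * wsub c M hM (v i))) 1 →
        ∑ i, a i • (wsub b N hN (u i) * wsub c M hM (v i)) = 0)) (p q : ℤ) :
    ∑ i, a i * ((u i).coeff p * (v i).coeff q) = 0 := by
  classical
  set Φ : ℤ → ℤ → ℂ := fun p q => ∑ i, a i * ((u i).coeff p * (v i).coeff q) with hΦ
  change Φ p q = 0
  have hq : ∀ p q, Φ p q ≠ 0 → -(l : ℤ) ≤ q := by
    intro p q h
    by_contra! hlt
    exact h (Finset.sum_eq_zero fun i _ => by rw [hv i q hlt, mul_zero, mul_zero])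
  have hpq : ∀ p q, Φ p q ≠ 0 → 0 < p + q := by
    intro p q h
    by_contra! hle
    exact h (h0 p q hle)
  by_contra hne
  have ex1 : ∃ t : ℕ, ∃ p q, Φ p q ≠ 0 ∧ p + q = t :=
    ⟨(p + q).toNat, p, q, hne, by have := hpq p q hne; omega⟩
  obtain ⟨τ, ⟨p1, q1, h1, h1τ⟩, hτ⟩ : ∃ t : ℕ, (∃ p q, Φ p q ≠ 0 ∧ p + q = t) ∧
      ∀ p q, Φ p q ≠ 0 → (t : ℤ) ≤ p + q :=
    ⟨Nat.find ex1, Nat.find_spec ex1, fun p q h => by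
      have h2 := hpq p q h
      have := Nat.find_min' ex1 (m := (p + q).toNat) ⟨p, q, h, by omega⟩
      omega⟩
  have ex2 : ∃ s : ℕ, Φ (τ - (s - l)) (s - l) ≠ 0 := by
    have h2 := hq p1 q1 h1
    refine ⟨(q1 + l).toNat, ?_⟩
    convert h1 using 2 <;> omega
  obtain ⟨q0, h3, hq0⟩ : ∃ q0, Φ (τ - q0) q0 ≠ 0 ∧ ∀ q, Φ (τ - q) q ≠ 0 → q0 ≤ q :=
    ⟨_, Nat.find_spec ex2, fun q h => by
      have h2 := hq _ q h
      have := Nat.find_min' ex2 (m := (q + l).toNat) (by convert h using 2 <;> omega)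
      omega⟩
  have hq0l := hq _ _ h3
  have hτ1 := hpq _ _ h3
  obtain ⟨b, c, N, M, hN, hM, hNM, hR, hVB⟩ := hG ((q0 + l).toNat + l)
  obtain ⟨e, rfl⟩ := Nat.exists_eq_add_of_lt hNM
  have hR' : ((e : ℤ) + 1) * ((q0 + l) + l) < N := by
    have h4 : N + e + 1 - N = e + 1 := by omega
    rw [h4] at hR
    have h5 : (((q0 + l).toNat : ℕ) : ℤ) = q0 + l := Int.toNat_of_nonneg (by omega)
    rw [← h5]
    exact_mod_cast hR
  set G := ∑ i, a i • (wsub b N hN (u i) * wsub c (N + e + 1) hM (v i)) with hGdef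
  set Θ : ℤ → ℤ → ℂ := fun r j => ∑ i, a i * ((wsub b N hN (u i)).coeff j *
    (wsub c (N + e + 1) hM (v i)).coeff (r - j)) with hΘ
  have hGr : ∀ r, G.coeff r = ∑ j ∈ Finset.Icc ((N : ℤ) * -l) (r - ((N + e + 1 : ℕ) : ℤ) * -l),
      Θ r j := by
    intro r
    rw [hGdef, HahnSeries.coeff_sum, hΘ, Finset.sum_comm]
    refine Finset.sum_congr rfl fun i _ => ?_
    rw [HahnSeries.coeff_smul, coeff_mul_Icc (VB_wsub (hu i) b hN) (VB_wsub (hv i) c hM),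
      smul_eq_mul, Finset.mul_sum]
  -- the only indices that contribute are of the form `r = N p + M q`
  have hΘ0 : ∀ r j, Θ r j ≠ 0 → ∃ p q : ℤ, j = N * p ∧ r - j = ((N + e + 1 : ℕ) : ℤ) * q ∧
      Φ p q ≠ 0 := by
    intro r j h
    by_cases hj : (N : ℤ) ∣ j
    · by_cases hj' : ((N + e + 1 : ℕ) : ℤ) ∣ r - j
      · obtain ⟨p, hp⟩ := hj
        obtain ⟨q, hq⟩ := hj'
        refine ⟨p, q, hp, hq, fun h4 => h ?_⟩
        have : Θ r j = ((b ^ (-p) : ℂˣ) : ℂ) * ((c ^ (-q) : ℂˣ) : ℂ) * Φ p q := by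
          simp only [hΘ, hΦ, hp, Finset.mul_sum]
          refine Finset.sum_congr rfl fun i _ => ?_
          rw [← hp, hq, hp, wsub_coeff_mul, wsub_coeff_mul]
          ring
        rw [this, h4, mul_zero]
      · exact absurd (Finset.sum_eq_zero fun i _ => by
          rw [wsub_coeff_of_not_dvd _ _ _ _ _ hj', mul_zero, mul_zero]) h
    · exact absurd (Finset.sum_eq_zero fun i _ => by
        rw [wsub_coeff_of_not_dvd _ _ _ _ _ hj, zero_mul, mul_zero]) h
  set r0 : ℤ := N * (τ - q0) + ((N + e + 1 : ℕ) : ℤ) * q0 with hr0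
  have huniq : ∀ r j, r ≤ r0 → Θ r j ≠ 0 → r = r0 ∧ j = N * (τ - q0) := by
    intro r j hr h
    obtain ⟨p, q, hj, hrj, hp⟩ := hΘ0 r j h
    have h4 := hτ p q hp
    have h5 := hq p q hp
    have h6 : r = N * (p + q) + (e + 1) * q := by
      have : r = j + (r - j) := by ring
      rw [this, hrj, hj]; push_cast; ring
    have h7 : r0 = N * τ + (e + 1) * q0 := by rw [hr0]; push_cast; ring
    have hNpos : (0 : ℤ) < N := by exact_mod_cast hN
    have hepos : (0 : ℤ) < e + 1 := by positivity
    rcases h4.lt_or_eq with h8 | h8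
    · nlinarith
    · have h9 : q ≤ q0 := by
        rw [h6, h7, h8] at hr
        have : ((e : ℤ) + 1) * q ≤ (e + 1) * q0 := by linarith
        exact le_of_mul_le_mul_left this hepos
      have h10 : q0 ≤ q := hq0 q (by rwa [show (τ : ℤ) - q = p by linarith])
      obtain rfl : q = q0 := le_antisymm h9 h10
      obtain rfl : p = τ - q := by linarith
      refine ⟨?_, hj⟩
      rw [h6, h7]; ring
  have hr0pos : 0 < r0 := by
    have h7 : r0 = N * τ + (e + 1) * q0 := by rw [hr0]; push_cast; ring
    have hτ1 : (1 : ℤ) ≤ τ := by omega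
    have hNpos : (0 : ℤ) < N := by exact_mod_cast hN
    have hepos : (0 : ℤ) < e + 1 := by positivity
    have hl0 : (0 : ℤ) ≤ l := by positivity
    rw [h7]
    nlinarith
  have hGVB : VB G 1 := by
    intro r hr
    rw [hGr]
    refine Finset.sum_eq_zero fun j _ => ?_
    by_contra h
    have := (huniq r j (by omega) h).1
    omega
  have hG0 := hVB hGVB
  have hc := hGr r0
  rw [hG0, HahnSeries.coeff_zero, Finset.sum_eq_single (N * (τ - q0))] at hc
  · apply h3
    have : Θ r0 (N * (τ - q0)) =
        ((b ^ (-(τ - q0)) : ℂˣ) : ℂ) * ((c ^ (-q0) : ℂˣ) : ℂ) * Φ (τ - q0) q0 := by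
      simp only [hΘ, hΦ, Finset.mul_sum]
      refine Finset.sum_congr rfl fun i _ => ?_
      rw [show r0 - N * (τ - q0) = ((N + e + 1 : ℕ) : ℤ) * q0 by rw [hr0]; ring, wsub_coeff_mul,
        wsub_coeff_mul]
      ring
    rw [this] at hc
    exact (mul_eq_zero.1 hc.symm).resolve_left (mul_ne_zero (Units.ne_zero _) (Units.ne_zero _))
  · intro j _ hj
    by_contra h
    exact hj (huniq r0 j le_rfl h).2
  · intro h
    by_contra h4
    apply h
    rw [Finset.mem_Icc]
    have hp : -(l : ℤ) ≤ τ - q0 := by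
      by_contra! hlt
      exact h3 (Finset.sum_eq_zero fun i _ => by rw [hu i _ hlt, zero_mul, mul_zero])
    have hNpos : (0 : ℤ) < N := by exact_mod_cast hN
    have hMpos : (0 : ℤ) < (N + e + 1 : ℕ) := by exact_mod_cast hM
    constructor
    · nlinarith
    · rw [hr0]; nlinarith

theorem wsub_D {β : L} {P : ℂ[X]} {b : ℂˣ} {N : ℕ} (hN : 0 < N) (h : aeval β P = wsub b N hN β) :
    wsub b N hN (D β) = aeval β (C (N : ℂ)⁻¹ * derivative P) * D β := by
  have h1 := D_wsub b N hN β
  rw [← h, Derivation.map_aeval, smul_eq, smul_eq_mul] at h1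
  have hN' : (N : ℂ) ≠ 0 := by exact_mod_cast hN.ne'
  rw [map_mul, aeval_C, mul_assoc, h1, ← mul_assoc, ← map_mul, inv_mul_cancel₀ hN', map_one,
    one_mul]

/-- The index set of the auxiliary relation: exponents of `D β`, of `β`, and of the second `β`. -/
abbrev Idx : Type := Fin 3 × Fin 9 × Fin 9

/-- First factor of the monomials of the auxiliary relation. -/
def mu (β : L) (i : Idx) : L := β ^ (i.2.1 : ℕ) * D β ^ (i.1 : ℕ)

/-- Second factor; the total degree in `D β` is two. -/
def mv (β : L) (i : Idx) : L := β ^ (i.2.2 : ℕ) * D β ^ (2 - i.1 : ℕ)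

theorem VB_monomial {β : L} {lam : ℂ} (hβ : LT β (-1) lam) {j k : ℕ} (h : j + k ≤ 10) :
    VB (β ^ j * D β ^ k) (-(10 : ℕ)) :=
  ((hβ.pow j).mul (hβ.D.pow k)).1.mono (by push_cast; omega)

/-- The auxiliary series is a polynomial in `β` times `(D β) ^ 2`. -/
theorem aux_series {β : L} {P Q : ℂ[X]} {b c : ℂˣ} {N M : ℕ} (hN : 0 < N) (hM : 0 < M)
    (hP : aeval β P = wsub b N hN β) (hQ : aeval β Q = wsub c M hM β) (a : Idx → ℂ) :
    ∃ Ψ : ℂ[X], ∑ i, a i • (wsub b N hN (mu β i) * wsub c M hM (mv β i)) =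
      aeval β Ψ * D β ^ 2 := by
  refine ⟨∑ i : Idx, C (a i) * (P ^ (i.2.1 : ℕ) * (C (N : ℂ)⁻¹ * derivative P) ^ (i.1 : ℕ) *
    (Q ^ (i.2.2 : ℕ) * (C (M : ℂ)⁻¹ * derivative Q) ^ (2 - i.1 : ℕ))), ?_⟩
  rw [map_sum, Finset.sum_mul]
  refine Finset.sum_congr rfl fun i _ => ?_
  have h2 : D β ^ 2 = D β ^ (i.1 : ℕ) * D β ^ (2 - i.1 : ℕ) := by
    rw [← pow_add]; congr 1; omega
  rw [mu, mv, map_mul, map_mul, map_pow, map_pow, map_pow, map_pow, wsub_D hN hP, wsub_D hM hQ,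
    ← hP, ← hQ, h2, smul_eq]
  simp only [map_mul, map_pow, aeval_C]
  ring

/-- Nontrivial coefficients for which the low order part of the relation vanishes: there are
`3 * 9 * 9 = 243` unknowns and `231` equations. -/
theorem exists_coeffs {β : L} {lam : ℂ} (hβ : LT β (-1) lam) : ∃ a : Idx → ℂ, a ≠ 0 ∧
    ∀ p q : ℤ, p + q ≤ 0 → ∑ i, a i * ((mu β i).coeff p * (mv β i).coeff q) = 0 := by
  let T : (Idx → ℂ) →ₗ[ℂ] ((Σ i : Fin 21, Fin (21 - i)) → ℂ) := LinearMap.pi fun x =>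
    ∑ i, ((mu β i).coeff (x.1 - 10) * (mv β i).coeff (x.2 - 10)) • LinearMap.proj i
  have hT : LinearMap.ker T ≠ ⊥ := by
    apply LinearMap.ker_ne_bot_of_finrank_lt
    rw [Module.finrank_fintype_fun_eq_card, Module.finrank_fintype_fun_eq_card, Fintype.card_sigma]
    simp only [Fintype.card_fin, Fintype.card_prod]
    decide
  obtain ⟨a, ha, ha0⟩ := (Submodule.ne_bot_iff _).1 hT
  refine ⟨a, ha0, fun p q hpq => ?_⟩
  by_cases hp : p < -(10 : ℕ)
  · refine Finset.sum_eq_zero fun i _ => ?_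
    rw [mu, VB_monomial hβ (by omega) p hp, zero_mul, mul_zero]
  by_cases hq : q < -(10 : ℕ)
  · refine Finset.sum_eq_zero fun i _ => ?_
    rw [mv, VB_monomial hβ (by omega) q hq, mul_zero, mul_zero]
  obtain ⟨p', rfl⟩ : ∃ p' : ℕ, p = p' - 10 := ⟨(p + 10).toNat, by omega⟩
  obtain ⟨q', rfl⟩ : ∃ q' : ℕ, q = q' - 10 := ⟨(q + 10).toNat, by omega⟩
  have := congrFun (LinearMap.mem_ker.1 ha) ⟨⟨p', by omega⟩, ⟨q', by simp; omega⟩⟩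
  simp only [T, LinearMap.pi_apply, LinearMap.sum_apply, LinearMap.smul_apply, LinearMap.proj_apply,
    smul_eq_mul, Pi.zero_apply] at this
  rw [← this]
  exact Finset.sum_congr rfl fun i _ => mul_comm _ _

/-- If `β` has multiplicatively close monomial maps, then `β` and `D β` satisfy a polynomial
relation of degree at most two in `D β`. -/
theorem exists_relation {β : L} {lam : ℂ} (hβ : LT β (-1) lam) (hlam : lam ≠ 0)
    (h : ∀ R : ℕ, ∃ (P Q : ℂ[X]) (c d : ℂˣ) (N M : ℕ) (hN : 0 < N) (hM : 0 < M), N < M ∧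
      (M - N) * R < N ∧ aeval β P = wsub c N hN β ∧ aeval β Q = wsub d M hM β) :
    ∃ c : Fin 3 → ℂ[X], c ≠ 0 ∧ ∑ s, aeval β (c s) * D β ^ (s : ℕ) = 0 := by
  have hδ : LT (D β) (-1) lam := by simpa using hβ.D
  have hδ0 := hδ.ne_zero hlam
  obtain ⟨a, ha, ha0⟩ := exists_coeffs hβ
  have hΦ := Phi_eq_zero a (mu β) (mv β) 10 (fun i => VB_monomial hβ (by omega))
    (fun i => VB_monomial hβ (by omega)) ha0 (fun R => by
      obtain ⟨P, Q, c, d, N, M, hN, hM, hNM, hR, hP, hQ⟩ := h R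
      refine ⟨c, d, N, M, hN, hM, hNM, hR, fun hVB => ?_⟩
      obtain ⟨Ψ, hΨ⟩ := aux_series hN hM hP hQ a
      rw [hΨ] at hVB ⊢
      have h1 := (hβ.aeval (by norm_num) Ψ).mul (hδ.pow 2)
      have h2 := hVB _ (show (Ψ.natDegree : ℤ) * -1 + (2 : ℕ) * -1 < 1 by push_cast; linarith)
      rw [h1.2] at h2
      have h3 : Ψ = 0 := by
        simpa [hlam] using h2
      rw [h3, map_zero, zero_mul])
  by_contra! hcon
  apply ha
  -- the polynomial coefficients of `(D β) ^ s` obtained from the coefficient of index `q`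
  let cq : ℤ → Fin 3 → ℂ[X] := fun q s => ∑ α : Fin 9,
    C (∑ γ : Fin 9, a (s, α, γ) * (mv β (s, α, γ)).coeff q) * X ^ (α : ℕ)
  have hcq : ∀ q, cq q = 0 := by
    intro q
    by_contra hne
    refine hcon _ hne ?_
    ext p
    rw [HahnSeries.coeff_zero, ← hΦ p q, Fintype.sum_prod_type, HahnSeries.coeff_sum]
    refine Finset.sum_congr rfl fun s _ => ?_
    rw [Fintype.sum_prod_type, map_sum, Finset.sum_mul, HahnSeries.coeff_sum]
    refine Finset.sum_congr rfl fun α _ => ?_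
    rw [map_mul, aeval_C, map_pow, aeval_X, mul_assoc, ← smul_eq, HahnSeries.coeff_smul, smul_eq_mul,
      Finset.sum_mul]
    refine Finset.sum_congr rfl fun γ _ => ?_
    simp only [mu]
    ring
  have hz : ∀ (s : Fin 3) (α : Fin 9), ∑ γ : Fin 9, a (s, α, γ) • mv β (s, α, γ) = 0 := by
    intro s α
    ext q
    have h1 := congrArg (fun P => P.coeff α) (congrFun (hcq q) s)
    simp only [cq, finsetSum_coeff, coeff_C_mul, coeff_X_pow, Pi.zero_apply, coeff_zero,
      Fin.val_inj] at h1
    rw [HahnSeries.coeff_sum, HahnSeries.coeff_zero]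
    simpa using h1
  ext ⟨s, α, γ⟩
  have h2 : aeval β (∑ γ : Fin 9, C (a (s, α, γ)) * X ^ (γ : ℕ)) * D β ^ (2 - s : ℕ) = 0 := by
    rw [← hz s α, map_sum, Finset.sum_mul]
    refine Finset.sum_congr rfl fun γ _ => ?_
    rw [smul_eq, mv, map_mul, aeval_C, map_pow, aeval_X, mul_assoc]
  have h3 := eq_zero_of_aeval_eq_zero hβ hlam ((mul_eq_zero.1 h2).resolve_right (pow_ne_zero _ hδ0))
  have h4 := congrArg (fun P => P.coeff γ) h3
  simpa only [finsetSum_coeff, coeff_C_mul, coeff_X_pow, Fin.val_inj, coeff_zero, mul_ite, mul_one,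
    mul_zero, Pi.zero_apply, Finset.sum_ite_eq, Finset.mem_univ, if_true] using h4

/-! ### The functional equation -/

/-- Transport by the Böttcher map of a relation of degree one. -/
theorem equation_of_linear {A : ℂ[X]} {β : L} {lam : ℂ} {n : ℕ} (hn : 0 < n) (hβ : LT β (-1) lam)
    (hlam : lam ≠ 0) (hA : aeval β A = wsub 1 n hn β) {u v : ℂ[X]} (hv : v ≠ 0)
    (h : aeval β v * D β = aeval β u) : ∃ u v : ℂ[X], u ≠ 0 ∧ v ≠ 0 ∧
      C ((n : ℂ) ^ 2) * u.comp A * v = derivative A ^ 2 * u * v.comp A := by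
  have hδ : LT (D β) (-1) lam := by simpa using hβ.D
  have hδ0 := hδ.ne_zero hlam
  have hu : u ≠ 0 := by
    rintro rfl
    rw [map_zero] at h
    exact hv (eq_zero_of_aeval_eq_zero hβ hlam ((mul_eq_zero.1 h).resolve_right hδ0))
  have hn' : (n : ℂ) ≠ 0 := by exact_mod_cast hn.ne'
  have h1 := congrArg (wsub 1 n hn) h
  rw [map_mul, ← aeval_wsub, ← aeval_wsub, ← hA, wsub_D hn hA, ← aeval_comp, ← aeval_comp,
    ← mul_assoc] at h1
  have h2 : v.comp A * (C (n : ℂ)⁻¹ * derivative A) * u - u.comp A * v = 0 := by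
    refine eq_zero_of_aeval_eq_zero hβ hlam ?_
    rw [map_sub, map_mul, map_mul, ← h, map_mul (aeval β) (u.comp A), ← h1, map_mul]
    ring
  have h3 : C (n : ℂ) * u.comp A * v = derivative A * u * v.comp A := by
    have h4 : C (n : ℂ) * C (n : ℂ)⁻¹ = 1 := by rw [← C_mul, mul_inv_cancel₀ hn', C_1]
    linear_combination (-C (n : ℂ)) * h2 + v.comp A * derivative A * u * h4
  refine ⟨u ^ 2, v ^ 2, pow_ne_zero _ hu, pow_ne_zero _ hv, ?_⟩
  rw [pow_comp, pow_comp, C_pow]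
  linear_combination (C (n : ℂ) * u.comp A * v + derivative A * u * v.comp A) * h3

theorem equation_of_relation {A : ℂ[X]} {β : L} {lam : ℂ} {n : ℕ} (hn : 0 < n)
    (hβ : LT β (-1) lam)
    (hlam : lam ≠ 0) (hA : aeval β A = wsub 1 n hn β) {c : Fin 3 → ℂ[X]} (hc : c ≠ 0)
    (h : ∑ s, aeval β (c s) * D β ^ (s : ℕ) = 0) : ∃ u v : ℂ[X], u ≠ 0 ∧ v ≠ 0 ∧
      C ((n : ℂ) ^ 2) * u.comp A * v = derivative A ^ 2 * u * v.comp A := by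
  have hδ : LT (D β) (-1) lam := by simpa using hβ.D
  have hδ0 := hδ.ne_zero hlam
  have hn' : (n : ℂ) ≠ 0 := by exact_mod_cast hn.ne'
  obtain ⟨c0, hc0⟩ : ∃ x, c 0 = x := ⟨_, rfl⟩
  obtain ⟨c1, hc1⟩ : ∃ x, c 1 = x := ⟨_, rfl⟩
  obtain ⟨c2, hc2⟩ : ∃ x, c 2 = x := ⟨_, rfl⟩
  rw [Fin.sum_univ_three, hc0, hc1, hc2] at h
  simp only [Fin.val_zero, Fin.val_one, Fin.val_two, pow_zero, pow_one, mul_one] at h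
  by_cases h2 : c2 = 0
  · by_cases h1 : c1 = 0
    · rw [h2, h1, map_zero, zero_mul, zero_mul, add_zero, add_zero] at h
      have := eq_zero_of_aeval_eq_zero hβ hlam h
      refine absurd ?_ hc
      ext1 s
      fin_cases s
      · exact hc0.trans this
      · exact hc1.trans h1
      · exact hc2.trans h2
    · refine equation_of_linear hn hβ hlam hA (u := -c0) h1 ?_
      rw [h2, map_zero, zero_mul, add_zero] at h
      rw [map_neg]
      linear_combination h
  · set d := C (n : ℂ)⁻¹ * derivative A with hd
    have h' := congrArg (wsub 1 n hn) h
    rw [map_add, map_add, map_mul, map_mul, map_pow, ← aeval_wsub, ← aeval_wsub, ← aeval_wsub, ← hA,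
      wsub_D hn hA, ← aeval_comp, ← aeval_comp, ← aeval_comp, map_zero, ← hd] at h'
    by_cases hw : c2 * c1.comp A * d - c1 * c2.comp A * d ^ 2 = 0
    · by_cases h0 : c0 = 0
      · refine equation_of_linear hn hβ hlam hA (u := -c1) h2 ?_
        rw [h0, map_zero, zero_add, sq, ← mul_assoc, ← add_mul] at h
        rw [map_neg]
        linear_combination (mul_eq_zero.1 h).resolve_right hδ0
      · refine ⟨c0, c2, h0, h2, ?_⟩
        have hw' := congrArg (aeval β) hw
        have h3 : c2 * c0.comp A - c0 * c2.comp A * d ^ 2 = 0 := by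
          refine eq_zero_of_aeval_eq_zero hβ hlam ?_
          simp only [map_sub, map_mul, map_pow, map_zero] at hw' ⊢
          linear_combination aeval β c2 * h' - aeval β (c2.comp A) * aeval β d ^ 2 * h - D β * hw'
        have h4 : C (n : ℂ) * C (n : ℂ)⁻¹ = 1 := by rw [← C_mul, mul_inv_cancel₀ hn', C_1]
        have h5 : C (n : ℂ) * d = derivative A := by rw [hd, ← mul_assoc, h4, one_mul]
        rw [C_pow, ← h5]
        linear_combination C (n : ℂ) ^ 2 * h3
    · refine equation_of_linear hn hβ hlam hA
        (u := c0 * c2.comp A * d ^ 2 - c2 * c0.comp A) hw ?_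
      simp only [map_sub, map_mul, map_pow]
      linear_combination aeval β c2 * h' - aeval β (c2.comp A) * aeval β d ^ 2 * h

/-- The functional equation `n² H(A) = A'² H` with a quadratic polynomial `H`. -/
theorem exists_quadratic {A : ℂ[X]} (hA : 2 ≤ A.natDegree) {u v : ℂ[X]} (hu : u ≠ 0) (hv : v ≠ 0)
    (h : C ((A.natDegree : ℂ) ^ 2) * u.comp A * v = derivative A ^ 2 * u * v.comp A) :
    ∃ H : ℂ[X], H.natDegree = 2 ∧ C ((A.natDegree : ℂ) ^ 2) * H.comp A = derivative A ^ 2 * H := by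
  have hn' : (A.natDegree : ℂ) ≠ 0 := by
    have : A.natDegree ≠ 0 := by omega
    exact_mod_cast this
  have hcomp : ∀ p : ℂ[X], p ≠ 0 → p.comp A ≠ 0 := by
    intro p hp h0
    rcases comp_eq_zero_iff.1 h0 with h1 | ⟨_, h1⟩
    · exact hp h1
    · rw [h1, natDegree_C] at hA; omega
  have hcop := isCoprime_div_gcd_div_gcd (p := u) hv
  set g := gcd u v with hg
  have hg0 : g ≠ 0 := gcd_ne_zero_of_right hv
  have hu' : g * (u / g) = u := EuclideanDomain.mul_div_cancel' hg0 (gcd_dvd_left _ _)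
  have hv' : g * (v / g) = v := EuclideanDomain.mul_div_cancel' hg0 (gcd_dvd_right _ _)
  generalize u / g = U at *
  generalize v / g = V at *
  have hU0 : U ≠ 0 := by rintro rfl; exact hu (by rw [← hu', mul_zero])
  have hV0 : V ≠ 0 := by rintro rfl; exact hv (by rw [← hv', mul_zero])
  have hUV : C ((A.natDegree : ℂ) ^ 2) * U.comp A * V = derivative A ^ 2 * U * V.comp A := by
    rw [← hu', ← hv', mul_comp, mul_comp] at h
    refine mul_left_cancel₀ (mul_ne_zero hg0 (hcomp g hg0)) ?_
    linear_combination h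
  have hcopA : IsCoprime (V.comp A) (U.comp A) := (hcop.map (compRingHom A)).symm
  have hdvd : V.comp A ∣ V := by
    have h1 : V.comp A ∣ U.comp A * (C ((A.natDegree : ℂ) ^ 2) * V) :=
      ⟨derivative A ^ 2 * U, by linear_combination hUV⟩
    have h2 := hcopA.dvd_of_dvd_mul_left h1
    exact (IsUnit.dvd_mul_left (isUnit_C.2 (pow_ne_zero 2 hn').isUnit)).1 h2
  have hdegV : V.natDegree = 0 := by
    have := natDegree_le_of_dvd hdvd hV0
    rw [natDegree_comp] at this
    nlinarith
  obtain ⟨κ, rfl⟩ := natDegree_eq_zero.1 hdegV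
  have hκ : C κ ≠ 0 := hV0
  have hE : C ((A.natDegree : ℂ) ^ 2) * U.comp A = derivative A ^ 2 * U := by
    rw [C_comp] at hUV
    exact mul_right_cancel₀ hκ hUV
  refine ⟨U, ?_, hE⟩
  have h1 := congrArg natDegree hE
  have hdA : derivative A ≠ 0 := by
    intro h0
    have := derivative_eq_zero.1 h0
    omega
  rw [natDegree_C_mul (pow_ne_zero 2 hn'), natDegree_comp, natDegree_mul (pow_ne_zero _ hdA) hU0,
    natDegree_pow, natDegree_derivative] at h1
  obtain ⟨k, hk⟩ := Nat.exists_eq_add_of_le hA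
  rw [hk] at h1
  have h2 : (1 + k) * U.natDegree = (1 + k) * 2 := by
    have : 2 + k - 1 = 1 + k := by omega
    rw [this] at h1
    linarith
  exact Nat.eq_of_mul_eq_mul_left (by omega) h2

/-! ### Solutions of the functional equation -/

theorem LinConj.trans_affine {A y P μ : ℂ[X]} (hμ : μ.degree = 1) (h : A.comp μ = μ.comp y)
    (hy : LinConj y P) : LinConj A P := by
  obtain ⟨ν, hν, h'⟩ := hy
  refine ⟨μ.comp ν, ?_, ?_⟩
  · have h1 : ∀ p : ℂ[X], p.degree = 1 ↔ p.natDegree = 1 := fun p => by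
      exact_mod_cast degree_eq_iff_natDegree_eq_of_pos (p := p) one_pos
    rw [h1] at hμ hν ⊢
    rw [natDegree_comp, hμ, hν]
  · rw [← comp_assoc, h, comp_assoc, h', comp_assoc]

theorem coeff_X_mul_derivative (p : ℂ[X]) (k : ℕ) :
    (X * derivative p).coeff k = k * p.coeff k := by
  cases k with
  | zero => simp
  | succ k => rw [coeff_X_mul, coeff_derivative]; push_cast; ring

theorem coeff_X_sq_mul_derivative (p : ℂ[X]) (k : ℕ) :
    (X ^ 2 * derivative (derivative p)).coeff k = k * (k - 1) * p.coeff k := by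
  have : X ^ 2 * derivative (derivative p) =
      X * derivative (X * derivative p) - X * derivative p := by
    rw [derivative_mul, derivative_X]; ring
  rw [this, coeff_sub, coeff_X_mul_derivative, coeff_X_mul_derivative]
  ring

theorem linConj_C_mul_X_pow {n : ℕ} (hn : 2 ≤ n) {c : ℂ} (hc : c ≠ 0) :
    LinConj (C c * X ^ n) (X ^ n) := by
  obtain ⟨lam, hlam⟩ := IsAlgClosed.exists_pow_nat_eq c⁻¹ (show 0 < n - 1 by omega)
  have hl0 : lam ≠ 0 := by
    rintro rfl
    rw [zero_pow (by omega)] at hlam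
    exact hc (inv_eq_zero.1 hlam.symm)
  refine ⟨C lam * X, by simp [degree_C_mul_X hl0], ?_⟩
  have h1 : c * lam ^ n = lam := by
    rw [← Nat.sub_add_cancel (show 1 ≤ n by omega), pow_succ, hlam, mul_inv_cancel_left₀ hc]
  simp only [mul_comp, C_comp, pow_comp, X_comp]
  rw [mul_pow, ← C_pow, ← mul_assoc, ← C_mul, h1]

/-- The solutions of the equation for `H = z²` are the multiples of `z ^ n`. -/
theorem linConj_of_double_root {n : ℕ} (hn : 2 ≤ n) {y : ℂ[X]} (hy : y.natDegree = n)
    (h : C ((n : ℂ) ^ 2) * y ^ 2 = derivative y ^ 2 * X ^ 2) : LinConj y (X ^ n) := by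
  have hy0 : y.leadingCoeff ≠ 0 := by
    rw [leadingCoeff_ne_zero]; rintro rfl; simp at hy; omega
  have hfac : (C (n : ℂ) * y - X * derivative y) * (C (n : ℂ) * y + X * derivative y) = 0 := by
    rw [C_pow] at h; linear_combination h
  rcases mul_eq_zero.1 hfac with h1 | h1
  · have hyc : y = C y.leadingCoeff * X ^ n := by
      ext k
      have h2 := congrArg (fun p => p.coeff k) h1
      simp only [coeff_sub, coeff_C_mul, coeff_X_mul_derivative, coeff_zero] at h2
      rw [coeff_C_mul, coeff_X_pow]
      split_ifs with hk
      · rw [hk, leadingCoeff, hy, mul_one]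
      · have h3 : ((n : ℂ) - k) ≠ 0 := sub_ne_zero.2 (by exact_mod_cast Ne.symm hk)
        rw [mul_zero]
        exact (mul_eq_zero.1 (by linear_combination h2 : ((n : ℂ) - k) * y.coeff k = 0)).resolve_left h3
    rw [hyc]
    exact linConj_C_mul_X_pow hn hy0
  · have h2 := congrArg (fun p => p.coeff n) h1
    simp only [coeff_add, coeff_C_mul, coeff_X_mul_derivative, coeff_zero] at h2
    rw [leadingCoeff, hy] at hy0
    have h3 : (n : ℂ) ≠ 0 := by
      have : n ≠ 0 := by omega
      exact_mod_cast this
    rw [← two_mul] at h2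
    exact absurd h2 (mul_ne_zero two_ne_zero (mul_ne_zero h3 hy0))

/-- The solutions of the equation for `H = z² - 1` are `± T_n`: they satisfy the linear differential
equation of `T_n`, whose polynomial solutions of degree at most `n` form a line. -/
theorem linConj_of_simple_roots {n : ℕ} (hn : 2 ≤ n) {y : ℂ[X]} (hy : y.natDegree = n)
    (h : C ((n : ℂ) ^ 2) * (y ^ 2 - 1) = derivative y ^ 2 * (X ^ 2 - 1)) :
    LinConj y (Chebyshev.T ℂ n) ∨ LinConj y (-Chebyshev.T ℂ n) := by
  have hn' : (n : ℂ) ≠ 0 := by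
    have : n ≠ 0 := by omega
    exact_mod_cast this
  have hdy : derivative y ≠ 0 := fun h0 => by have := derivative_eq_zero.1 h0; omega
  have hode : C ((n : ℂ) ^ 2) * y =
      X ^ 2 * derivative (derivative y) - derivative (derivative y) + X * derivative y := by
    have h0 : C ((n : ℂ) ^ 2) * (y * y - 1) = derivative y * derivative y * (X * X - 1) := by
      linear_combination h
    have h1 := congrArg derivative h0
    simp only [derivative_mul, derivative_C, derivative_sub, derivative_one, derivative_X] at h1
    refine mul_left_cancel₀ (mul_ne_zero two_ne_zero hdy) ?_
    linear_combination h1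
  set T := Chebyshev.T ℂ n with hT
  have hodeT : C ((n : ℂ) ^ 2) * T =
      X ^ 2 * derivative (derivative T) - derivative (derivative T) + X * derivative T := by
    have h1 := Chebyshev.one_sub_X_sq_mul_derivative_derivative_T_eq_poly_in_T (R := ℂ) (n : ℤ)
    rw [← hT] at h1
    simp only [Function.iterate_succ, Function.iterate_zero, Function.comp_apply, id] at h1
    rw [C_pow, C_eq_natCast]
    push_cast at h1
    linear_combination h1
  have hTdeg : T.natDegree = n := by rw [hT, Chebyshev.natDegree_T, Int.natAbs_natCast]
  have hT0 : T.coeff n ≠ 0 := by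
    have : T ≠ 0 := by intro h0; rw [h0] at hTdeg; simp at hTdeg; omega
    rw [← leadingCoeff_ne_zero, leadingCoeff, hTdeg] at this
    exact this
  obtain ⟨c, hc⟩ : ∃ c, y.coeff n = c * T.coeff n := ⟨y.coeff n / T.coeff n, by field_simp⟩
  have hz : y - C c * T = 0 := by
    by_contra hz0
    set z := y - C c * T with hz
    have hodez : C ((n : ℂ) ^ 2) * z =
        X ^ 2 * derivative (derivative z) - derivative (derivative z) + X * derivative z := by
      simp only [hz, derivative_sub, derivative_C_mul]
      linear_combination hode - C c * hodeT
    have hzle : z.natDegree ≤ n :=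
      (natDegree_sub_le _ _).trans (max_le hy.le ((natDegree_C_mul_le _ _).trans hTdeg.le))
    have hzn : z.coeff n = 0 := by rw [hz, coeff_sub, coeff_C_mul, hc, sub_self]
    have hlc : z.coeff z.natDegree ≠ 0 := leadingCoeff_ne_zero.2 hz0
    have hlt : z.natDegree ≠ n := fun h0 => hlc (by rw [h0, hzn])
    have h2 := congrArg (fun p => p.coeff z.natDegree) hodez
    simp only [coeff_add, coeff_sub, coeff_C_mul, coeff_X_sq_mul_derivative,
      coeff_X_mul_derivative] at h2
    rw [coeff_derivative, coeff_derivative, coeff_eq_zero_of_natDegree_lt (by omega :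
      z.natDegree < z.natDegree + 1 + 1)] at h2
    have h3 : ((n : ℂ) ^ 2 - (z.natDegree : ℂ) ^ 2) * z.coeff z.natDegree = 0 := by
      linear_combination h2
    have h4 := sub_eq_zero.1 ((mul_eq_zero.1 h3).resolve_right hlc)
    have h5 : n ^ 2 = z.natDegree ^ 2 := by exact_mod_cast h4
    exact hlt (Nat.pow_left_injective two_ne_zero h5).symm
  have hyc : y = C c * T := sub_eq_zero.1 hz
  have hc2 : c ^ 2 = 1 := by
    have h1 := congrArg (eval 1) h
    rw [hyc, eval_mul, eval_mul, eval_sub, eval_sub, eval_pow, eval_pow, eval_mul, eval_C, eval_C, hT,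
      Chebyshev.T_eval_one, eval_pow, eval_X] at h1
    simp only [mul_one, eval_one, one_pow, sub_self, mul_zero] at h1
    exact sub_eq_zero.1 ((mul_eq_zero.1 h1).resolve_left (pow_ne_zero 2 hn'))
  rcases sq_eq_one_iff.1 hc2 with h1 | h1
  · left
    refine ⟨X, degree_X, ?_⟩
    rw [comp_X, X_comp, hyc, h1, C_1, one_mul]
  · right
    refine ⟨X, degree_X, ?_⟩
    rw [comp_X, X_comp, hyc, h1, C_neg, C_1, neg_one_mul]

theorem special_of_quadratic {A H : ℂ[X]} (hA : 2 ≤ A.natDegree) (hH : H.natDegree = 2)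
    (h : C ((A.natDegree : ℂ) ^ 2) * H.comp A = derivative A ^ 2 * H) : SpecialPoly A := by
  obtain ⟨κ, r, s, hκ, rfl⟩ : ∃ κ r s : ℂ, κ ≠ 0 ∧ H = C κ * ((X - C r) * (X - C s)) := by
    obtain ⟨r, hr⟩ := IsAlgClosed.exists_root H (by
      rw [degree_eq_natDegree (by rintro rfl; simp at hH), hH]; norm_num)
    obtain ⟨G, rfl⟩ := dvd_iff_isRoot.2 hr
    have hG0 : G ≠ 0 := by rintro rfl; simp at hH
    rw [natDegree_mul (X_sub_C_ne_zero r) hG0, natDegree_X_sub_C] at hH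
    obtain ⟨s, hs⟩ := IsAlgClosed.exists_root G (by
      rw [degree_eq_natDegree hG0, show G.natDegree = 1 by omega]; norm_num)
    obtain ⟨F, rfl⟩ := dvd_iff_isRoot.2 hs
    have hF0 : F ≠ 0 := right_ne_zero_of_mul hG0
    rw [natDegree_mul (X_sub_C_ne_zero s) hF0, natDegree_X_sub_C] at hH
    obtain ⟨κ, rfl⟩ := natDegree_eq_zero.1 (show F.natDegree = 0 by omega)
    exact ⟨κ, r, s, C_ne_zero.1 hF0, by ring⟩
  have h' : C ((A.natDegree : ℂ) ^ 2) * ((A - C r) * (A - C s)) =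
      derivative A ^ 2 * ((X - C r) * (X - C s)) := by
    simp only [mul_comp, C_comp, sub_comp, X_comp] at h
    refine mul_left_cancel₀ (C_ne_zero.2 hκ) ?_
    linear_combination h
  -- conjugation by an affine map `μ = d z + e`
  have conj : ∀ d e : ℂ, d ≠ 0 → ∃ y : ℂ[X], y.natDegree = A.natDegree ∧
      (C d * X + C e : ℂ[X]).degree = 1 ∧ A.comp (C d * X + C e) = (C d * X + C e : ℂ[X]).comp y ∧
      C ((A.natDegree : ℂ) ^ 2) * ((C d * y + C e - C r) * (C d * y + C e - C s)) =
        derivative y ^ 2 * ((C d * X + C e - C r) * (C d * X + C e - C s)) := by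
    intro d e hd
    have hdC : C d * C d⁻¹ = 1 := by rw [← C_mul, mul_inv_cancel₀ hd, C_1]
    have hμ : (C d * X + C e : ℂ[X]).natDegree = 1 := natDegree_linear hd
    have hcomp : A.comp (C d * X + C e) = C d * (C d⁻¹ * (A.comp (C d * X + C e) - C e)) + C e := by
      rw [← mul_assoc, hdC]; ring
    refine ⟨C d⁻¹ * (A.comp (C d * X + C e) - C e), ?_, degree_linear hd, ?_, ?_⟩
    · rw [natDegree_C_mul (inv_ne_zero hd), natDegree_sub_C, natDegree_comp, hμ, mul_one]
    · simpa using hcomp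
    · rw [← hcomp]
      have h1 := congrArg (fun p => p.comp (C d * X + C e)) h'
      simp only [mul_comp, C_comp, sub_comp, pow_comp, X_comp] at h1
      have h2 : derivative (C d⁻¹ * (A.comp (C d * X + C e) - C e)) =
          (derivative A).comp (C d * X + C e) := by
        rw [derivative_C_mul, derivative_sub, derivative_C, derivative_comp]
        simp only [derivative_add, derivative_C_mul, derivative_X, derivative_C]
        linear_combination (derivative A).comp (C d * X + C e) * hdC
      rw [h2, h1]
  by_cases hrs : r = s
  · subst hrs
    left
    obtain ⟨y, hy, hμ, hc, hE⟩ := conj 1 r one_ne_zero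
    refine LinConj.trans_affine hμ hc (linConj_of_double_root hA hy ?_)
    rw [C_1] at hE
    linear_combination hE
  · right
    have hd : (s - r) / 2 ≠ 0 := div_ne_zero (sub_ne_zero.2 (Ne.symm hrs)) two_ne_zero
    obtain ⟨y, hy, hμ, hc, hE⟩ := conj ((s - r) / 2) ((s + r) / 2) hd
    have h1 : C ((s + r) / 2) - C r = C ((s - r) / 2) := by rw [← C_sub]; congr 1; ring
    have h2 : C ((s + r) / 2) - C s = -C ((s - r) / 2) := by rw [← C_sub, ← C_neg]; congr 1; ring
    rw [add_sub_assoc, add_sub_assoc, add_sub_assoc, add_sub_assoc, h1, h2] at hE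
    have hE' : C ((A.natDegree : ℂ) ^ 2) * (y ^ 2 - 1) = derivative y ^ 2 * (X ^ 2 - 1) := by
      refine mul_left_cancel₀ (pow_ne_zero 2 (C_ne_zero.2 hd)) ?_
      linear_combination hE
    exact (linConj_of_simple_roots hA hy hE').imp (LinConj.trans_affine hμ hc)
      (LinConj.trans_affine hμ hc)

end

end CommPoly

theorem commuting_polynomial_left_factor
    (A B : Polynomial ℂ) (hA : 2 ≤ A.natDegree) (hAsp : ¬ SpecialPoly A)
    (hcomm : A.comp B = B.comp A) (hdeg : A.natDegree ≤ B.natDegree) :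
    ∃ S : Polynomial ℂ, B = A.comp S := by
  have hn : 0 < A.natDegree := by omega
  have hm : 0 < B.natDegree := by omega
  obtain ⟨β, lam, hl, hβ, hAβ⟩ := CommPoly.exists_bottcher A hA hn
  have hlam : lam ≠ 0 := by
    rintro rfl
    rw [zero_pow (by omega), mul_zero] at hl
    exact zero_ne_one hl
  obtain ⟨b, hb, hBβ⟩ := CommPoly.exists_wsub_of_commute hA hn hm hcomm hl hβ hAβ
  by_cases hdep : ∀ k l : ℕ, k ≠ 0 → l ≠ 0 → A.natDegree ^ k ≠ B.natDegree ^ l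
  · exfalso
    obtain ⟨c, hc, hrel⟩ := CommPoly.exists_relation hβ hlam
      (CommPoly.exists_close_iterates hA (hA.trans hdeg) hAβ hBβ hdep)
    obtain ⟨u, v, hu, hv, huv⟩ := CommPoly.equation_of_relation hn hβ hlam hAβ hc hrel
    obtain ⟨H, hH, hE⟩ := CommPoly.exists_quadratic hA hu hv huv
    exact hAsp (CommPoly.special_of_quadratic hA hH hE)
  · push Not at hdep
    obtain ⟨k, l, -, hl0, hkl⟩ := hdep
    exact CommPoly.left_factor_of_dvd hn hm hβ hlam hAβ hb hBβ
      (CommPoly.dvd_of_pow_eq_pow hA hdeg hl0 hkl)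
end
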